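/- arXiv:1905.07294 — 2 statements merged into one kernel-verified Lean document; each statement's English description precedes it below -/
import Mathlib

section
/- Let d ∈ {1,2,3}, let û₀ : ℝ^d → ℂ be smooth with compact support, and let ρ > 0. Let Q̂₀^ρ be the regularized reconstruction operator (with trivial profile evolution b = 0) given by Q̂₀^ρ = F_d ∘ S ∘ F₁⁻¹ ∘ J₀ ∘ R_ρ. Assume the regularized profile evolution V^ρ := (F₁⁻¹ ∘ J₀ ∘ R_ρ) û₀ satisfies: (i) there exist C, α > 0 with |V^ρ(z,q,τ)| ≤ C(1+|z|)^{-d-α} for all z ∈ ℝ, q ∈ S^{d-1}, τ > 0, and (ii) for every τ > 0 the map (ξ,q) ↦ F₁V^ρ(ξ,q,τ) is of class C^{d-1}(ℝ × S^{d-1}; ℂ). Then for every τ > 0 and every k ∈ ℝ^d with |k| > ρ one has (Q̂₀^ρ û₀)(k, τ/ε²) − e^{-ic|k|τ/ε²} û₀(k) → 0 as ε → 0. -/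
open MeasureTheory Real Filter Metric
open scoped RealInnerProductSpace Topology ENNReal

noncomputable section

/-- The `d`-dimensional Fourier transform `(F_d u)(k) = ∫ u(x) e^{-ik·x} dx`. -/
def fourierD (d : ℕ) (u : EuclideanSpace ℝ (Fin d) → ℂ)
    (k : EuclideanSpace ℝ (Fin d)) : ℂ :=
  ∫ x : EuclideanSpace ℝ (Fin d), u x * Complex.exp (-Complex.I * ((⟪k, x⟫ : ℝ) : ℂ))

/-- The one-dimensional Fourier transform `(F₁ f)(ξ) = ∫ f(z) e^{-iξz} dz`. -/
def fourier1 (f : ℝ → ℂ) (ξ : ℝ) : ℂ :=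
  ∫ z : ℝ, f z * Complex.exp (-Complex.I * (ξ : ℂ) * (z : ℂ))

/-- The inverse one-dimensional Fourier transform `(F₁⁻¹ g)(z) = (2π)⁻¹ ∫ e^{izξ} g(ξ) dξ`. -/
def invFourier1 (g : ℝ → ℂ) (z : ℝ) : ℂ :=
  ((2 * π : ℝ) : ℂ)⁻¹ * ∫ ξ : ℝ, Complex.exp (Complex.I * (z : ℂ) * (ξ : ℂ)) * g ξ

/-- The regularized restriction operator
`(R_ρ û₀)(ξ,q) = (2πi)^{-(d-1)/2} W_ρ(ξ) û₀(|ξ|q)`. -/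
def restrictionReg (d : ℕ) (Wρ : ℝ → ℝ) (u0 : EuclideanSpace ℝ (Fin d) → ℂ)
    (ξ : ℝ) (q : EuclideanSpace ℝ (Fin d)) : ℂ :=
  (2 * (π : ℂ) * Complex.I) ^ (-(((d : ℂ) - 1) / 2)) * (Wρ ξ : ℂ) * u0 (|ξ| • q)

/-- The regularized profile evolution `V^ρ = (F₁⁻¹ ∘ J_b ∘ R_ρ) û₀`, where
`(J_b V̂₀)(ξ,q,τ) = e^{-ib(ξ)τ} V̂₀(ξ,q)`. -/
def profileReg (d : ℕ) (b : ℝ → ℝ) (Wρ : ℝ → ℝ) (u0 : EuclideanSpace ℝ (Fin d) → ℂ)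
    (z : ℝ) (q : EuclideanSpace ℝ (Fin d)) (τ : ℝ) : ℂ :=
  invFourier1 (fun ξ =>
    Complex.exp (-Complex.I * (b ξ : ℂ) * (τ : ℂ)) * restrictionReg d Wρ u0 ξ q) z

/-- The regularized reconstruction operator in Fourier space,
`Q̂_b^ρ = F_d ∘ S ∘ F₁⁻¹ ∘ J_b ∘ R_ρ`, where
`(S V)(x,t) = (ct)^{-(d-1)/2} 1_{|x|<2ct} V(|x|-ct, x/|x|, ε²t)`. -/
def QhatReg (d : ℕ) (c : ℝ) (b : ℝ → ℝ) (Wρ : ℝ → ℝ)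
    (u0 : EuclideanSpace ℝ (Fin d) → ℂ) (ε : ℝ)
    (k : EuclideanSpace ℝ (Fin d)) (t : ℝ) : ℂ :=
  fourierD d (fun x =>
    ((((c * t) ^ (-(((d : ℝ) - 1) / 2)) *
        Set.indicator {y : EuclideanSpace ℝ (Fin d) | ‖y‖ < 2 * c * t}
          (fun _ => (1 : ℝ)) x : ℝ)) : ℂ) *
      profileReg d b Wρ u0 (‖x‖ - c * t) (‖x‖⁻¹ • x) (ε ^ 2 * t)) k

/-! Part 1: Fourier inversion -/

open scoped FourierTransform in
lemma fourier1_invFourier1 (g : ℝ → ℂ) (hg : Continuous g) (hgi : Integrable g)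
    (hV : Integrable (invFourier1 g)) (ξ : ℝ) : fourier1 (invFourier1 g) ξ = g ξ := by
  have hpi : (2 * π : ℝ) ≠ 0 := by positivity
  have hinv : ∀ y : ℝ, 𝓕⁻ g y = ((2 * π : ℝ) : ℂ) * invFourier1 g (2 * π * y) := by
    intro y
    rw [Real.fourierInv_eq', invFourier1, ← mul_assoc, mul_inv_cancel₀ (by exact_mod_cast hpi),
      one_mul]
    congr 1; ext v
    simp only [smul_eq_mul, RCLike.inner_apply, conj_trivial]
    congr 2; push_cast; ring
  have hF : Integrable (𝓕⁻ g) := by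
    have : 𝓕⁻ g = fun y : ℝ => ((2 * π : ℝ) : ℂ) * invFourier1 g (2 * π * y) := funext hinv
    rw [this]
    exact (hV.comp_mul_left' hpi).const_mul _
  have hF2 : Integrable (𝓕 g) := by
    have : 𝓕 g = fun y => 𝓕⁻ g (-y) := by
      ext y; rw [Real.fourierInv_eq_fourier_neg, neg_neg]
    rw [this]; exact hF.comp_neg
  have key := congrFun (hg.fourier_fourierInv_eq hgi hF2) ξ
  rw [← key, Real.fourier_eq', fourier1]
  have h2 := Measure.integral_comp_mul_left
    (fun z : ℝ => invFourier1 g z * Complex.exp (-Complex.I * (ξ : ℂ) * (z : ℂ))) (2 * π)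
  have h3 : ∫ z : ℝ, invFourier1 g z * Complex.exp (-Complex.I * (ξ : ℂ) * (z : ℂ)) =
     (2 * π : ℝ) • ∫ x : ℝ, invFourier1 g (2 * π * x) * Complex.exp (-Complex.I * (ξ : ℂ) * ((2 * π * x : ℝ) : ℂ)) := by
    rw [h2, smul_smul, abs_of_pos (by positivity), mul_inv_cancel₀ hpi, one_smul]
  rw [h3, ← integral_smul]
  congr 1; ext v
  rw [hinv]
  simp only [smul_eq_mul, RCLike.inner_apply, conj_trivial, Complex.real_smul]
  have he : Complex.exp (-Complex.I * (ξ : ℂ) * ((2 * π * v : ℝ) : ℂ)) =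
      Complex.exp (((-2 * π * (ξ * v) : ℝ) : ℂ) * Complex.I) := by
    congr 1; push_cast; ring
  rw [he]; ring

/-- Continuous version of the profile. -/
def Vp (d : ℕ) (W : ℝ → ℝ) (u0 : EuclideanSpace ℝ (Fin d) → ℂ) (M : ℝ)
    (z : ℝ) (q : EuclideanSpace ℝ (Fin d)) : ℂ :=
  ((2 * π : ℝ) : ℂ)⁻¹ * ∫ ξ in (0 : ℝ)..M,
    Complex.exp (Complex.I * (z : ℂ) * (ξ : ℂ)) * restrictionReg d W u0 ξ q

lemma continuous_restr (d : ℕ) (W : ℝ → ℝ) (u0 : EuclideanSpace ℝ (Fin d) → ℂ)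
    (hW : Continuous W) (hu : Continuous u0) :
    Continuous (fun p : ℝ × EuclideanSpace ℝ (Fin d) => restrictionReg d W u0 p.1 p.2) := by
  unfold restrictionReg
  fun_prop

lemma continuous_Vp (d : ℕ) (W : ℝ → ℝ) (u0 : EuclideanSpace ℝ (Fin d) → ℂ) (M : ℝ)
    (hW : Continuous W) (hu : Continuous u0) :
    Continuous (fun p : ℝ × EuclideanSpace ℝ (Fin d) => Vp d W u0 M p.1 p.2) := by
  unfold Vp
  refine continuous_const.mul ?_
  apply intervalIntegral.continuous_parametric_intervalIntegral_of_continuous' (μ := volume)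
  have := continuous_restr d W u0 hW hu
  have h2 : Continuous (fun p : (ℝ × EuclideanSpace ℝ (Fin d)) × ℝ => restrictionReg d W u0 p.2 p.1.2) :=
    this.comp (by fun_prop : Continuous fun p : (ℝ × EuclideanSpace ℝ (Fin d)) × ℝ => (p.2, p.1.2))
  simp only [Function.uncurry_def]
  exact Continuous.mul (by fun_prop) h2

lemma restr_zero (d : ℕ) (W : ℝ → ℝ) (u0 : EuclideanSpace ℝ (Fin d) → ℂ) (M : ℝ)
    (hW0 : ∀ ξ : ℝ, ξ ≤ 0 → W ξ = 0) (hM : ∀ x, M ≤ ‖x‖ → u0 x = 0)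
    (q : EuclideanSpace ℝ (Fin d)) (hq : ‖q‖ = 1) (ξ : ℝ) (h : ξ ≤ 0 ∨ M ≤ ξ) :
    restrictionReg d W u0 ξ q = 0 := by
  unfold restrictionReg
  rcases h with h | h
  · simp [hW0 ξ h]
  · rw [hM, mul_zero]
    rw [norm_smul, hq, mul_one]; simp only [norm_abs_eq_norm]
    exact h.trans (le_abs_self _)

lemma profile_eq (d : ℕ) (W : ℝ → ℝ) (u0 : EuclideanSpace ℝ (Fin d) → ℂ) (M : ℝ) (hM0 : 0 ≤ M)
    (hW0 : ∀ ξ : ℝ, ξ ≤ 0 → W ξ = 0) (hM : ∀ x, M ≤ ‖x‖ → u0 x = 0)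
    (q : EuclideanSpace ℝ (Fin d)) (hq : ‖q‖ = 1) (z τ : ℝ) :
    profileReg d (fun _ => 0) W u0 z q τ = Vp d W u0 M z q := by
  unfold profileReg Vp invFourier1
  rw [intervalIntegral.integral_of_le hM0]
  congr 1
  rw [← integral_indicator measurableSet_Ioc]
  congr 1; ext ξ
  by_cases h : ξ ∈ Set.Ioc 0 M
  · rw [Set.indicator_of_mem h]; simp
  · have h0 := restr_zero d W u0 M hW0 hM q hq ξ
    rw [Set.indicator_of_notMem h]; simp only []
    rw [h0]
    · simp
    · by_contra! hh
      exact h ⟨hh.1, hh.2.le⟩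

lemma fourier1_Vp (d : ℕ) (W : ℝ → ℝ) (u0 : EuclideanSpace ℝ (Fin d) → ℂ) (M : ℝ) (hM0 : 0 ≤ M)
    (hW : Continuous W) (hu : Continuous u0)
    (hW0 : ∀ ξ : ℝ, ξ ≤ 0 → W ξ = 0) (hM : ∀ x, M ≤ ‖x‖ → u0 x = 0)
    (q : EuclideanSpace ℝ (Fin d)) (hq : ‖q‖ = 1)
    (hi : Integrable (fun z => Vp d W u0 M z q)) (ξ : ℝ) :
    fourier1 (fun z => Vp d W u0 M z q) ξ = restrictionReg d W u0 ξ q := by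
  have h : (fun z => Vp d W u0 M z q) = invFourier1 (fun ξ => restrictionReg d W u0 ξ q) := by
    ext z
    rw [← profile_eq d W u0 M hM0 hW0 hM q hq z 1]
    unfold profileReg; simp
  have hc : Continuous (fun ξ => restrictionReg d W u0 ξ q) :=
    (continuous_restr d W u0 hW hu).comp (by fun_prop : Continuous fun ξ : ℝ => (ξ, q))
  rw [h] at hi ⊢
  refine fourier1_invFourier1 _ hc (hc.integrable_of_hasCompactSupport ?_) hi ξ
  refine HasCompactSupport.intro (isCompact_Icc (a := 0) (b := M)) fun x hx => ?_
  apply restr_zero d W u0 M hW0 hM q hq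
  by_contra! hh
  exact hx ⟨hh.1.le, hh.2.le⟩

/-! Part 2: oscillatory integrals -/

lemma tendsto_cos_RL (κ : ℝ) (hκ : 0 < κ) (h : ℝ → ℂ) :
    Tendsto (fun R : ℝ => ∫ θ in Set.Ioo 0 π,
      Complex.exp (-Complex.I * R * ((κ * cos θ : ℝ) : ℂ)) * h θ) atTop (𝓝 0) := by
  set H : ℝ → ℂ := Set.indicator (cos '' Set.Ioo 0 π)
    (fun s => h (arccos s) * ((sin (arccos s) : ℝ) : ℂ)⁻¹)
  have hRL := Real.tendsto_integral_exp_smul_cocompact H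
  have hinj : Set.InjOn cos (Set.Ioo 0 π) := injOn_cos.mono Set.Ioo_subset_Icc_self
  have hmeas : MeasurableSet (cos '' Set.Ioo 0 π) :=
    measurableSet_Ioo.image_of_continuousOn_injOn continuous_cos.continuousOn hinj
  have ht : Tendsto (fun R : ℝ => κ / (2 * π) * R) atTop (cocompact ℝ) := by
    refine Tendsto.mono_right ?_ atTop_le_cocompact
    exact tendsto_id.const_mul_atTop (by positivity)
  refine (hRL.comp ht).congr fun R => ?_
  simp only [Function.comp]
  have : ∀ v : ℝ, Real.fourierChar (-(v * (κ / (2 * π) * R))) • H v =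
     Set.indicator (cos '' Set.Ioo 0 π) (fun s => Complex.exp (-Complex.I * R * ((κ * s : ℝ) : ℂ)) *
       (h (arccos s) * ((sin (arccos s) : ℝ) : ℂ)⁻¹)) v := by
    intro v
    by_cases hv : v ∈ cos '' Set.Ioo 0 π
    · simp only [H, Set.indicator_of_mem hv]
      rw [Circle.smul_def, Real.fourierChar_apply, smul_eq_mul]
      congr 2
      have : (π : ℂ) ≠ 0 := by exact_mod_cast pi_ne_zero
      push_cast; field_simp
    · simp only [H, Set.indicator_of_notMem hv, smul_zero]
  simp_rw [this]
  rw [integral_indicator hmeas, integral_image_eq_integral_abs_deriv_smul measurableSet_Ioo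
    (fun x _ => (hasDerivAt_cos x).hasDerivWithinAt) hinj]
  refine setIntegral_congr_fun measurableSet_Ioo fun θ hθ => ?_
  have hs : 0 < sin θ := sin_pos_of_mem_Ioo hθ
  simp only [arccos_cos hθ.1.le hθ.2.le, abs_neg, abs_of_pos hs, Complex.real_smul]
  have : ((sin θ : ℝ) : ℂ) ≠ 0 := by exact_mod_cast hs.ne'
  field_simp

/-- Fresnel primitive. -/
def Fr (a y : ℝ) : ℂ := ∫ t in (0 : ℝ)..y, Complex.exp (Complex.I * ((a * t ^ 2 : ℝ) : ℂ))

lemma Fr_hasDerivAt (a y : ℝ) : HasDerivAt (Fr a) (Complex.exp (Complex.I * ((a * y ^ 2 : ℝ) : ℂ))) y := by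
  have hc : Continuous fun t : ℝ => Complex.exp (Complex.I * ((a * t ^ 2 : ℝ) : ℂ)) := by fun_prop
  exact intervalIntegral.integral_hasDerivAt_right (hc.intervalIntegrable _ _)
    (hc.stronglyMeasurableAtFilter _ _) hc.continuousAt

lemma Fr_continuous (a : ℝ) : Continuous (Fr a) :=
  continuous_iff_continuousAt.2 fun y => (Fr_hasDerivAt a y).continuousAt

lemma real_mul_cpow {r : ℝ} (hr : 0 < r) {z : ℂ} (hz : z ≠ 0) (s : ℂ) :
    ((r : ℂ) * z) ^ s = (r : ℂ) ^ s * z ^ s := by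
  have hrC : (r : ℂ) ≠ 0 := by exact_mod_cast hr.ne'
  rw [Complex.cpow_def_of_ne_zero (mul_ne_zero hrC hz), Complex.cpow_def_of_ne_zero hrC,
    Complex.cpow_def_of_ne_zero hz, Complex.log_ofReal_mul hr hz, add_mul, Complex.exp_add,
    Complex.ofReal_log hr.le]

lemma re_aux (a S : ℝ) : (1 - Complex.I * a * S ^ 2 : ℂ).re = 1 := by
  have : (Complex.I * a * S ^ 2 : ℂ) = Complex.I * ((a * S^2 : ℝ) : ℂ) := by push_cast; ring
  rw [this, Complex.sub_re, Complex.I_mul_re, Complex.ofReal_im]; simp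

lemma norm_expI (x : ℝ) : ‖Complex.exp (Complex.I * (x : ℂ))‖ = 1 := by
  rw [mul_comm]; exact Complex.norm_exp_ofReal_mul_I x

lemma Fr_tendsto_exists (a : ℝ) (ha : 0 < a) : ∃ L : ℂ, Tendsto (Fr a) atTop (𝓝 L) := by
  have haC : (a : ℂ) ≠ 0 := by exact_mod_cast ha.ne'
  set G : ℝ → ℂ := fun t => Complex.exp (Complex.I * ((a * t ^ 2 : ℝ) : ℂ)) * ((2 * Complex.I * a * t)⁻¹)
  set K : ℝ → ℂ := fun t => Complex.exp (Complex.I * ((a * t ^ 2 : ℝ) : ℂ)) * (2 * Complex.I * a * (t : ℂ) ^ 2)⁻¹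
  have hGd : ∀ t : ℝ, 0 < t → HasDerivAt G
      (Complex.exp (Complex.I * ((a * t ^ 2 : ℝ) : ℂ)) - K t) t := by
    intro t ht
    have htC : (t : ℂ) ≠ 0 := by exact_mod_cast ht.ne'
    have h1 : HasDerivAt (fun t : ℝ => Complex.I * ((a * t ^ 2 : ℝ) : ℂ)) (Complex.I * ((a * (2 * t) : ℝ) : ℂ)) t := by
      refine HasDerivAt.const_mul _ ?_
      refine HasDerivAt.ofReal_comp ?_
      simpa using (hasDerivAt_pow 2 t).const_mul a
    have h2 : HasDerivAt (fun t : ℝ => 2 * Complex.I * a * (t : ℂ)) (2 * Complex.I * a * 1) t :=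
      (HasDerivAt.ofReal_comp (hasDerivAt_id t)).const_mul _
    have h3 := h1.cexp.mul (h2.inv (by simp [haC, htC]))
    refine h3.congr_deriv ?_
    simp only [K, Pi.inv_apply]; push_cast
    field_simp
    ring
  have hKc : ContinuousOn K (Set.Ici 1) := by
    intro t ht
    have htC : (t : ℂ) ≠ 0 := by
      have : (0:ℝ) < t := lt_of_lt_of_le one_pos ht
      exact_mod_cast this.ne'
    apply ContinuousAt.continuousWithinAt
    apply ContinuousAt.mul (by fun_prop)
    apply ContinuousAt.inv₀ (by fun_prop)
    simp [haC, htC]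
  have hKn : ∀ t : ℝ, 1 ≤ t → ‖K t‖ ≤ (2 * a)⁻¹ * t ^ (-2 : ℝ) := by
    intro t ht
    have h0 : 0 < t := by linarith
    simp only [K]
    rw [norm_mul, norm_expI]
    simp [abs_of_pos ha]
    rw [mul_comm]
  have hKi : IntegrableOn K (Set.Ioi 1) := by
    have hb := (integrableOn_Ioi_rpow_of_lt (by norm_num : (-2:ℝ) < -1) one_pos).const_mul (2 * a)⁻¹
    refine Integrable.mono' hb ?_ ?_
    · exact (hKc.mono Set.Ioi_subset_Ici_self).aestronglyMeasurable measurableSet_Ioi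
    · filter_upwards [ae_restrict_mem measurableSet_Ioi] with t ht using hKn t (le_of_lt ht)
  have hK := intervalIntegral_tendsto_integral_Ioi 1 hKi tendsto_id
  have hG : Tendsto G atTop (𝓝 0) := by
    rw [tendsto_zero_iff_norm_tendsto_zero]
    have : Tendsto (fun t : ℝ => (2 * a)⁻¹ * t⁻¹) atTop (𝓝 0) := by
      simpa using tendsto_inv_atTop_zero.const_mul ((2 * a)⁻¹)
    refine this.congr' ?_
    filter_upwards [eventually_gt_atTop 0] with t ht
    simp only [G]
    rw [norm_mul, norm_expI]
    simp [abs_of_pos ha, abs_of_pos ht]; ring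
  refine ⟨Fr a 1 + (0 - G 1) + ∫ t in Set.Ioi 1, K t, ?_⟩
  refine ((tendsto_const_nhds.add (hG.sub_const (G 1))).add hK).congr' ?_
  filter_upwards [eventually_ge_atTop 1] with y hy
  have hc : Continuous fun t : ℝ => Complex.exp (Complex.I * ((a * t ^ 2 : ℝ) : ℂ)) := by fun_prop
  have hKii : IntervalIntegrable K volume 1 y := by
    apply ContinuousOn.intervalIntegrable
    rw [Set.uIcc_of_le hy]; exact hKc.mono Set.Icc_subset_Ici_self
  have hftc := intervalIntegral.integral_eq_sub_of_hasDerivAt (a := 1) (b := y) (f := G)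
    (f' := fun t => Complex.exp (Complex.I * ((a * t ^ 2 : ℝ) : ℂ)) - K t)
    (fun t ht => hGd t (by rw [Set.uIcc_of_le hy] at ht; linarith [ht.1]))
    ((hc.intervalIntegrable _ _).sub hKii)
  rw [intervalIntegral.integral_sub (hc.intervalIntegrable _ _) hKii] at hftc
  have hsplit : Fr a y = Fr a 1 + ∫ t in (1 : ℝ)..y, Complex.exp (Complex.I * ((a * t ^ 2 : ℝ) : ℂ)) :=
    (intervalIntegral.integral_add_adjacent_intervals (hc.intervalIntegrable _ _) (hc.intervalIntegrable _ _)).symm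
  rw [hsplit]
  simp only [id]
  linear_combination -hftc

lemma Fr_bounded (a : ℝ) (ha : 0 < a) : ∃ B : ℝ, ∀ y, 0 ≤ y → ‖Fr a y‖ ≤ B := by
  obtain ⟨L, hL⟩ := Fr_tendsto_exists a ha
  have h1 : ∀ᶠ y in atTop, ‖Fr a y‖ < ‖L‖ + 1 := hL.norm.eventually_lt_const (by linarith)
  obtain ⟨Y, hY⟩ := eventually_atTop.1 h1
  obtain ⟨B, hB⟩ := (isCompact_Icc (a := (0:ℝ)) (b := Y)).exists_bound_of_continuousOn (Fr_continuous a).continuousOn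
  refine ⟨max B (‖L‖ + 1), fun y hy => ?_⟩
  rcases le_total y Y with h | h
  · exact (hB y ⟨hy, h⟩).trans (le_max_left _ _)
  · exact (hY y h).le.trans (le_max_right _ _)

lemma Fr_tendsto (a : ℝ) (ha : 0 < a) :
    Tendsto (Fr a) atTop (𝓝 ((π * Complex.I / a : ℂ) ^ (1 / 2 : ℂ) / 2)) := by
  have haC : (a : ℂ) ≠ 0 := by exact_mod_cast ha.ne'
  obtain ⟨L, hL⟩ := Fr_tendsto_exists a ha
  obtain ⟨B, hB⟩ := Fr_bounded a ha
  have hB0 : 0 ≤ B := (norm_nonneg _).trans (hB 0 le_rfl)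
  have hgi : IntegrableOn (fun v : ℝ => 2 * v * exp (-v ^ 2)) (Set.Ioi 0) := by
    have := (integrable_mul_exp_neg_mul_sq (b := 1) one_pos).const_mul 2
    refine (this.congr (Eventually.of_forall fun v => ?_)).integrableOn
    simp; ring
  have hone : ∫ v in Set.Ioi (0:ℝ), 2 * v * exp (-v ^ 2) = 1 := by
    have := integral_Ioi_of_hasDerivAt_of_tendsto' (a := 0) (f := fun v : ℝ => - exp (-v^2))
      (f' := fun v : ℝ => 2 * v * exp (-v ^ 2)) (m := 0) (fun v _ => ?_) hgi ?_
    · rw [this]; simp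
    · have := ((hasDerivAt_pow 2 v).neg).exp.neg
      refine this.congr_deriv ?_
      simp; ring
    · have : Tendsto (fun v : ℝ => v^2) atTop atTop := tendsto_pow_atTop two_ne_zero
      simpa using (tendsto_exp_neg_atTop_nhds_zero.comp this).neg
  -- identity
  have hid : ∀ S : ℝ, 0 < S → (∫ v in Set.Ioi (0:ℝ), Fr a (S * v) * ((2 * v * exp (-v ^ 2) : ℝ) : ℂ)) =
      S * ((π / (1 - Complex.I * a * S ^ 2)) ^ (1 / 2 : ℂ) / 2) := by
    intro S hS
    have hre : 0 < (1 - Complex.I * a * S ^ 2 : ℂ).re := by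
      rw [re_aux]; exact one_pos
    rw [← integral_gaussian_complex_Ioi hre]
    have hi1 : IntegrableOn (fun v : ℝ => Complex.exp (-(1 - Complex.I * a * S ^ 2) * (v:ℂ) ^ 2)) (Set.Ioi 0) :=
      (integrable_cexp_neg_mul_sq hre).integrableOn
    have hi2 : IntegrableOn (fun v : ℝ => Fr a (S * v) * ((2 * v * exp (-v ^ 2) : ℝ) : ℂ)) (Set.Ioi 0) := by
      refine Integrable.mono' (hgi.const_mul B) ?_ ?_
      · apply Continuous.aestronglyMeasurable
        have := Fr_continuous a
        fun_prop
      · filter_upwards [ae_restrict_mem measurableSet_Ioi] with v hv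
        have hv : 0 < v := hv
        rw [norm_mul, Complex.norm_of_nonneg (by positivity)]
        have := hB (S * v) (by positivity)
        gcongr
    have := integral_Ioi_of_hasDerivAt_of_tendsto' (a := 0)
      (f := fun v : ℝ => Fr a (S * v) * ((exp (-v^2) : ℝ) : ℂ))
      (f' := fun v : ℝ => S * Complex.exp (-(1 - Complex.I * a * S ^ 2) * (v:ℂ) ^ 2) -
        Fr a (S * v) * ((2 * v * exp (-v ^ 2) : ℝ) : ℂ)) (m := 0) (fun v _ => ?_) ((hi1.const_mul _).sub hi2) ?_
    · rw [integral_sub (hi1.const_mul _) hi2, integral_const_mul] at this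
      simp only [mul_zero, Fr, intervalIntegral.integral_same, zero_mul, sub_zero] at this
      simp only [Fr]
      linear_combination -this
    · have h1 : HasDerivAt (fun v : ℝ => Fr a (S * v)) (S • Complex.exp (Complex.I * ((a * (S * v) ^ 2 : ℝ) : ℂ))) v := by
        have := HasDerivAt.scomp v (Fr_hasDerivAt a (S * v)) ((hasDerivAt_id v).const_mul S)
        simpa [Function.comp_def] using this
      have h2 : HasDerivAt (fun v : ℝ => ((exp (-v^2) : ℝ) : ℂ)) ((exp (-v^2) * (-(2 * v)) : ℝ) : ℂ) v := by
        refine HasDerivAt.ofReal_comp ?_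
        have := ((hasDerivAt_pow 2 v).neg).exp
        refine this.congr_deriv ?_
        simp
      refine (h1.mul h2).congr_deriv ?_
      have he : Complex.exp (-(1 - Complex.I * a * S ^ 2) * (v:ℂ) ^ 2) =
         Complex.exp (Complex.I * ((a * (S * v) ^ 2 : ℝ) : ℂ)) * ((exp (-v^2) : ℝ) : ℂ) := by
        rw [Complex.ofReal_exp, ← Complex.exp_add]; congr 1; push_cast; ring
      rw [he, Complex.real_smul]; push_cast; ring
    · have h0 : Tendsto (fun v : ℝ => B * exp (-v^2)) atTop (𝓝 0) := by
        have : Tendsto (fun v : ℝ => v^2) atTop atTop := tendsto_pow_atTop two_ne_zero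
        simpa using (tendsto_exp_neg_atTop_nhds_zero.comp this).const_mul B
      refine squeeze_zero_norm' ?_ h0
      filter_upwards [eventually_ge_atTop 0] with v hv
      rw [norm_mul, Complex.norm_of_nonneg (by positivity)]
      have := hB (S * v) (by positivity)
      gcongr
  have hlim1 : Tendsto (fun S : ℝ => ∫ v in Set.Ioi (0:ℝ), Fr a (S * v) * ((2 * v * exp (-v ^ 2) : ℝ) : ℂ)) atTop
      (𝓝 (∫ v in Set.Ioi (0:ℝ), L * ((2 * v * exp (-v ^ 2) : ℝ) : ℂ))) := by
    refine tendsto_integral_filter_of_dominated_convergence (fun v => B * (2 * v * exp (-v ^ 2))) ?_ ?_ (hgi.const_mul B) ?_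
    · refine Eventually.of_forall fun S => ?_
      apply Continuous.aestronglyMeasurable
      have := Fr_continuous a
      fun_prop
    · filter_upwards [eventually_ge_atTop 0] with S hS
      filter_upwards [ae_restrict_mem measurableSet_Ioi] with v hv
      have hv : 0 < v := hv
      rw [norm_mul, Complex.norm_of_nonneg (by positivity)]
      have := hB (S * v) (by positivity)
      gcongr
    · filter_upwards [ae_restrict_mem measurableSet_Ioi] with v hv
      refine Tendsto.mul_const _ (hL.comp ?_)
      exact tendsto_id.atTop_mul_const hv
  rw [integral_const_mul, integral_complex_ofReal, hone, Complex.ofReal_one, mul_one] at hlim1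
  have hlim2 : Tendsto (fun S : ℝ => (π / (((S ^ 2)⁻¹ : ℝ) - Complex.I * a) : ℂ) ^ (1 / 2 : ℂ) / 2) atTop
      (𝓝 ((π / ((0 : ℝ) - Complex.I * a) : ℂ) ^ (1 / 2 : ℂ) / 2)) := by
    refine Tendsto.div_const ?_ 2
    have ht : Tendsto (fun S : ℝ => (π / (((S ^ 2)⁻¹ : ℝ) - Complex.I * a) : ℂ)) atTop (𝓝 (π / ((0 : ℝ) - Complex.I * a) : ℂ)) := by
      refine Tendsto.div tendsto_const_nhds ?_ ?_
      · refine Tendsto.sub_const ?_ _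
        exact (Complex.continuous_ofReal.tendsto 0).comp (tendsto_inv_atTop_zero.comp (tendsto_pow_atTop two_ne_zero))
      · simp [haC]
    refine ht.cpow tendsto_const_nhds ?_
    right
    have : (π / ((0 : ℝ) - Complex.I * a) : ℂ) = ((π / a : ℝ) : ℂ) * Complex.I := by
      push_cast; rw [zero_sub]; field_simp; simp
    rw [this]; simp [ha.ne']
  have heq : (π / ((0 : ℝ) - Complex.I * a) : ℂ) = π * Complex.I / a := by
    push_cast; rw [zero_sub]; field_simp; simp
  rw [heq] at hlim2
  have : L = (π * Complex.I / a : ℂ) ^ (1 / 2 : ℂ) / 2 := by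
    refine tendsto_nhds_unique hlim1 (hlim2.congr' ?_)
    filter_upwards [eventually_gt_atTop 0] with S hS
    rw [hid S hS]
    have hSC : (S : ℂ) ≠ 0 := by exact_mod_cast hS.ne'
    have hne : (1 - Complex.I * a * S ^ 2 : ℂ) ≠ 0 := by
      intro h
      have := congrArg Complex.re h
      rw [re_aux] at this; simp at this
    have h1 : (π / (((S ^ 2)⁻¹ : ℝ) - Complex.I * a) : ℂ) = ((S ^ 2 : ℝ) : ℂ) * (π / (1 - Complex.I * a * S ^ 2)) := by
      have h3 : ((((S ^ 2)⁻¹ : ℝ) : ℂ) - Complex.I * a) = (1 - Complex.I * a * S ^ 2) / S ^ 2 := by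
        push_cast; field_simp
      rw [h3]; push_cast; field_simp
    have h4 : ((S ^ 2 : ℝ) : ℂ) ^ (1 / 2 : ℂ) = S := by
      have : ((1/2 : ℝ) : ℂ) = (1 / 2 : ℂ) := by push_cast; rfl
      rw [← this, ← Complex.ofReal_cpow (by positivity), ← Real.sqrt_eq_rpow, Real.sqrt_sq hS.le]
    rw [h1, real_mul_cpow (by positivity) (div_ne_zero (by exact_mod_cast pi_ne_zero) hne), h4]
    ring
  rw [← this]; exact hL

lemma half_stat (a : ℝ) (ha : 0 < a) (f : ℝ → ℂ) (hf : ContDiff ℝ 1 f) (hf0 : f (π / 2) = 0) :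
    Tendsto (fun S : ℝ => S * ∫ θ in (0:ℝ)..(π / 2),
      Complex.exp (Complex.I * ((a * (S * sin (θ / 2)) ^ 2 : ℝ) : ℂ)) * f θ) atTop
      (𝓝 ((π * Complex.I / a : ℂ) ^ (1 / 2 : ℂ) * f 0)) := by
  set L : ℂ := (π * Complex.I / a : ℂ) ^ (1 / 2 : ℂ) / 2 with hLdef
  have hL : Tendsto (Fr a) atTop (𝓝 L) := Fr_tendsto a ha
  obtain ⟨B, hB⟩ := Fr_bounded a ha
  have hpi := pi_pos
  have hcos : ∀ θ ∈ Set.uIcc 0 (π / 2), 0 < cos (θ / 2) := by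
    intro θ hθ
    rw [Set.uIcc_of_le (by positivity)] at hθ
    exact cos_pos_of_mem_Ioo ⟨by linarith [hθ.1], by linarith [hθ.2]⟩
  set h : ℝ → ℂ := fun θ => 2 * f θ * ((cos (θ / 2) : ℝ) : ℂ)⁻¹
  set h' : ℝ → ℂ := fun θ => 2 * deriv f θ * ((cos (θ / 2) : ℝ) : ℂ)⁻¹ +
    2 * f θ * (((sin (θ / 2) / 2 : ℝ) : ℂ) / ((cos (θ / 2) : ℝ) : ℂ) ^ 2)
  have hhd : ∀ θ ∈ Set.uIcc 0 (π / 2), HasDerivAt h (h' θ) θ := by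
    intro θ hθ
    have hne : ((cos (θ / 2) : ℝ) : ℂ) ≠ 0 := by exact_mod_cast (hcos θ hθ).ne'
    have h1 : HasDerivAt (fun θ => 2 * f θ) (2 * deriv f θ) θ :=
      ((hf.differentiable one_ne_zero θ).hasDerivAt).const_mul 2
    have h2 : HasDerivAt (fun θ : ℝ => ((cos (θ / 2) : ℝ) : ℂ)) ((-(sin (θ / 2) / 2) : ℝ) : ℂ) θ := by
      refine HasDerivAt.ofReal_comp ?_
      refine ((hasDerivAt_id θ).div_const 2).cos.congr_deriv ?_
      simp; ring
    refine (h1.mul (h2.inv hne)).congr_deriv ?_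
    simp only [h', Pi.inv_apply]; push_cast; ring
  have hfd : Continuous (deriv f) := hf.continuous_deriv le_rfl
  have hfc : Continuous f := hf.continuous
  have hh'c : ContinuousOn h' (Set.uIcc 0 (π / 2)) := by
    intro θ hθ
    have hne : ((cos (θ / 2) : ℝ) : ℂ) ≠ 0 := by exact_mod_cast (hcos θ hθ).ne'
    apply ContinuousAt.continuousWithinAt
    apply ContinuousAt.add
    · exact ContinuousAt.mul (by fun_prop) (ContinuousAt.inv₀ (by fun_prop) hne)
    · exact ContinuousAt.mul (by fun_prop) (ContinuousAt.div (by fun_prop) (by fun_prop) (pow_ne_zero 2 hne))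
  have hFc := Fr_continuous a
  have hgd : ∀ S θ : ℝ, HasDerivAt (fun θ : ℝ => Fr a (S * sin (θ / 2)))
      ((S * (cos (θ / 2) / 2) : ℝ) • Complex.exp (Complex.I * ((a * (S * sin (θ / 2)) ^ 2 : ℝ) : ℂ))) θ := by
    intro S θ
    have h1 : HasDerivAt (fun θ : ℝ => S * sin (θ / 2)) (S * (cos (θ / 2) / 2)) θ := by
      refine (((hasDerivAt_id θ).div_const 2).sin.const_mul S).congr_deriv ?_
      simp only [id]; ring
    exact HasDerivAt.scomp θ (Fr_hasDerivAt a (S * sin (θ / 2))) h1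
  have hid : ∀ S : ℝ, (S : ℂ) * ∫ θ in (0:ℝ)..(π / 2),
      Complex.exp (Complex.I * ((a * (S * sin (θ / 2)) ^ 2 : ℝ) : ℂ)) * f θ =
      - ∫ θ in (0:ℝ)..(π / 2), h' θ * Fr a (S * sin (θ / 2)) := by
    intro S
    have hibp := intervalIntegral.integral_mul_deriv_eq_deriv_mul (a := 0) (b := π / 2) hhd
      (fun θ _ => hgd S θ) hh'c.intervalIntegrable
      (by apply Continuous.intervalIntegrable; fun_prop)
    have e1 : h (π / 2) = 0 := by simp [h, hf0]
    have e2 : Fr a (S * sin (0 / 2)) = 0 := by simp [Fr]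
    rw [e1, e2] at hibp
    simp only [zero_mul, mul_zero, sub_self, zero_sub] at hibp
    rw [← hibp, ← intervalIntegral.integral_const_mul]
    refine intervalIntegral.integral_congr fun θ hθ => ?_
    have hne : ((cos (θ / 2) : ℝ) : ℂ) ≠ 0 := by exact_mod_cast (hcos θ hθ).ne'
    simp only [h, Complex.real_smul]
    rw [Complex.ofReal_mul S, Complex.ofReal_div, Complex.ofReal_ofNat]
    field_simp
  have hlim : Tendsto (fun S : ℝ => ∫ θ in (0:ℝ)..(π / 2), h' θ * Fr a (S * sin (θ / 2))) atTop
      (𝓝 (∫ θ in (0:ℝ)..(π / 2), h' θ * L)) := by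
    refine intervalIntegral.tendsto_integral_filter_of_dominated_convergence (fun θ => ‖h' θ‖ * B) ?_ ?_ ?_ ?_
    · refine Eventually.of_forall fun S => ?_
      have : ContinuousOn (fun θ => h' θ * Fr a (S * sin (θ / 2))) (Set.uIcc 0 (π / 2)) :=
        hh'c.mul (by fun_prop)
      exact (this.mono Set.uIoc_subset_uIcc).aestronglyMeasurable measurableSet_uIoc
    · filter_upwards [eventually_ge_atTop 0] with S hS
      refine Eventually.of_forall fun θ hθ => ?_
      rw [Set.uIoc_of_le (by positivity)] at hθ
      have hs : 0 ≤ sin (θ / 2) := sin_nonneg_of_nonneg_of_le_pi (by linarith [hθ.1]) (by linarith [hθ.2])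
      rw [norm_mul]
      exact mul_le_mul_of_nonneg_left (hB _ (by positivity)) (norm_nonneg _)
    · exact (hh'c.norm.mul continuousOn_const).intervalIntegrable
    · refine Eventually.of_forall fun θ hθ => ?_
      rw [Set.uIoc_of_le (by positivity)] at hθ
      have hs : 0 < sin (θ / 2) := sin_pos_of_pos_of_lt_pi (by linarith [hθ.1]) (by linarith [hθ.2])
      exact (hL.comp (tendsto_id.atTop_mul_const hs)).const_mul _
  have hval : ∫ θ in (0:ℝ)..(π / 2), h' θ * L = - (2 * f 0 * L) := by
    rw [intervalIntegral.integral_mul_const, intervalIntegral.integral_eq_sub_of_hasDerivAt hhd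
      hh'c.intervalIntegrable]
    simp [h, hf0]
  rw [hval] at hlim
  have := hlim.neg
  rw [neg_neg] at this
  have e : 2 * f 0 * L = (π * Complex.I / a : ℂ) ^ (1 / 2 : ℂ) * f 0 := by rw [hLdef]; ring
  rw [e] at this
  exact this.congr fun S => (hid S).symm

lemma stat2 (κ : ℝ) (hκ : 0 < κ) (f : ℝ → ℂ) (hf : ContDiff ℝ 1 f)
    (hf0 : ∀ θ, cos θ ≤ 0 → f θ = 0) :
    Tendsto (fun R : ℝ => Complex.exp (Complex.I * ((R * κ : ℝ) : ℂ)) * ((sqrt R : ℝ) : ℂ) *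
      ∫ θ in Set.Ioo (-π) π, Complex.exp (-Complex.I * R * ((κ * cos θ : ℝ) : ℂ)) * f θ) atTop
      (𝓝 (2 * (π * Complex.I / (2 * κ : ℝ) : ℂ) ^ (1 / 2 : ℂ) * f 0)) := by
  have hpi := pi_pos
  have hfc : Continuous f := hf.continuous
  have h1 := half_stat (2 * κ) (by positivity) f hf (hf0 _ (by simp))
  have h2 := half_stat (2 * κ) (by positivity) (fun θ => f (-θ)) (hf.comp contDiff_neg)
    (hf0 _ (by simp))
  have h3 := (h1.add h2).comp tendsto_sqrt_atTop
  have e : (π * Complex.I / (2 * κ : ℝ) : ℂ) ^ (1 / 2 : ℂ) * f 0 + (π * Complex.I / (2 * κ : ℝ) : ℂ) ^ (1 / 2 : ℂ) * f (-0) =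
    2 * (π * Complex.I / (2 * κ : ℝ) : ℂ) ^ (1 / 2 : ℂ) * f 0 := by rw [neg_zero]; ring
  rw [e] at h3
  refine h3.congr' ?_
  filter_upwards [eventually_ge_atTop 0] with R hR
  simp only [Function.comp]
  set F : ℝ → ℂ := fun θ => Complex.exp (Complex.I * ((2 * κ * (sqrt R * sin (θ / 2)) ^ 2 : ℝ) : ℂ)) * f θ with hF
  have hFc : Continuous F := by fun_prop
  have hneg : ∫ θ in (0:ℝ)..(π / 2), Complex.exp (Complex.I * ((2 * κ * (sqrt R * sin (θ / 2)) ^ 2 : ℝ) : ℂ)) * f (-θ) =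
      ∫ θ in (-(π / 2))..(0:ℝ), F θ := by
    rw [← neg_zero, ← intervalIntegral.integral_comp_neg, neg_zero]
    refine intervalIntegral.integral_congr fun θ _ => ?_
    simp only [F, neg_div, sin_neg]
    congr 4; ring
  rw [hneg, ← mul_add, add_comm, intervalIntegral.integral_add_adjacent_intervals
    (hFc.intervalIntegrable _ _) (hFc.intervalIntegrable _ _)]
  have hset : ∫ θ in Set.Ioo (-π) π, Complex.exp (-Complex.I * R * ((κ * cos θ : ℝ) : ℂ)) * f θ =
     ∫ θ in Set.Ioc (-(π / 2)) (π / 2), Complex.exp (-Complex.I * R * ((κ * cos θ : ℝ) : ℂ)) * f θ := by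
    refine setIntegral_eq_of_subset_of_forall_sdiff_eq_zero measurableSet_Ioo ?_ ?_
    · intro θ hθ; exact ⟨by linarith [hθ.1], by linarith [hθ.2]⟩
    · intro θ hθ
      rw [hf0, mul_zero]
      rcases le_or_gt θ (-(π / 2)) with h | h
      · rw [← cos_neg]; exact cos_nonpos_of_pi_div_two_le_of_le (by linarith) (by linarith [hθ.1.1])
      · have : π / 2 < θ := by
          by_contra! hh; exact hθ.2 ⟨h, hh⟩
        exact cos_nonpos_of_pi_div_two_le_of_le this.le (by linarith [hθ.1.2])
  rw [hset, ← intervalIntegral.integral_of_le (by linarith), mul_comm (Complex.exp _), mul_assoc]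
  congr 1
  rw [← intervalIntegral.integral_const_mul]
  refine intervalIntegral.integral_congr fun θ _ => ?_
  simp only [F]
  rw [← mul_assoc, ← Complex.exp_add]
  congr 2
  have : cos θ = 1 - 2 * sin (θ / 2) ^ 2 := by
    have := cos_two_mul (θ / 2)
    rw [show 2 * (θ / 2) = θ by ring] at this
    rw [this]; nlinarith [sin_sq_add_cos_sq (θ / 2)]
  rw [this, mul_pow, sq_sqrt hR]
  push_cast; ring

lemma ibp3 (κ : ℝ) (hκ : 0 < κ) (f f' : ℝ → ℂ) (hf : ∀ θ, HasDerivAt f (f' θ) θ)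
    (hf' : Continuous f') (hfpi : f π = 0) (R : ℝ) :
    (R : ℂ) * ∫ θ in Set.Ioo 0 π, (sin θ : ℂ) * (Complex.exp (-Complex.I * R * ((κ * cos θ : ℝ) : ℂ)) * f θ) =
     Complex.I / κ * (Complex.exp (-Complex.I * R * (κ : ℂ)) * f 0 +
       ∫ θ in Set.Ioo 0 π, Complex.exp (-Complex.I * R * ((κ * cos θ : ℝ) : ℂ)) * f' θ) := by
  have hκC : (κ : ℂ) ≠ 0 := by exact_mod_cast hκ.ne'
  have hfc : Continuous f := continuous_iff_continuousAt.2 fun θ => (hf θ).continuousAt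
  set e : ℝ → ℂ := fun θ => Complex.exp (-Complex.I * R * ((κ * cos θ : ℝ) : ℂ))
  set e' : ℝ → ℂ := fun θ => Complex.I * R * κ * (sin θ : ℂ) * e θ
  have hec : Continuous e := by fun_prop
  have he : ∀ θ, HasDerivAt e (e' θ) θ := by
    intro θ
    have h1 : HasDerivAt (fun θ : ℝ => ((κ * cos θ : ℝ) : ℂ)) ((κ * -sin θ : ℝ) : ℂ) θ :=
      HasDerivAt.ofReal_comp ((hasDerivAt_cos θ).const_mul κ)
    refine (h1.const_mul (-Complex.I * R)).cexp.congr_deriv ?_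
    simp only [e', e]; push_cast; ring
  have hibp := intervalIntegral.integral_mul_deriv_eq_deriv_mul (a := 0) (b := π) (fun θ _ => hf θ) (fun θ _ => he θ)
    (hf'.intervalIntegrable _ _) (by apply Continuous.intervalIntegrable; fun_prop)
  rw [hfpi, zero_mul, zero_sub, intervalIntegral.integral_of_le pi_pos.le,
    intervalIntegral.integral_of_le pi_pos.le, integral_Ioc_eq_integral_Ioo, integral_Ioc_eq_integral_Ioo] at hibp
  have e0 : e 0 = Complex.exp (-Complex.I * R * (κ : ℂ)) := by simp [e]
  have h1 : ∫ θ in Set.Ioo 0 π, f θ * e' θ = Complex.I * R * κ * ∫ θ in Set.Ioo 0 π, (sin θ : ℂ) * (e θ * f θ) := by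
    rw [← integral_const_mul]; congr 1; ext θ; simp only [e']; ring
  have h2 : ∫ θ in Set.Ioo 0 π, f' θ * e θ = ∫ θ in Set.Ioo 0 π, e θ * f' θ := by
    congr 1; ext θ; ring
  rw [h1, h2, e0] at hibp
  have hI := Complex.I_mul_I
  change (R : ℂ) * (∫ θ in Set.Ioo 0 π, (sin θ : ℂ) * (e θ * f θ)) =
     Complex.I / κ * (Complex.exp (-Complex.I * R * (κ : ℂ)) * f 0 + ∫ θ in Set.Ioo 0 π, e θ * f' θ)
  generalize (∫ θ in Set.Ioo 0 π, (sin θ : ℂ) * (e θ * f θ)) = J1 at *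
  generalize (∫ θ in Set.Ioo 0 π, e θ * f' θ) = J2 at *
  generalize Complex.exp (-Complex.I * R * (κ : ℂ)) = E at *
  have h5 : E * f 0 + J2 = -(Complex.I * R * κ * J1) := by rw [hibp]; ring
  rw [h5]; field_simp; rw [Complex.I_sq]; ring

lemma stat3 (κ : ℝ) (hκ : 0 < κ) (f f' : ℝ → ℝ → ℂ) (A : ℂ)
    (hf : ∀ φ θ, HasDerivAt (f φ) (f' φ θ) θ)
    (hf' : Continuous (Function.uncurry f')) (hfpi : ∀ φ, f φ π = 0) (hf0 : ∀ φ, f φ 0 = A) :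
    Tendsto (fun R : ℝ => (R : ℂ) * (∫ φ in Set.Ioo (-π) π, ∫ θ in Set.Ioo 0 π, (sin θ : ℂ) *
        (Complex.exp (-Complex.I * R * ((κ * cos θ : ℝ) : ℂ)) * f φ θ)) -
      Complex.exp (-Complex.I * R * (κ : ℂ)) * (2 * π * Complex.I / κ * A)) atTop (𝓝 0) := by
  have hpi := pi_pos
  obtain ⟨B, hB⟩ := ((isCompact_Icc (a := -π) (b := π)).prod (isCompact_Icc (a := (0:ℝ)) (b := π))).exists_bound_of_continuousOn hf'.continuousOn
  have hnorm : ∀ R θ : ℝ, ‖Complex.exp (-Complex.I * R * ((κ * cos θ : ℝ) : ℂ))‖ = 1 := by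
    intro R θ
    have : -Complex.I * R * ((κ * cos θ : ℝ) : ℂ) = Complex.I * ((-(R * (κ * cos θ)) : ℝ) : ℂ) := by push_cast; ring
    rw [this, norm_expI]
  have hcont : ∀ R : ℝ, Continuous (Function.uncurry fun φ θ : ℝ => Complex.exp (-Complex.I * R * ((κ * cos θ : ℝ) : ℂ)) * f' φ θ) := by
    intro R
    simp only [Function.uncurry_def] at hf' ⊢
    fun_prop
  have hmeas : ∀ R : ℝ, StronglyMeasurable (fun φ : ℝ => ∫ θ in Set.Ioo 0 π, Complex.exp (-Complex.I * R * ((κ * cos θ : ℝ) : ℂ)) * f' φ θ) := by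
    intro R
    exact StronglyMeasurable.integral_prod_right (hcont R).stronglyMeasurable
  have hb : ∀ R : ℝ, ∀ φ ∈ Set.Ioo (-π) π, ‖∫ θ in Set.Ioo 0 π, Complex.exp (-Complex.I * R * ((κ * cos θ : ℝ) : ℂ)) * f' φ θ‖ ≤ B * π := by
    intro R φ hφ
    have := norm_setIntegral_le_of_norm_le_const (μ := volume) (s := Set.Ioo 0 π) (C := B)
      (f := fun θ => Complex.exp (-Complex.I * R * ((κ * cos θ : ℝ) : ℂ)) * f' φ θ) (by simp) (fun θ hθ => by
        rw [norm_mul, hnorm, one_mul]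
        exact hB (φ, θ) ⟨Set.Ioo_subset_Icc_self hφ, Set.Ioo_subset_Icc_self hθ⟩)
    simpa [Measure.real, hpi.le] using this
  have hlim : Tendsto (fun R : ℝ => ∫ φ in Set.Ioo (-π) π, ∫ θ in Set.Ioo 0 π, Complex.exp (-Complex.I * R * ((κ * cos θ : ℝ) : ℂ)) * f' φ θ)
      atTop (𝓝 (∫ φ in Set.Ioo (-π) π, (0 : ℂ))) := by
    refine tendsto_integral_filter_of_dominated_convergence (fun _ => B * π) ?_ ?_ (integrable_const _) ?_
    · exact Eventually.of_forall fun R => (hmeas R).aestronglyMeasurable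
    · refine Eventually.of_forall fun R => ?_
      filter_upwards [ae_restrict_mem measurableSet_Ioo] with φ hφ using hb R φ hφ
    · exact Eventually.of_forall fun φ => tendsto_cos_RL κ hκ (f' φ)
  rw [integral_zero] at hlim
  have h2 := hlim.const_mul (Complex.I / κ)
  rw [mul_zero] at h2
  refine h2.congr fun R => ?_
  rw [← integral_const_mul (R : ℂ)]
  have : ∀ φ : ℝ, (R : ℂ) * ∫ θ in Set.Ioo 0 π, (sin θ : ℂ) * (Complex.exp (-Complex.I * R * ((κ * cos θ : ℝ) : ℂ)) * f φ θ) = _ :=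
    fun φ => ibp3 κ hκ (f φ) (f' φ) (hf φ) (hf'.comp (by fun_prop : Continuous fun θ : ℝ => (φ, θ))) (hfpi φ) R
  simp_rw [this]
  simp only [hf0]
  rw [integral_const_mul, integral_add (integrable_const _), integral_const]
  · simp only [Complex.real_smul]
    have : (volume.restrict (Set.Ioo (-π) π)).real Set.univ = 2 * π := by
      simp [Measure.real]; rw [ENNReal.toReal_ofReal (by positivity)]; ring
    rw [this]; push_cast; ring
  · refine Integrable.mono' (integrable_const (B * π)) (hmeas R).aestronglyMeasurable ?_
    filter_upwards [ae_restrict_mem measurableSet_Ioo] with φ hφ using hb R φ hφ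

/-! Part 4: reduction to integrals over the sphere -/

lemma measurable_Vp (d : ℕ) (W : ℝ → ℝ) (u0 : EuclideanSpace ℝ (Fin d) → ℂ) (M : ℝ)
    (hW : Continuous W) (hu : Continuous u0) : Measurable (fun p : ℝ × EuclideanSpace ℝ (Fin d) => Vp d W u0 M p.1 p.2) := (continuous_Vp d W u0 M hW hu).measurable
lemma meas_comp2 {X Y Z T : Type} [MeasurableSpace X] [MeasurableSpace Y] [MeasurableSpace Z] [MeasurableSpace T]
   (F : Y → Z → T) (hF : Measurable (fun p : Y × Z => F p.1 p.2)) (f : X → Y) (g : X → Z) (hf : Measurable f) (hg : Measurable g) : Measurable (fun x => F (f x) (g x)) := 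
  hF.comp (hf.prodMk hg)
lemma measurable_Vp_comp (d : ℕ) (W : ℝ → ℝ) (u0 : EuclideanSpace ℝ (Fin d) → ℂ) (M : ℝ)
    (hW : Continuous W) (hu : Continuous u0) {X : Type} [MeasurableSpace X] (f : X → ℝ) (g : X → EuclideanSpace ℝ (Fin d)) (hf : Measurable f) (hg : Measurable g) : Measurable (fun x => Vp d W u0 M (f x) (g x)) := 
  meas_comp2 (Vp d W u0 M) (measurable_Vp d W u0 M hW hu) f g hf hg
lemma cont_comp2 {X Y Z T : Type} [TopologicalSpace X] [TopologicalSpace Y] [TopologicalSpace Z] [TopologicalSpace T]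
   (F : Y → Z → T) (hF : Continuous (fun p : Y × Z => F p.1 p.2)) (f : X → Y) (g : X → Z) (hf : Continuous f) (hg : Continuous g) : Continuous (fun x => F (f x) (g x)) := 
  hF.comp (hf.prodMk hg)

lemma int_add3 {X : Type} [MeasurableSpace X] {m : Measure X} {f a b c : X → ℂ} (ha : Integrable a m)
    (hb : Integrable b m) (hc : Integrable c m) (h : ∀ x, f x = a x + b x + c x) :
    ∫ x, f x ∂m = (∫ x, a x ∂m) + (∫ x, b x ∂m) + ∫ x, c x ∂m := by
  have h1 := integral_add (ha.add hb) hc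
  have h2 := integral_add ha hb
  have h3 : ∫ x, f x ∂m = ∫ x, ((a + b) x + c x) ∂m := by congr 1; ext x; exact h x
  rw [h3, h1, ← h2]; rfl

/-- weighted transform -/
def TT {Θ : Type} (V : ℝ → Θ → ℂ) (σ : Θ → ℝ) (g : ℝ → ℝ) (θ : Θ) : ℂ :=
  ∫ z : ℝ, (g z : ℂ) * (V z θ * Complex.exp (-Complex.I * (σ θ : ℂ) * (z : ℂ)))

lemma norm_exp_negI (s z : ℝ) : ‖Complex.exp (-Complex.I * (s : ℂ) * (z : ℂ))‖ = 1 := by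
  have : -Complex.I * (s : ℂ) * (z : ℂ) = Complex.I * ((-(s * z) : ℝ) : ℂ) := by push_cast; ring
  rw [this, norm_expI]

section
variable {Θ : Type} [MeasurableSpace Θ] {V : ℝ → Θ → ℂ} {σ : Θ → ℝ} {ν : ℝ → ℝ}

lemma TT_jm (hV : Measurable (fun p : ℝ × Θ => V p.1 p.2)) (hσ : Measurable σ)
    {g : ℝ → ℝ} (hg : Measurable g) :
    Measurable (fun p : Θ × ℝ => (g p.2 : ℂ) * (V p.2 p.1 * Complex.exp (-Complex.I * (σ p.1 : ℂ) * (p.2 : ℂ)))) := by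
  have h1 : Measurable (fun p : Θ × ℝ => V p.2 p.1) := hV.comp measurable_swap
  fun_prop

lemma TT_meas (hV : Measurable (fun p : ℝ × Θ => V p.1 p.2)) (hσ : Measurable σ)
    {g : ℝ → ℝ} (hg : Measurable g) : StronglyMeasurable (TT V σ g) := by
  exact StronglyMeasurable.integral_prod_right (TT_jm hV hσ hg).stronglyMeasurable

lemma TT_int (hV : Measurable (fun p : ℝ × Θ => V p.1 p.2)) (hσ : Measurable σ)
    (hb : ∀ z θ, ‖V z θ‖ ≤ ν z)
    {g : ℝ → ℝ} (hg : Measurable g) (hi : Integrable (fun z => |g z| * ν z)) (θ : Θ) :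
    Integrable (fun z : ℝ => (g z : ℂ) * (V z θ * Complex.exp (-Complex.I * (σ θ : ℂ) * (z : ℂ)))) := by
  refine Integrable.mono' hi ?_ (Eventually.of_forall fun z => ?_)
  · exact ((TT_jm hV hσ hg).comp (measurable_prodMk_left (x := θ))).aestronglyMeasurable
  · rw [norm_mul, norm_mul, norm_exp_negI, mul_one, Complex.norm_real, Real.norm_eq_abs]
    exact mul_le_mul_of_nonneg_left (hb z θ) (abs_nonneg _)

lemma TT_bound (hb : ∀ z θ, ‖V z θ‖ ≤ ν z)
    {g : ℝ → ℝ} (hi : Integrable (fun z => |g z| * ν z)) (θ : Θ) :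
    ‖TT V σ g θ‖ ≤ ∫ z, |g z| * ν z := by
  refine norm_integral_le_of_norm_le hi (Eventually.of_forall fun z => ?_)
  rw [norm_mul, norm_mul, norm_exp_negI, mul_one, Complex.norm_real, Real.norm_eq_abs]
  exact mul_le_mul_of_nonneg_left (hb z θ) (abs_nonneg _)

lemma TT_w_integrable {m : Measure Θ} [IsFiniteMeasure m] (hV : Measurable (fun p : ℝ × Θ => V p.1 p.2)) (hσ : Measurable σ)
    (hb : ∀ z θ, ‖V z θ‖ ≤ ν z) {w : Θ → ℝ} (hwm : Measurable w) (hw : ∀ θ, |w θ| ≤ 1) (R : ℝ)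
    {g : ℝ → ℝ} (hg : Measurable g) (hi : Integrable (fun z => |g z| * ν z)) :
    Integrable (fun θ => (w θ : ℂ) * (Complex.exp (-Complex.I * (R : ℂ) * (σ θ : ℂ)) * TT V σ g θ)) m := by
  refine Integrable.mono' (integrable_const (∫ z, |g z| * ν z)) ?_ (Eventually.of_forall fun θ => ?_)
  · have := (TT_meas hV hσ hg).measurable
    apply Measurable.aestronglyMeasurable
    fun_prop
  · rw [norm_mul, norm_mul, norm_exp_negI, one_mul, Complex.norm_real, Real.norm_eq_abs]
    have := TT_bound (σ := σ) hb hi θ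
    have h2 := mul_le_mul (hw θ) this (norm_nonneg _) zero_le_one
    linarith

lemma TT_tendsto {m : Measure Θ} [IsFiniteMeasure m] 
    (hb : ∀ z θ, ‖V z θ‖ ≤ ν z) (hν : ∀ z, 0 ≤ ν z) {w : Θ → ℝ} (hw : ∀ θ, |w θ| ≤ 1)
    {D : ℝ → ℝ → ℝ} (hD : ∀ R, Measurable (D R)) (bd : ℝ → ℝ) (hνm : Measurable ν)
    (hbd : ∀ R, 1 ≤ R → ∀ z, |D R z| ≤ bd z) (hi : Integrable (fun z => bd z * ν z))
    (hlim : ∀ z, Tendsto (fun R => D R z) atTop (𝓝 0)) :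
    Tendsto (fun R : ℝ => ∫ θ, (w θ : ℂ) * (Complex.exp (-Complex.I * (R : ℂ) * (σ θ : ℂ)) * TT V σ (D R) θ) ∂m)
      atTop (𝓝 0) := by
  have h1 : Tendsto (fun R => ∫ z, |D R z| * ν z) atTop (𝓝 (∫ z : ℝ, (0:ℝ))) := by
    refine tendsto_integral_filter_of_dominated_convergence (fun z => bd z * ν z) ?_ ?_ hi ?_
    · exact Eventually.of_forall fun R => ((hD R).abs.mul hνm).aestronglyMeasurable
    · filter_upwards [eventually_ge_atTop 1] with R hR
      refine Eventually.of_forall fun z => ?_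
      rw [norm_of_nonneg (mul_nonneg (abs_nonneg _) (hν z))]
      exact mul_le_mul_of_nonneg_right (hbd R hR z) (hν z)
    · refine Eventually.of_forall fun z => ?_
      simpa using (hlim z).abs.mul_const (ν z)
  rw [integral_zero] at h1
  have h2 := h1.mul_const (m.real Set.univ)
  rw [zero_mul] at h2
  refine squeeze_zero_norm' ?_ h2
  filter_upwards [eventually_ge_atTop 1] with R hR
  refine norm_integral_le_of_norm_le_const (Eventually.of_forall fun θ => ?_)
  have hi' : Integrable (fun z => |D R z| * ν z) := by
    refine Integrable.mono' hi ((hD R).abs.mul hνm).aestronglyMeasurable (Eventually.of_forall fun z => ?_)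
    rw [norm_of_nonneg (mul_nonneg (abs_nonneg _) (hν z))]
    exact mul_le_mul_of_nonneg_right (hbd R hR z) (hν z)
  rw [norm_mul, norm_mul, norm_exp_negI, one_mul, Complex.norm_real, Real.norm_eq_abs]
  have := TT_bound (σ := σ) hb hi' θ
  have h2 := mul_le_mul (hw θ) this (norm_nonneg _) zero_le_one
  linarith

end

/-- Polar integration formula for nice functions. -/
def PolarF (d : ℕ) {Θ : Type} [MeasurableSpace Θ] (m : Measure Θ)
    (q : Θ → EuclideanSpace ℝ (Fin d)) (w : Θ → ℝ) : Prop :=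
  ∀ F : EuclideanSpace ℝ (Fin d) → ℂ, Measurable F → (∃ B : ℝ, ∀ x, ‖F x‖ ≤ B) →
    (∃ L : ℝ, ∀ x, L ≤ ‖x‖ → F x = 0) →
    ∫ x, F x = ∫ θ, ((w θ : ℂ) * (∫ r in Set.Ioi (0:ℝ), ((r ^ (d - 1) : ℝ) : ℂ) * F (r • q θ))) ∂m

/-- radial weight -/
def pw (d : ℕ) (R z : ℝ) : ℝ :=
  Set.indicator (Set.Ioo (-R) R) (fun z => R ^ (-(((d : ℝ) - 1) / 2)) * (R + z) ^ (d - 1)) z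

def Qr (d : ℕ) (W : ℝ → ℝ) (u0 : EuclideanSpace ℝ (Fin d) → ℂ) (τ : ℝ)
    (k : EuclideanSpace ℝ (Fin d)) (R : ℝ) : ℂ :=
  fourierD d (fun x =>
    (((R ^ (-(((d : ℝ) - 1) / 2)) *
        Set.indicator {y : EuclideanSpace ℝ (Fin d) | ‖y‖ < 2 * R}
          (fun _ => (1 : ℝ)) x : ℝ)) : ℂ) *
      profileReg d (fun _ => 0) W u0 (‖x‖ - R) (‖x‖⁻¹ • x) τ) k

set_option maxHeartbeats 400000 in
lemma Qr_eq (d : ℕ) (hd : 1 ≤ d) (W : ℝ → ℝ) (u0 : EuclideanSpace ℝ (Fin d) → ℂ) (M : ℝ) (hM0 : 0 ≤ M)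
    (hW : Continuous W) (hu : Continuous u0)
    (hW0 : ∀ ξ : ℝ, ξ ≤ 0 → W ξ = 0) (hM : ∀ x, M ≤ ‖x‖ → u0 x = 0)
    (C : ℝ) (hC : ∀ z q, ‖q‖ = 1 → ‖Vp d W u0 M z q‖ ≤ C)
    {Θ : Type} [MeasurableSpace Θ] (m : Measure Θ)
    (q : Θ → EuclideanSpace ℝ (Fin d)) (w : Θ → ℝ) (hq : ∀ θ, ‖q θ‖ = 1)
    (hP : PolarF d m q w) (τ : ℝ) (k : EuclideanSpace ℝ (Fin d)) (R : ℝ) (hR : 0 < R) :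
    Qr d W u0 τ k R = ∫ θ, (w θ : ℂ) * (Complex.exp (-Complex.I * (R : ℂ) * ((⟪k, q θ⟫ : ℝ) : ℂ)) *
      TT (fun z θ => Vp d W u0 M z (q θ)) (fun θ => ⟪k, q θ⟫) (pw d R) θ) ∂m := by
  haveI : Nonempty (Fin d) := ⟨⟨0, hd⟩⟩
  have hVc := continuous_Vp d W u0 M hW hu
  set F : EuclideanSpace ℝ (Fin d) → ℂ := fun x =>
    ((((R ^ (-(((d : ℝ) - 1) / 2)) *
        Set.indicator {y : EuclideanSpace ℝ (Fin d) | ‖y‖ < 2 * R}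
          (fun _ => (1 : ℝ)) x : ℝ)) : ℂ) * Vp d W u0 M (‖x‖ - R) (‖x‖⁻¹ • x)) *
      Complex.exp (-Complex.I * ((⟪k, x⟫ : ℝ) : ℂ)) with hF
  have hn1 : ∀ x : EuclideanSpace ℝ (Fin d), x ≠ 0 → ‖‖x‖⁻¹ • x‖ = 1 := by
    intro x hx
    rw [norm_smul, norm_inv, norm_norm, inv_mul_cancel₀ (norm_ne_zero_iff.2 hx)]
  have h1 : Qr d W u0 τ k R = ∫ x, F x := by
    unfold Qr fourierD
    refine integral_congr_ae ?_
    have : ∀ᵐ x : EuclideanSpace ℝ (Fin d), x ≠ 0 := by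
      rw [ae_iff]; simp
    filter_upwards [this] with x hx
    rw [profile_eq d W u0 M hM0 hW0 hM _ (hn1 x hx)]
  have hset : MeasurableSet {y : EuclideanSpace ℝ (Fin d) | ‖y‖ < 2 * R} :=
    measurableSet_lt measurable_norm measurable_const
  have hFm : Measurable F := by
    have a1 : Measurable (fun x : EuclideanSpace ℝ (Fin d) => Vp d W u0 M (‖x‖ - R) (‖x‖⁻¹ • x)) :=
      measurable_Vp_comp d W u0 M hW hu _ _ (by fun_prop) (by fun_prop)
    have a2 : Measurable (Set.indicator {y : EuclideanSpace ℝ (Fin d) | ‖y‖ < 2 * R}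
          (fun _ => (1 : ℝ))) := measurable_const.indicator hset
    have a3 : Measurable (fun x : EuclideanSpace ℝ (Fin d) => ((⟪k, x⟫ : ℝ) : ℂ)) := by
      apply Continuous.measurable; fun_prop
    have a4 : Measurable (fun x : EuclideanSpace ℝ (Fin d) => (((R ^ (-(((d : ℝ) - 1) / 2)) *
        Set.indicator {y : EuclideanSpace ℝ (Fin d) | ‖y‖ < 2 * R}
          (fun _ => (1 : ℝ)) x : ℝ)) : ℂ)) :=
      Complex.measurable_ofReal.comp (measurable_const.mul a2)
    have a5 : Measurable (fun x : EuclideanSpace ℝ (Fin d) => Complex.exp (-Complex.I * ((⟪k, x⟫ : ℝ) : ℂ))) :=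
      Complex.measurable_exp.comp (measurable_const.mul a3)
    have a6 := a4.mul a1
    have a7 := a6.mul a5
    exact a7
  have hexp : ∀ x : EuclideanSpace ℝ (Fin d), ‖Complex.exp (-Complex.I * ((⟪k, x⟫ : ℝ) : ℂ))‖ = 1 := by
    intro x
    have := norm_exp_negI ⟪k, x⟫ 1
    simpa using this
  have hFb : ∃ B : ℝ, ∀ x, ‖F x‖ ≤ B := by
    refine ⟨R ^ (-(((d : ℝ) - 1) / 2)) * max C ‖Vp d W u0 M (-R) 0‖, fun x => ?_⟩
    simp only [hF]
    rw [norm_mul, norm_mul, hexp, mul_one, Complex.norm_real, norm_mul, norm_of_nonneg (by positivity : 0 ≤ R ^ (-(((d : ℝ) - 1) / 2))), mul_assoc]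
    refine mul_le_mul_of_nonneg_left ?_ (by positivity)
    have i1 : ‖Set.indicator {y : EuclideanSpace ℝ (Fin d) | ‖y‖ < 2 * R} (fun _ => (1 : ℝ)) x‖ ≤ 1 := by
      refine (norm_indicator_le_norm_self _ _).trans ?_
      simp
    have i2 : ‖Vp d W u0 M (‖x‖ - R) (‖x‖⁻¹ • x)‖ ≤ max C ‖Vp d W u0 M (-R) 0‖ := by
      by_cases hx : x = 0
      · subst hx; simp
      · exact (hC _ _ (hn1 x hx)).trans (le_max_left _ _)
    calc _ ≤ 1 * _ := mul_le_mul i1 i2 (norm_nonneg _) zero_le_one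
      _ = _ := one_mul _
  have hFs : ∃ L : ℝ, ∀ x, L ≤ ‖x‖ → F x = 0 := by
    refine ⟨2 * R, fun x hx => ?_⟩
    simp only [hF]
    rw [Set.indicator_of_notMem (by simpa using hx)]; simp
  rw [h1, hP F hFm hFb hFs]
  congr 1; ext θ
  congr 1
  unfold TT
  rw [← integral_const_mul]
  have hsh := integral_sub_right_eq_self (μ := volume) (fun z : ℝ => Complex.exp (-Complex.I * (R : ℂ) * ((⟪k, q θ⟫ : ℝ) : ℂ)) *
    ((pw d R z : ℂ) * (Vp d W u0 M z (q θ) * Complex.exp (-Complex.I * ((⟪k, q θ⟫ : ℝ) : ℂ) * (z : ℂ))))) R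
  rw [← hsh, ← integral_indicator measurableSet_Ioi]
  congr 1; ext r
  by_cases hr : 0 < r
  · rw [Set.indicator_of_mem (Set.mem_Ioi.2 hr)]
    have n1 : ‖r • q θ‖ = r := by rw [norm_smul, hq, mul_one, norm_of_nonneg hr.le]
    have n2 : r⁻¹ • r • q θ = q θ := by rw [smul_smul, inv_mul_cancel₀ hr.ne', one_smul]
    simp only [hF, n1, n2]
    have n3 : Complex.exp (-Complex.I * ((⟪k, r • q θ⟫ : ℝ) : ℂ)) = Complex.exp (-Complex.I * (R : ℂ) * ((⟪k, q θ⟫ : ℝ) : ℂ)) *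
        Complex.exp (-Complex.I * ((⟪k, q θ⟫ : ℝ) : ℂ) * ((r - R : ℝ) : ℂ)) := by
      rw [← Complex.exp_add, inner_smul_right]; congr 1; push_cast; ring
    rw [n3]
    by_cases h2 : r < 2 * R
    · rw [pw, Set.indicator_of_mem (by simpa [n1] using h2), Set.indicator_of_mem (show r - R ∈ Set.Ioo (-R) R from ⟨by linarith, by linarith⟩)]
      rw [add_sub_cancel]; push_cast; ring
    · rw [pw, Set.indicator_of_notMem (by simpa [n1] using h2), Set.indicator_of_notMem (fun h : r - R ∈ Set.Ioo (-R) R => h2 (by linarith [h.2]))]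
      simp
  · rw [Set.indicator_of_notMem (by simpa using hr), pw, Set.indicator_of_notMem (fun h : r - R ∈ Set.Ioo (-R) R => hr (by linarith [h.1]))]
    simp

set_option maxHeartbeats 400000 in
theorem core (d : ℕ) (hd : 1 ≤ d) (W : ℝ → ℝ) (u0 : EuclideanSpace ℝ (Fin d) → ℂ) (M : ℝ) (hM0 : 0 ≤ M)
    (hW : Continuous W) (hu : Continuous u0)
    (hW0 : ∀ ξ : ℝ, ξ ≤ 0 → W ξ = 0) (hM : ∀ x, M ≤ ‖x‖ → u0 x = 0)
    (C α : ℝ) (hC0 : 0 < C) (hα : 0 < α)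
    (hC : ∀ z q, ‖q‖ = 1 → ‖Vp d W u0 M z q‖ ≤ C * (1 + |z|) ^ (-(d : ℝ) - α))
    {Θ : Type} [MeasurableSpace Θ] (m : Measure Θ) [IsFiniteMeasure m]
    (q : Θ → EuclideanSpace ℝ (Fin d)) (hqm : Measurable q) (w : Θ → ℝ) (hwm : Measurable w)
    (hw : ∀ θ, |w θ| ≤ 1) (hq : ∀ θ, ‖q θ‖ = 1)
    (hP : PolarF d m q w) (τ : ℝ) (k : EuclideanSpace ℝ (Fin d)) (β K : ℝ)
    (hD1 : ∀ R, 1 ≤ R → ∀ z, |pw d R z - R ^ (((d : ℝ) - 1) / 2) - β * z| ≤ K * (1 + |z|) ^ (d - 1))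
    (hD2 : ∀ z, Tendsto (fun R => pw d R z - R ^ (((d : ℝ) - 1) / 2) - β * z) atTop (𝓝 0))
    (hβ : ∀ z, |β * z| ≤ K * (1 + |z|) ^ (d - 1)) :
    Tendsto (fun R : ℝ => Qr d W u0 τ k R - 
      ((∫ θ, (w θ : ℂ) * (Complex.exp (-Complex.I * (R : ℂ) * ((⟪k, q θ⟫ : ℝ) : ℂ)) *
        (((R ^ (((d : ℝ) - 1) / 2) : ℝ) : ℂ) * restrictionReg d W u0 ⟪k, q θ⟫ (q θ))) ∂m) +
      ∫ θ, (w θ : ℂ) * (Complex.exp (-Complex.I * (R : ℂ) * ((⟪k, q θ⟫ : ℝ) : ℂ)) *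
        TT (fun z θ => Vp d W u0 M z (q θ)) (fun θ => ⟪k, q θ⟫) (fun z => β * z) θ) ∂m)) atTop (𝓝 0) := by
  set ν : ℝ → ℝ := fun z => C * (1 + |z|) ^ (-(d : ℝ) - α) with hν
  set V : ℝ → Θ → ℂ := fun z θ => Vp d W u0 M z (q θ) with hVdef
  set σ : Θ → ℝ := fun θ => ⟪k, q θ⟫ with hσdef
  have hν0 : ∀ z, 0 ≤ ν z := fun z => by positivity
  have hνm : Measurable ν := by fun_prop
  have hσ : Measurable σ := by
    have : Continuous (fun x : EuclideanSpace ℝ (Fin d) => (⟪k, x⟫ : ℝ)) := by fun_prop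
    exact this.measurable.comp hqm
  have hV : Measurable (fun p : ℝ × Θ => V p.1 p.2) :=
    measurable_Vp_comp d W u0 M hW hu _ _ measurable_fst (hqm.comp measurable_snd)
  have hb : ∀ z θ, ‖V z θ‖ ≤ ν z := fun z θ => hC z _ (hq θ)
  have hbi : Integrable (fun z : ℝ => (K * (1 + |z|) ^ (d - 1)) * ν z) := by
    have := (integrable_one_add_norm (E := ℝ) (μ := volume) (r := 1 + α) (by simp; exact hα)).const_mul (K * C)
    refine this.congr (Eventually.of_forall fun z => ?_)
    have hp : 0 < 1 + |z| := by positivity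
    have : (1 + |z|) ^ (-(1 + α)) = (1 + |z|) ^ (d - 1) * (1 + |z|) ^ (-(d : ℝ) - α) := by
      rw [← rpow_natCast, ← rpow_add hp, Nat.cast_sub hd]; congr 1; push_cast; ring
    simp only [Real.norm_eq_abs, hν]; rw [this]; ring
  have hgi : ∀ g : ℝ → ℝ, Measurable g → (∃ K', ∀ z, |g z| ≤ K' * (K * (1 + |z|) ^ (d - 1))) → Integrable (fun z => |g z| * ν z) := by
    rintro g hg ⟨K', h⟩
    refine Integrable.mono' (hbi.const_mul K') (hg.abs.mul hνm).aestronglyMeasurable (Eventually.of_forall fun z => ?_)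
    rw [norm_of_nonneg (mul_nonneg (abs_nonneg _) (hν0 z)), ← mul_assoc K']
    exact mul_le_mul_of_nonneg_right (h z) (hν0 z)
  have hνi : Integrable ν := by
    have := (integrable_one_add_norm (E := ℝ) (μ := volume) (r := d + α) (by
      simp; have : (1:ℝ) ≤ d := by exact_mod_cast hd
      linarith)).const_mul C
    refine this.congr (Eventually.of_forall fun z => ?_)
    simp only [Real.norm_eq_abs, hν]; congr 2; ring
  have hpm : ∀ R, Measurable (pw d R) := by
    intro R; unfold pw
    exact Measurable.indicator (by fun_prop) measurableSet_Ioo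
  set D : ℝ → ℝ → ℝ := fun R z => pw d R z - R ^ (((d : ℝ) - 1) / 2) - β * z with hDdef
  have hDm : ∀ R, Measurable (D R) := fun R => ((hpm R).sub_const _).sub (measurable_id.const_mul β)
  have hlim := TT_tendsto (m := m) (σ := σ) hb hν0 hw hDm _ hνm hD1 hbi hD2
  refine hlim.congr' ?_
  filter_upwards [eventually_ge_atTop 1] with R hR
  have hR0 : 0 < R := by linarith
  have hC' : ∀ z q, ‖q‖ = 1 → ‖Vp d W u0 M z q‖ ≤ C := by
    intro z q hq
    refine (hC z q hq).trans ?_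
    have : (1 + |z|) ^ (-(d : ℝ) - α) ≤ 1 :=
      rpow_le_one_of_one_le_of_nonpos (by linarith [abs_nonneg z]) (by
        have : (0:ℝ) ≤ d := Nat.cast_nonneg d
        linarith)
    nlinarith
  rw [Qr_eq d hd W u0 M hM0 hW hu hW0 hM C hC' m q w hq hP τ k R hR0]
  have iD : Integrable (fun z => |D R z| * ν z) := hgi _ (hDm R) ⟨1, fun z => by rw [one_mul]; exact hD1 R hR z⟩
  have i1 : Integrable (fun z => |(fun _ : ℝ => R ^ (((d : ℝ) - 1) / 2)) z| * ν z) := hνi.const_mul _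
  have iβ : Integrable (fun z => |(fun z : ℝ => β * z) z| * ν z) :=
    hgi _ (measurable_id.const_mul β) ⟨1, fun z => by rw [one_mul]; exact hβ z⟩
  have hTs : ∀ θ, TT V σ (pw d R) θ = TT V σ (D R) θ +
      TT V σ (fun _ => R ^ (((d : ℝ) - 1) / 2)) θ + TT V σ (fun z => β * z) θ := by
    intro θ
    unfold TT
    have j1 := TT_int hV hσ hb (hDm R) iD θ
    have j2 := TT_int hV hσ hb (measurable_const) i1 θ
    have j3 := TT_int hV hσ hb (measurable_id.const_mul β) iβ θ
    refine int_add3 j1 j2 j3 fun z => ?_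
    simp only [hDdef]; push_cast; (try simp only [id]); ring
  have hT1 : ∀ θ, TT V σ (fun _ => R ^ (((d : ℝ) - 1) / 2)) θ =
      ((R ^ (((d : ℝ) - 1) / 2) : ℝ) : ℂ) * restrictionReg d W u0 (σ θ) (q θ) := by
    intro θ
    unfold TT
    rw [integral_const_mul]
    congr 1
    rw [← fourier1_Vp d W u0 M hM0 hW hu hW0 hM (q θ) (hq θ) ?_ (σ θ)]
    · rfl
    · refine Integrable.mono' hνi ?_ (Eventually.of_forall fun z => hb z θ)
      exact (cont_comp2 (Vp d W u0 M) (continuous_Vp d W u0 M hW hu) (fun z : ℝ => z) (fun _ => q θ) continuous_id continuous_const).aestronglyMeasurable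
  have k1 := TT_w_integrable (m := m) hV hσ hb hwm hw R (hDm R) iD
  have k2 := TT_w_integrable (m := m) (g := fun _ => R ^ (((d : ℝ) - 1) / 2)) hV hσ hb hwm hw R measurable_const i1
  have k3 := TT_w_integrable (m := m) (g := fun z => β * z) hV hσ hb hwm hw R (measurable_id.const_mul β) iβ
  have this := int_add3 (f := fun θ => (w θ : ℂ) * (Complex.exp (-Complex.I * (R : ℂ) * (σ θ : ℂ)) * TT V σ (pw d R) θ)) k1 k2 k3 (fun θ => by
    rw [hTs]; ring)
  simp only [hT1] at this
  rw [eq_sub_iff_add_eq, ← add_assoc]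
  exact this.symm

/-! Part 5: polar coordinates -/

lemma integrable_bdd_supp {X : Type} [MeasurableSpace X] {μ : Measure X} {F : X → ℂ} (hF : Measurable F)
    {B : ℝ} {s : Set X} (hs : MeasurableSet s) (hμ : μ s ≠ ⊤) (hB : ∀ x ∈ s, ‖F x‖ ≤ B) (h0 : ∀ x, x ∉ s → F x = 0) :
    Integrable F μ := by
  have h1 : IntegrableOn F s μ := by
    refine Measure.integrableOn_of_bounded (M := B) hμ hF.aestronglyMeasurable ?_
    exact (ae_restrict_iff' hs).2 (Eventually.of_forall hB)
  rw [← integrableOn_iff_integrable_of_support_subset (s := s)]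
  · exact h1
  · intro x hx
    by_contra h
    exact hx (h0 x h)

lemma polar2 {G : ℝ × ℝ → ℂ} (hG : Measurable G) {B L : ℝ} (hB : ∀ p, ‖G p‖ ≤ B)
    (hL : ∀ r θ : ℝ, 0 < r → L ≤ r → G (r * cos θ, r * sin θ) = 0) :
    ∫ p, G p = ∫ θ in Set.Ioo (-π) π, ∫ r in Set.Ioi (0:ℝ), (r : ℂ) * G (r * cos θ, r * sin θ) := by
  have hB0 : 0 ≤ B := (norm_nonneg _).trans (hB (0,0))
  rw [← integral_comp_polarCoord_symm]
  have : polarCoord.target = Set.Ioi (0:ℝ) ×ˢ Set.Ioo (-π) π := rfl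
  rw [this, Measure.volume_eq_prod, ← Measure.prod_restrict]
  have h2 : ∀ p : ℝ × ℝ, p.1 • G (polarCoord.symm p) = (p.1 : ℂ) * G (p.1 * cos p.2, p.1 * sin p.2) := by
    intro p; rw [polarCoord_symm_apply, Complex.real_smul]
  simp_rw [h2]
  rw [integral_prod_symm]
  rw [Measure.prod_restrict]
  have hm : Measurable (fun p : ℝ × ℝ => (p.1 : ℂ) * G (p.1 * cos p.2, p.1 * sin p.2)) := by
    have : Measurable (fun p : ℝ × ℝ => G (p.1 * cos p.2, p.1 * sin p.2)) :=
      hG.comp (by fun_prop)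
    fun_prop
  have e : Set.EqOn (fun p : ℝ × ℝ => (p.1 : ℂ) * G (p.1 * cos p.2, p.1 * sin p.2))
     (Set.indicator (Set.Ioo 0 L ×ˢ Set.Ioo (-π) π) (fun p : ℝ × ℝ => (p.1 : ℂ) * G (p.1 * cos p.2, p.1 * sin p.2))) (Set.Ioi (0:ℝ) ×ˢ Set.Ioo (-π) π) := by
    rintro ⟨r, θ⟩ ⟨h1, h2⟩
    simp only [Set.mem_Ioi] at h1 h2
    by_cases h : r < L
    · rw [Set.indicator_of_mem]; exact ⟨⟨h1, h⟩, h2⟩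
    · rw [Set.indicator_of_notMem (fun hh => h hh.1.2)]
      simp only [hL r θ h1 (not_lt.1 h), mul_zero]
  refine (integrableOn_congr_fun e (measurableSet_Ioi.prod measurableSet_Ioo)).2 ?_
  have hms : MeasurableSet (Set.Ioo 0 L ×ˢ Set.Ioo (-π) π : Set (ℝ × ℝ)) := measurableSet_Ioo.prod measurableSet_Ioo
  apply Integrable.integrableOn
  refine integrable_bdd_supp (hm.indicator hms) hms (B := L * B) ?_ ?_ (fun x hx => Set.indicator_of_notMem hx _)
  · rw [Measure.prod_prod]
    exact ENNReal.mul_ne_top (by simp) (by simp)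
  · rintro ⟨r, θ⟩ h
    rw [Set.indicator_of_mem h, norm_mul, Complex.norm_real, norm_of_nonneg h.1.1.le]
    exact mul_le_mul h.1.2.le (hB _) (norm_nonneg _) (h.1.1.trans h.1.2).le

def q1 (b : Bool) : EuclideanSpace ℝ (Fin 1) := !₂[if b then 1 else -1]
def q2 (θ : ℝ) : EuclideanSpace ℝ (Fin 2) := !₂[cos θ, sin θ]
def q3 (p : ℝ × ℝ) : EuclideanSpace ℝ (Fin 3) := !₂[cos p.2, sin p.2 * cos p.1, sin p.2 * sin p.1]

lemma polarF1 : PolarF 1 (Measure.count : Measure Bool) q1 (fun _ => 1) := by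
  rintro F hF ⟨B, hB⟩ ⟨L, hL⟩
  have hmp : MeasurePreserving (fun x : ℝ => (!₂[x] : EuclideanSpace ℝ (Fin 1))) := by
    have := (PiLp.volume_preserving_toLp (Fin 1)).comp (volume_preserving_funUnique (Fin 1) ℝ).symm
    have e : (fun x : ℝ => (!₂[x] : EuclideanSpace ℝ (Fin 1))) = WithLp.toLp 2 ∘ (MeasurableEquiv.funUnique (Fin 1) ℝ).symm := by
      funext x; ext i; fin_cases i; rfl
    rw [e]; exact this
  have hme : MeasurableEmbedding (fun x : ℝ => (!₂[x] : EuclideanSpace ℝ (Fin 1))) := by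
    have := (MeasurableEquiv.toLp 2 (Fin 1 → ℝ)).measurableEmbedding.comp (MeasurableEquiv.funUnique (Fin 1) ℝ).symm.measurableEmbedding
    convert this using 1
    ext x i; fin_cases i; rfl
  rw [← hmp.integral_comp hme]
  have hn : ∀ x : ℝ, ‖(!₂[x] : EuclideanSpace ℝ (Fin 1))‖ = |x| := by
    intro x; rw [EuclideanSpace.norm_eq]; simp [Real.sqrt_sq_eq_abs]
  have hi : Integrable (fun x : ℝ => F !₂[x]) := by
    refine integrable_bdd_supp (hF.comp hmp.measurable) (s := Set.Icc (-L) L) measurableSet_Icc (by simp) (fun x _ => hB _) ?_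
    intro x hx
    refine hL _ ?_
    rw [hn]
    by_contra h
    push Not at h
    exact hx ⟨(abs_lt.1 h).1.le, (abs_lt.1 h).2.le⟩
  rw [← intervalIntegral.integral_Iic_add_Ioi (b := 0) hi.integrableOn hi.integrableOn]
  have h2 := integral_comp_neg_Ioi 0 (fun x : ℝ => F !₂[x])
  rw [neg_zero] at h2
  rw [← h2, integral_count]
  have e1 : ∀ r : ℝ, r • q1 true = !₂[r] := by intro r; ext i; fin_cases i; simp [q1]
  have e2 : ∀ r : ℝ, r • q1 false = !₂[-r] := by intro r; ext i; fin_cases i; simp [q1]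
  simp [e1, e2, add_comm]

lemma polarF2 : PolarF 2 (volume.restrict (Set.Ioo (-π) π)) q2 (fun _ => 1) := by
  rintro F hF ⟨B, hB⟩ ⟨L, hL⟩
  have hmp : MeasurePreserving (fun x : ℝ × ℝ => (!₂[x.1, x.2] : EuclideanSpace ℝ (Fin 2))) := by
    have := (PiLp.volume_preserving_toLp (Fin 2)).comp (volume_preserving_finTwoArrow ℝ).symm
    have e : (fun x : ℝ × ℝ => (!₂[x.1, x.2] : EuclideanSpace ℝ (Fin 2))) = WithLp.toLp 2 ∘ (MeasurableEquiv.finTwoArrow (α := ℝ)).symm := by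
      funext x; ext i; fin_cases i <;> rfl
    rw [e]; exact this
  have hme : MeasurableEmbedding (fun x : ℝ × ℝ => (!₂[x.1, x.2] : EuclideanSpace ℝ (Fin 2))) := by
    have := (MeasurableEquiv.toLp 2 (Fin 2 → ℝ)).measurableEmbedding.comp (MeasurableEquiv.finTwoArrow (α := ℝ)).symm.measurableEmbedding
    convert this using 1
    funext x; ext i; fin_cases i <;> rfl
  rw [← hmp.integral_comp hme, polar2 (G := fun p => F !₂[p.1, p.2]) (hF.comp hmp.measurable) (L := L) (fun p => hB _)]
  · have e1 : ∀ r θ : ℝ, r • q2 θ = !₂[r * cos θ, r * sin θ] := by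
      intro r θ; ext i; fin_cases i <;> simp [q2]
    simp [e1]
  · intro r θ hr hL'
    refine hL _ ?_
    have : ‖(!₂[r * cos θ, r * sin θ] : EuclideanSpace ℝ (Fin 2))‖ = r := by
      rw [EuclideanSpace.norm_eq]; simp [Fin.sum_univ_two]
      rw [mul_pow, mul_pow, ← mul_add, cos_sq_add_sin_sq, mul_one, sqrt_sq hr.le]
    simpa [this] using hL'

lemma norm3 (x y z : ℝ) : ‖(!₂[x, y, z] : EuclideanSpace ℝ (Fin 3))‖ = sqrt (x ^ 2 + y ^ 2 + z ^ 2) := by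
  rw [EuclideanSpace.norm_eq]; simp [Fin.sum_univ_three]

lemma polar3 {F : ℝ × ℝ × ℝ → ℂ} (hF : Measurable F) {B L : ℝ} (hB : ∀ x, ‖F x‖ ≤ B)
    (hL : ∀ x y z : ℝ, L ^ 2 ≤ x ^ 2 + y ^ 2 + z ^ 2 → F (x, y, z) = 0) (hL0 : 0 ≤ L) :
    ∫ x, F x = ∫ φ in Set.Ioo (-π) π, ∫ θ in Set.Ioo 0 π, (sin θ : ℂ) *
      ∫ r in Set.Ioi (0:ℝ), ((r ^ 2 : ℝ) : ℂ) * F (r * cos θ, r * (sin θ * cos φ), r * (sin θ * sin φ)) := by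
  have hB0 : 0 ≤ B := (norm_nonneg _).trans (hB 0)
  have hK : Integrable F := by
    refine integrable_bdd_supp hF (s := Set.Icc (-L) L ×ˢ (Set.Icc (-L) L ×ˢ Set.Icc (-L) L)) (by measurability) (B := B) ?_ (fun x _ => hB x) ?_
    · rw [Measure.volume_eq_prod, Measure.prod_prod, Measure.volume_eq_prod, Measure.prod_prod]
      refine ENNReal.mul_ne_top (by simp) (ENNReal.mul_ne_top (by simp) (by simp))
    · rintro ⟨x, y, z⟩ h
      refine hL x y z ?_
      by_contra hh
      push Not at hh
      refine h ⟨?_, ?_, ?_⟩ <;> refine abs_le.1 (abs_le_of_sq_le_sq ?_ hL0) <;> nlinarith [sq_nonneg x, sq_nonneg y, sq_nonneg z]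
  have s1 : ∫ x, F x = ∫ x : ℝ, ∫ φ in Set.Ioo (-π) π, ∫ s in Set.Ioi (0:ℝ), (s : ℂ) * F (x, s * cos φ, s * sin φ) := by
    rw [Measure.volume_eq_prod, integral_prod _ (by rw [← Measure.volume_eq_prod]; exact hK)]
    congr 1; ext x
    refine polar2 (G := fun p => F (x, p)) (hF.comp (by fun_prop)) (L := L) (fun p => hB _) ?_
    intro r θ hr hr'
    refine hL _ _ _ ?_
    have := cos_sq_add_sin_sq θ
    have h3 : L ^ 2 ≤ r ^ 2 := pow_le_pow_left₀ hL0 hr' 2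
    have h4 : (r * cos θ) ^ 2 + (r * sin θ) ^ 2 = r ^ 2 := by rw [mul_pow, mul_pow, ← mul_add, this, mul_one]
    nlinarith [sq_nonneg x]
  have hjm : Measurable (fun x : (ℝ × ℝ) × ℝ => (x.2 : ℂ) * F (x.1.1, x.2 * cos x.1.2, x.2 * sin x.1.2)) := by
    have : Measurable (fun x : (ℝ × ℝ) × ℝ => F (x.1.1, x.2 * cos x.1.2, x.2 * sin x.1.2)) := hF.comp (by fun_prop)
    fun_prop
  have hsm : StronglyMeasurable (fun p : ℝ × ℝ => ∫ s in Set.Ioi (0:ℝ), (s : ℂ) * F (p.1, s * cos p.2, s * sin p.2)) :=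
    StronglyMeasurable.integral_prod_right hjm.stronglyMeasurable
  have hz : ∀ x s φ : ℝ, 0 < s → L ≤ s → F (x, s * cos φ, s * sin φ) = 0 := by
    intro x r θ hr hr'
    refine hL _ _ _ ?_
    have := cos_sq_add_sin_sq θ
    have h3 : L ^ 2 ≤ r ^ 2 := pow_le_pow_left₀ hL0 hr' 2
    have h4 : (r * cos θ) ^ 2 + (r * sin θ) ^ 2 = r ^ 2 := by rw [mul_pow, mul_pow, ← mul_add, this, mul_one]
    nlinarith [sq_nonneg x]
  have hz2 : ∀ x s φ : ℝ, L ≤ |x| → F (x, s * cos φ, s * sin φ) = 0 := by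
    intro x s φ hx
    refine hL _ _ _ ?_
    have : L ^ 2 ≤ |x| ^ 2 := pow_le_pow_left₀ hL0 hx 2
    rw [sq_abs] at this
    nlinarith [sq_nonneg (s * cos φ), sq_nonneg (s * sin φ)]
  have s2 : ∫ x : ℝ, ∫ φ in Set.Ioo (-π) π, ∫ s in Set.Ioi (0:ℝ), (s : ℂ) * F (x, s * cos φ, s * sin φ) =
      ∫ φ in Set.Ioo (-π) π, ∫ x : ℝ, ∫ s in Set.Ioi (0:ℝ), (s : ℂ) * F (x, s * cos φ, s * sin φ) := by
    refine integral_integral_swap ?_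
    refine integrable_bdd_supp (s := Set.Icc (-L) L ×ˢ Set.univ) (B := ∫ r in Set.Ioo 0 L, L * B) hsm.measurable (by measurability) ?_ ?_ ?_
    · rw [Measure.prod_prod]
      exact ENNReal.mul_ne_top (by simp) (by simp)
    · rintro ⟨x, φ⟩ _
      simp only [Function.uncurry]
      have a2 : ∫ s in Set.Ioi (0:ℝ), (s : ℂ) * F (x, s * cos φ, s * sin φ) = ∫ s in Set.Ioo (0:ℝ) L, (s : ℂ) * F (x, s * cos φ, s * sin φ) := by
        refine setIntegral_eq_of_subset_of_forall_sdiff_eq_zero measurableSet_Ioi (fun x hx => hx.1) ?_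
        rintro s ⟨hx1, hx2⟩
        rw [hz _ _ _ hx1, mul_zero]
        by_contra h
        exact hx2 ⟨hx1, not_le.1 h⟩
      rw [a2]
      refine norm_integral_le_of_norm_le (integrableOn_const (by simp)) ?_
      refine (ae_restrict_iff' measurableSet_Ioo).2 (Eventually.of_forall fun r hr => ?_)
      rw [norm_mul, Complex.norm_real, norm_of_nonneg hr.1.le]
      exact mul_le_mul hr.2.le (hB _) (norm_nonneg _) (by positivity)
    · rintro ⟨x, φ⟩ h
      simp only [Function.uncurry]
      have : L ≤ |x| := by
        by_contra hh
        push Not at hh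
        exact h ⟨⟨(abs_lt.1 hh).1.le, (abs_lt.1 hh).2.le⟩, trivial⟩
      simp [hz2 _ _ _ this]
  rw [s1, s2]
  congr 1; ext φ
  set G : ℝ × ℝ → ℂ := Set.indicator {p : ℝ × ℝ | 0 < p.2} (fun p => (p.2 : ℂ) * F (p.1, p.2 * cos φ, p.2 * sin φ)) with hGdef
  have hms : MeasurableSet {p : ℝ × ℝ | 0 < p.2} := measurableSet_lt measurable_const measurable_snd
  have hG : Measurable G := by
    refine Measurable.indicator ?_ hms
    have : Measurable (fun p : ℝ × ℝ => F (p.1, p.2 * cos φ, p.2 * sin φ)) := hF.comp (by fun_prop)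
    fun_prop
  have hG1 : ∀ x s, 0 < s → G (x, s) = (s : ℂ) * F (x, s * cos φ, s * sin φ) := fun x s hs => by
    rw [hGdef, Set.indicator_of_mem (show (x, s) ∈ {p : ℝ × ℝ | 0 < p.2} from hs)]
  have hG2 : ∀ x s, s ≤ 0 → G (x, s) = 0 := fun x s hs => by
    rw [hGdef, Set.indicator_of_notMem (fun h : (x, s) ∈ {p : ℝ × ℝ | 0 < p.2} => absurd h (not_lt.2 hs))]
  have hGB : ∀ p, ‖G p‖ ≤ L * B := by
    rintro ⟨x, s⟩
    rcases le_or_gt s 0 with hs | hs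
    · rw [hG2 x s hs, norm_zero]; positivity
    · rw [hG1 x s hs]
      rcases le_or_gt L s with h | h
      · rw [hz _ _ _ hs h, mul_zero, norm_zero]; positivity
      · rw [norm_mul, Complex.norm_real, norm_of_nonneg hs.le]
        exact mul_le_mul h.le (hB _) (norm_nonneg _) (by positivity)
  have hGi : Integrable G := by
    refine integrable_bdd_supp hG (s := Set.Icc (-L) L ×ˢ Set.Icc 0 L) (by measurability) (B := L * B) ?_ (fun x _ => hGB x) ?_
    · rw [Measure.volume_eq_prod, Measure.prod_prod]
      exact ENNReal.mul_ne_top (by simp) (by simp)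
    · rintro ⟨x, s⟩ h
      rcases le_or_gt s 0 with hs | hs
      · exact hG2 x s hs
      · rw [hG1 x s hs]
        rcases le_or_gt L s with h' | h'
        · rw [hz _ _ _ hs h', mul_zero]
        · have : L ≤ |x| := by
            by_contra hh
            push Not at hh
            exact h ⟨⟨(abs_lt.1 hh).1.le, (abs_lt.1 hh).2.le⟩, hs.le, h'.le⟩
          rw [hz2 _ _ _ this, mul_zero]
  have s3 : ∫ x : ℝ, ∫ s in Set.Ioi (0:ℝ), (s : ℂ) * F (x, s * cos φ, s * sin φ) = ∫ p, G p := by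
    rw [Measure.volume_eq_prod, integral_prod _ (by rw [← Measure.volume_eq_prod]; exact hGi)]
    congr 1; ext x
    rw [← integral_indicator measurableSet_Ioi]
    congr 1
  rw [s3, polar2 hG hGB (L := L)]
  · rw [setIntegral_eq_of_subset_of_forall_sdiff_eq_zero (s := Set.Ioo 0 π) measurableSet_Ioo (Set.Ioo_subset_Ioo_left (by linarith [pi_pos]))]
    · refine setIntegral_congr_fun measurableSet_Ioo fun θ hθ => ?_
      skip
      rw [← integral_const_mul]
      refine setIntegral_congr_fun measurableSet_Ioi fun r hr => ?_
      skip
      rw [hG1 _ _ (mul_pos hr (sin_pos_of_pos_of_lt_pi hθ.1 hθ.2)), mul_assoc r, mul_assoc r]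
      push_cast; ring
    · rintro θ ⟨h1, h2⟩
      have h3 : sin θ ≤ 0 := by
        have : θ ≤ 0 := by
          by_contra h; exact h2 ⟨not_le.1 h, h1.2⟩
        exact sin_nonpos_of_nonpos_of_neg_pi_le this h1.1.le
      rw [setIntegral_congr_fun (g := fun _ => (0:ℂ)) measurableSet_Ioi, integral_zero]
      intro r hr
      simp only
      rw [hG2 _ _ (mul_nonpos_of_nonneg_of_nonpos (le_of_lt hr) h3), mul_zero]
  · intro r θ hr hr'
    rcases le_or_gt (r * sin θ) 0 with hs | hs
    · exact hG2 _ _ hs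
    · rw [hG1 _ _ hs, hL, mul_zero]
      have := cos_sq_add_sin_sq θ
      have h3 : L ^ 2 ≤ r ^ 2 := pow_le_pow_left₀ hL0 hr' 2
      have h4 : (r * cos θ) ^ 2 + (r * sin θ * cos φ) ^ 2 + (r * sin θ * sin φ) ^ 2 = r ^ 2 := by
        rw [mul_pow _ (cos φ), mul_pow _ (sin φ), add_assoc, ← mul_add, cos_sq_add_sin_sq, mul_one, mul_pow, mul_pow, ← mul_add, this, mul_one]
      rw [h4]; exact h3

lemma polarF3 : PolarF 3 ((volume.restrict (Set.Ioo (-π) π)).prod (volume.restrict (Set.Ioo 0 π))) q3 (fun p => sin p.2) := by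
  rintro F hF ⟨B, hB⟩ ⟨L, hL⟩
  have hmp : MeasurePreserving (fun x : ℝ × ℝ × ℝ => (!₂[x.1, x.2.1, x.2.2] : EuclideanSpace ℝ (Fin 3))) := by
    have := (PiLp.volume_preserving_toLp (Fin 3)).comp ((volume_preserving_piFinSuccAbove (fun _ : Fin 3 => ℝ) 0).symm.comp
      ((MeasurePreserving.id volume).prod (volume_preserving_finTwoArrow ℝ).symm))
    have e : (fun x : ℝ × ℝ × ℝ => (!₂[x.1, x.2.1, x.2.2] : EuclideanSpace ℝ (Fin 3))) = WithLp.toLp 2 ∘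
      (MeasurableEquiv.piFinSuccAbove (fun _ : Fin 3 => ℝ) 0).symm ∘ Prod.map id (MeasurableEquiv.finTwoArrow (α := ℝ)).symm := by
      funext x; ext i; fin_cases i <;> rfl
    rw [e]; exact this
  have hme : MeasurableEmbedding (fun x : ℝ × ℝ × ℝ => (!₂[x.1, x.2.1, x.2.2] : EuclideanSpace ℝ (Fin 3))) := by
    have := (MeasurableEquiv.toLp 2 (Fin 3 → ℝ)).measurableEmbedding.comp ((MeasurableEquiv.piFinSuccAbove (fun _ : Fin 3 => ℝ) 0).symm.measurableEmbedding.comp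
      (((MeasurableEquiv.refl ℝ).prodCongr (MeasurableEquiv.finTwoArrow (α := ℝ)).symm).measurableEmbedding))
    convert this using 1
    ext x i; fin_cases i <;> rfl
  have hB0 : 0 ≤ B := (norm_nonneg _).trans (hB 0)
  have e1 : ∀ (r : ℝ) (p : ℝ × ℝ), r • q3 p = !₂[r * cos p.2, r * (sin p.2 * cos p.1), r * (sin p.2 * sin p.1)] := by
    intro r p; ext i; fin_cases i <;> simp [q3]
  have hq : Measurable q3 := by
    unfold q3; apply Continuous.measurable; fun_prop
  have hn : ∀ p, ‖q3 p‖ = 1 := by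
    intro p; rw [q3, norm3, mul_pow, mul_pow, add_assoc, ← mul_add, cos_sq_add_sin_sq, mul_one, cos_sq_add_sin_sq, sqrt_one]
  rw [← hmp.integral_comp hme, polar3 (F := fun x => F !₂[x.1, x.2.1, x.2.2]) (hF.comp hmp.measurable) (L := max L 0) (fun p => hB _)]
  · rw [integral_prod]
    · simp only [e1]
    · have hjm : Measurable (fun x : (ℝ × ℝ) × ℝ => ((x.2 ^ 2 : ℝ) : ℂ) * F (x.2 • q3 x.1)) := by
        have : Measurable (fun x : (ℝ × ℝ) × ℝ => F (x.2 • q3 x.1)) := hF.comp (by fun_prop)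
        fun_prop
      have hsm : StronglyMeasurable (fun p : ℝ × ℝ => ∫ r in Set.Ioi (0:ℝ), ((r ^ 2 : ℝ) : ℂ) * F (r • q3 p)) :=
        StronglyMeasurable.integral_prod_right hjm.stronglyMeasurable
      refine integrable_bdd_supp (s := Set.univ) (B := ∫ r in Set.Ioo 0 L, L ^ 2 * B) ?_ MeasurableSet.univ (by simp) ?_ (by simp)
      · have := hsm.measurable
        simp only [Nat.add_one_sub_one]
        fun_prop
      · intro p _
        rw [norm_mul, Complex.norm_real]
        have a1 : ‖sin p.2‖ ≤ 1 := abs_sin_le_one _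
        have a2 : ∫ r in Set.Ioi (0:ℝ), ((r ^ (3-1) : ℝ) : ℂ) * F (r • q3 p) = ∫ r in Set.Ioo (0:ℝ) L, ((r ^ (3-1) : ℝ) : ℂ) * F (r • q3 p) := by
          refine setIntegral_eq_of_subset_of_forall_sdiff_eq_zero measurableSet_Ioi (fun x hx => hx.1) ?_
          rintro x ⟨hx1, hx2⟩
          rw [hL, mul_zero]
          rw [norm_smul, hn, mul_one, norm_of_nonneg (le_of_lt hx1)]
          by_contra h
          exact hx2 ⟨hx1, not_le.1 h⟩
        rw [a2]
        have a3 : ‖∫ r in Set.Ioo (0:ℝ) L, ((r ^ (3-1) : ℝ) : ℂ) * F (r • q3 p)‖ ≤ ∫ r in Set.Ioo 0 L, L ^ 2 * B := by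
          refine norm_integral_le_of_norm_le (integrableOn_const (by simp)) ?_
          refine (ae_restrict_iff' measurableSet_Ioo).2 (Eventually.of_forall fun r hr => ?_)
          rw [norm_mul, Complex.norm_real, norm_pow, norm_of_nonneg hr.1.le]
          exact mul_le_mul (pow_le_pow_left₀ hr.1.le hr.2.le _) (hB _) (norm_nonneg _) (by positivity)
        calc _ ≤ 1 * _ := mul_le_mul a1 a3 (norm_nonneg _) zero_le_one
          _ = _ := one_mul _
  · intro x y z h
    refine hL _ ?_
    rw [norm3]
    refine (le_max_left L 0).trans ?_
    exact Real.le_sqrt_of_sq_le h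
  · exact le_max_right _ _

/-! Part 6: the limits in each dimension -/

lemma pw_out (d : ℕ) (R z : ℝ) (h : R ≤ |z|) : pw d R z = 0 := by
  rw [pw, Set.indicator_of_notMem]
  intro hz
  exact absurd (abs_lt.2 hz) (not_lt.2 h)

lemma pw_in (d : ℕ) (R z : ℝ) (h : |z| < R) : pw d R z = R ^ (-(((d : ℝ) - 1) / 2)) * (R + z) ^ (d - 1) := by
  rw [pw, Set.indicator_of_mem]
  exact abs_lt.1 h

lemma D1 (R : ℝ) (z : ℝ) : pw 1 R z - R ^ ((((1:ℕ) : ℝ) - 1) / 2) - 0 * z = if |z| < R then 0 else -1 := by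
  split_ifs with h
  · rw [pw_in _ _ _ h]; simp
  · rw [pw_out _ _ _ (not_lt.1 h)]; simp

lemma D2 (R : ℝ) (hR : 0 < R) (z : ℝ) : |pw 2 R z - R ^ ((((2:ℕ) : ℝ) - 1) / 2) - 0 * z| ≤ |z| * R ^ (-(1/2) : ℝ) := by
  have e1 : ((((2:ℕ) : ℝ) - 1) / 2) = 1/2 := by norm_num
  have hr : R ^ (-(1/2) : ℝ) * R = R ^ (1/2 : ℝ) := by
    nth_rewrite 2 [← rpow_one R]
    rw [← rpow_add hR]; norm_num
  have hp : 0 < R ^ (-(1/2) : ℝ) := by positivity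
  by_cases h : |z| < R
  · rw [pw_in _ _ _ h, e1, ← hr]
    have : R ^ (-(1/2) : ℝ) * (R + z) ^ (2 - 1) - R ^ (-(1/2) : ℝ) * R - 0 * z = z * R ^ (-(1/2) : ℝ) := by
      simp; ring
    rw [this, abs_mul, abs_of_pos hp]
  · rw [pw_out _ _ _ (not_lt.1 h), e1, ← hr, zero_mul, sub_zero, zero_sub, abs_neg, abs_of_pos (by positivity), mul_comm]
    exact mul_le_mul_of_nonneg_right (not_lt.1 h) hp.le

lemma D3 (R : ℝ) (hR : 0 < R) (z : ℝ) : |pw 3 R z - R ^ ((((3:ℕ) : ℝ) - 1) / 2) - 2 * z| ≤ 3 * |z| ^ 2 * R⁻¹ := by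
  have e1 : ((((3:ℕ) : ℝ) - 1) / 2) = 1 := by norm_num
  by_cases h : |z| < R
  · rw [pw_in _ _ _ h, e1, rpow_neg_one, rpow_one]
    have : R⁻¹ * (R + z) ^ (3 - 1) - R - 2 * z = |z| ^ 2 * R⁻¹ := by
      rw [sq_abs]; field_simp; ring
    rw [this, abs_of_nonneg (by positivity)]
    have : 0 ≤ |z| ^ 2 * R⁻¹ := by positivity
    linarith
  · have h := not_lt.1 h
    rw [pw_out _ _ _ h, e1, rpow_one]
    have h1 : |0 - R - 2 * z| ≤ 3 * |z| := by
      rw [abs_le]; constructor <;> cases abs_cases z <;> linarith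
    refine h1.trans ?_
    rw [sq, ← mul_assoc, mul_assoc]
    have : 1 ≤ |z| * R⁻¹ := by rw [← div_eq_mul_inv, le_div_iff₀ hR]; linarith
    nlinarith [abs_nonneg z]

lemma D1_lim (z : ℝ) : Tendsto (fun R => pw 1 R z - R ^ ((((1:ℕ) : ℝ) - 1) / 2) - 0 * z) atTop (𝓝 0) := by
  refine tendsto_const_nhds.congr' ?_
  filter_upwards [eventually_gt_atTop |z|] with R hR
  rw [D1, if_pos hR]

lemma D2_lim (z : ℝ) : Tendsto (fun R => pw 2 R z - R ^ ((((2:ℕ) : ℝ) - 1) / 2) - 0 * z) atTop (𝓝 0) := by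
  have h := (tendsto_rpow_neg_atTop (show (0:ℝ) < 1/2 by norm_num)).const_mul |z|
  rw [mul_zero] at h
  refine squeeze_zero_norm' ?_ h
  filter_upwards [eventually_gt_atTop 0] with R hR
  exact D2 R hR z

lemma D3_lim (z : ℝ) : Tendsto (fun R => pw 3 R z - R ^ ((((3:ℕ) : ℝ) - 1) / 2) - 2 * z) atTop (𝓝 0) := by
  have h := tendsto_inv_atTop_zero.const_mul (3 * |z| ^ 2)
  rw [mul_zero] at h
  refine squeeze_zero_norm' ?_ h
  filter_upwards [eventually_gt_atTop 0] with R hR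
  exact D3 R hR z

lemma exp_cancel (R κ : ℝ) : Complex.exp (-Complex.I * R * κ) * Complex.exp (Complex.I * ((R * κ : ℝ) : ℂ)) = 1 := by
  rw [← Complex.exp_add, ← Complex.exp_zero]; congr 1; push_cast; ring

lemma norm_exp_negIR (R κ : ℝ) : ‖Complex.exp (-Complex.I * R * κ)‖ = 1 := norm_exp_negI R κ

lemma TT_zero {Θ : Type} (V : ℝ → Θ → ℂ) (σ : Θ → ℝ) (θ : Θ) : TT V σ (fun z => 0 * z) θ = 0 := by
  simp [TT]

lemma norm_q1 (b : Bool) : ‖q1 b‖ = 1 := by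
  rw [q1, EuclideanSpace.norm_eq]; cases b <;> simp
lemma norm_q2 (θ : ℝ) : ‖q2 θ‖ = 1 := by
  rw [q2, EuclideanSpace.norm_eq]; simp
lemma norm_q3 (p : ℝ × ℝ) : ‖q3 p‖ = 1 := by
  rw [q3, norm3, mul_pow, mul_pow, add_assoc, ← mul_add, cos_sq_add_sin_sq, mul_one, cos_sq_add_sin_sq, sqrt_one]
lemma contDiff_q2 : ContDiff ℝ 2 q2 := by
  unfold q2
  rw [contDiff_euclidean]
  intro i; fin_cases i
  · exact contDiff_cos
  · exact contDiff_sin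
lemma contDiff_q3 : ContDiff ℝ 2 q3 := by
  unfold q3
  rw [contDiff_euclidean]
  intro i; fin_cases i
  · exact contDiff_cos.comp contDiff_snd
  · exact (contDiff_sin.comp contDiff_snd).mul (contDiff_cos.comp contDiff_fst)
  · exact (contDiff_sin.comp contDiff_snd).mul (contDiff_sin.comp contDiff_fst)
lemma inner_q2 (κ θ : ℝ) : ⟪κ • q2 0, q2 θ⟫ = κ * cos θ := by
  rw [inner_smul_left]; simp [q2, PiLp.inner_apply, Fin.sum_univ_two]
lemma inner_q3 (κ : ℝ) (p : ℝ × ℝ) : ⟪κ • q3 (0, 0), q3 p⟫ = κ * cos p.2 := by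
  rw [inner_smul_left]; simp [q3, PiLp.inner_apply, Fin.sum_univ_three]
lemma inner_q1 (κ : ℝ) (b : Bool) : ⟪κ • q1 true, q1 b⟫ = if b then κ else -κ := by
  rw [inner_smul_left]
  cases b
  · simp [q1, PiLp.inner_apply]
  · rw [real_inner_self_eq_norm_sq, norm_q1]; simp

lemma lim1 (W : ℝ → ℝ) (u0 : EuclideanSpace ℝ (Fin 1) → ℂ) (M : ℝ) (hM0 : 0 ≤ M)
    (hW : Continuous W) (hu : Continuous u0)
    (hW0 : ∀ ξ : ℝ, ξ ≤ 0 → W ξ = 0) (hM : ∀ x, M ≤ ‖x‖ → u0 x = 0)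
    (C α : ℝ) (hC0 : 0 < C) (hα : 0 < α)
    (hC : ∀ z q, ‖q‖ = 1 → ‖Vp 1 W u0 M z q‖ ≤ C * (1 + |z|) ^ (-((1:ℕ) : ℝ) - α)) (τ κ : ℝ) (hκ : 0 < κ)
    (hWκ : W κ = κ ^ ((((1:ℕ) : ℝ) - 1) / 2)) :
    Tendsto (fun R : ℝ => Qr 1 W u0 τ (κ • q1 true) R - Complex.exp (-Complex.I * R * κ) * u0 (κ • q1 true)) atTop (𝓝 0) := by
  have h := core 1 le_rfl W u0 M hM0 hW hu hW0 hM C α hC0 hα hC (Measure.count : Measure Bool) q1 (measurable_of_finite _)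
    (fun _ => 1) measurable_const (by simp) norm_q1 polarF1 τ (κ • q1 true) 0 1
    (by intro R _ z; rw [D1]; split_ifs <;> simp) D1_lim (by simp)
  refine h.congr fun R => ?_
  simp only [TT_zero]
  congr 1
  rw [integral_count, integral_count]
  simp only [Fintype.univ_bool, Finset.mem_singleton, Bool.true_eq_false, not_false_eq_true,
    Finset.sum_insert, Finset.sum_singleton]
  simp only [inner_q1, restrictionReg, if_true, Bool.false_eq_true, if_false, hW0 (-κ) (by linarith), hWκ, abs_of_pos hκ]
  simp

lemma lim2 (W : ℝ → ℝ) (u0 : EuclideanSpace ℝ (Fin 2) → ℂ) (M : ℝ) (hM0 : 0 ≤ M)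
    (hW : ContDiff ℝ 1 W) (hu : ContDiff ℝ 1 u0)
    (hW0 : ∀ ξ : ℝ, ξ ≤ 0 → W ξ = 0) (hM : ∀ x, M ≤ ‖x‖ → u0 x = 0)
    (C α : ℝ) (hC0 : 0 < C) (hα : 0 < α)
    (hC : ∀ z q, ‖q‖ = 1 → ‖Vp 2 W u0 M z q‖ ≤ C * (1 + |z|) ^ (-((2:ℕ) : ℝ) - α)) (τ κ : ℝ) (hκ : 0 < κ)
    (hWκ : W κ = κ ^ ((((2:ℕ) : ℝ) - 1) / 2)) :
    Tendsto (fun R : ℝ => Qr 2 W u0 τ (κ • q2 0) R - Complex.exp (-Complex.I * R * κ) * u0 (κ • q2 0)) atTop (𝓝 0) := by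
  have h := core 2 (by norm_num) W u0 M hM0 hW.continuous hu.continuous hW0 hM C α hC0 hα hC (volume.restrict (Set.Ioo (-π) π)) q2 contDiff_q2.continuous.measurable
    (fun _ => 1) measurable_const (by simp) norm_q2 polarF2 τ (κ • q2 0) 0 1
    (by
      intro R hR z
      refine (D2 R (by linarith) z).trans ?_
      have h1 : R ^ (-(1/2) : ℝ) ≤ 1 := rpow_le_one_of_one_le_of_nonpos hR (by norm_num)
      have h2 : 0 ≤ R ^ (-(1/2) : ℝ) := by positivity
      have := abs_nonneg z
      simp only [Nat.add_one_sub_one, pow_one]; nlinarith) D2_lim (by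
      intro z; simp; positivity)
  set f : ℝ → ℂ := fun θ => (2 * (π : ℂ) * Complex.I) ^ (-((((2:ℕ) : ℂ) - 1) / 2)) * (W (κ * cos θ) : ℂ) * u0 ((κ * cos θ) • q2 θ) with hf
  have hfe : ∀ θ, restrictionReg 2 W u0 (κ * cos θ) (q2 θ) = f θ := by
    intro θ
    rw [hf, restrictionReg]
    rcases le_or_gt (κ * cos θ) 0 with h | h
    · simp only [hW0 _ h]; simp
    · rw [abs_of_pos h]
  have hfs : ContDiff ℝ 1 f := by
    have hc : ContDiff ℝ 1 (fun θ : ℝ => κ * cos θ) := contDiff_const.mul contDiff_cos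
    have h1 : ContDiff ℝ 1 (fun θ : ℝ => (W (κ * cos θ) : ℂ)) := Complex.ofRealCLM.contDiff.comp (hW.comp hc)
    have h2 : ContDiff ℝ 1 (fun θ : ℝ => u0 ((κ * cos θ) • q2 θ)) := hu.comp (hc.smul (contDiff_q2.of_le (by norm_num)))
    exact (contDiff_const.mul h1).mul h2
  have hf0 : ∀ θ, cos θ ≤ 0 → f θ = 0 := by
    intro θ h
    simp only [hf]
    rw [hW0 _ (mul_nonpos_of_nonneg_of_nonpos hκ.le h)]; simp
  have hs := stat2 κ hκ f hfs hf0
  have hL : 2 * (π * Complex.I / (2 * κ : ℝ) : ℂ) ^ (1 / 2 : ℂ) * f 0 = u0 (κ • q2 0) := by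
    have hz : (2 * (π : ℂ) * Complex.I) ≠ 0 := by simp [pi_ne_zero]
    have e1 : (π * Complex.I / (2 * κ : ℝ) : ℂ) = ((1 / (4 * κ) : ℝ) : ℂ) * (2 * (π : ℂ) * Complex.I) := by
      have : (κ : ℂ) ≠ 0 := by exact_mod_cast hκ.ne'
      push_cast; field_simp; norm_num
    rw [e1, real_mul_cpow (by positivity) hz]
    simp only [hf, cos_zero, mul_one, hWκ]
    have e2 : (2 * (π : ℂ) * Complex.I) ^ (1/2 : ℂ) * (2 * (π : ℂ) * Complex.I) ^ (-((((2:ℕ) : ℂ) - 1) / 2)) = 1 := by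
      rw [← Complex.cpow_add _ _ hz]; norm_num
    have e3 : (((1 / (4 * κ) : ℝ) : ℂ)) ^ (1/2 : ℂ) = (((1/2) * κ ^ (-(1/2) : ℝ) : ℝ) : ℂ) := by
      have : (1 / 2 : ℂ) = ((1/2 : ℝ) : ℂ) := by push_cast; rfl
      rw [this, ← Complex.ofReal_cpow (by positivity)]
      congr 1
      rw [rpow_neg hκ.le, ← sqrt_eq_rpow, ← sqrt_eq_rpow]
      rw [sqrt_div (by norm_num), sqrt_mul (by norm_num), sqrt_one]
      rw [show (4:ℝ) = 2 ^ 2 by norm_num, sqrt_sq (by norm_num)]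
      field_simp
    have e4 : κ ^ (-(1/2) : ℝ) * κ ^ ((((2:ℕ) : ℝ) - 1) / 2) = 1 := by
      rw [← rpow_add hκ]; norm_num
    have e4' : ((κ ^ (-(1/2) : ℝ) : ℝ) : ℂ) * ((κ ^ ((((2:ℕ) : ℝ) - 1) / 2) : ℝ) : ℂ) = 1 := by
      rw [← Complex.ofReal_mul, e4, Complex.ofReal_one]
    rw [e3]
    calc _ = ((2 * (π : ℂ) * Complex.I) ^ (1/2 : ℂ) * (2 * (π : ℂ) * Complex.I) ^ (-((((2:ℕ) : ℂ) - 1) / 2))) *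
        (((κ ^ (-(1/2) : ℝ) : ℝ) : ℂ) * ((κ ^ ((((2:ℕ) : ℝ) - 1) / 2) : ℝ) : ℂ)) * u0 (κ • q2 0) := by push_cast; ring
      _ = _ := by rw [e2, e4']; ring
  rw [hL] at hs
  have hs2 := hs.sub_const (u0 (κ • q2 0))
  rw [sub_self] at hs2
  have hs3 : Tendsto (fun R : ℝ => Complex.exp (-Complex.I * R * κ) * (Complex.exp (Complex.I * ((R * κ : ℝ) : ℂ)) * ((sqrt R : ℝ) : ℂ) *
      (∫ θ in Set.Ioo (-π) π, Complex.exp (-Complex.I * R * ((κ * cos θ : ℝ) : ℂ)) * f θ) - u0 (κ • q2 0))) atTop (𝓝 0) := by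
    rw [tendsto_zero_iff_norm_tendsto_zero] at hs2 ⊢
    refine hs2.congr fun R => ?_
    rw [norm_mul, norm_exp_negIR, one_mul]
  have hs4 := h.add hs3
  rw [add_zero] at hs4
  refine hs4.congr fun R => ?_
  simp only [TT_zero, inner_q2, hfe]
  have e5 : (∫ θ in Set.Ioo (-π) π, ((1:ℝ) : ℂ) * (Complex.exp (-Complex.I * R * ((κ * cos θ : ℝ) : ℂ)) * (((R ^ ((((2:ℕ) : ℝ) - 1) / 2) : ℝ) : ℂ) * f θ))) =
     ((sqrt R : ℝ) : ℂ) * ∫ θ in Set.Ioo (-π) π, Complex.exp (-Complex.I * R * ((κ * cos θ : ℝ) : ℂ)) * f θ := by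
    rw [← integral_const_mul]
    congr 1; ext θ
    rw [sqrt_eq_rpow, show ((((2:ℕ) : ℝ) - 1) / 2) = 1/2 by norm_num]; push_cast; ring
  rw [e5]
  simp only [mul_zero, integral_zero, add_zero]
  linear_combination ((sqrt R : ℝ) : ℂ) * (∫ θ in Set.Ioo (-π) π, Complex.exp (-Complex.I * R * ((κ * cos θ : ℝ) : ℂ)) * f θ) * exp_cancel R κ

lemma lim3 (W : ℝ → ℝ) (u0 : EuclideanSpace ℝ (Fin 3) → ℂ) (M : ℝ) (hM0 : 0 ≤ M)
    (hW : ContDiff ℝ 2 W) (hu : ContDiff ℝ 2 u0)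
    (hW0 : ∀ ξ : ℝ, ξ ≤ 0 → W ξ = 0) (hM : ∀ x, M ≤ ‖x‖ → u0 x = 0)
    (C α : ℝ) (hC0 : 0 < C) (hα : 0 < α)
    (hC : ∀ z q, ‖q‖ = 1 → ‖Vp 3 W u0 M z q‖ ≤ C * (1 + |z|) ^ (-((3:ℕ) : ℝ) - α)) (τ κ : ℝ) (hκ : 0 < κ)
    (hWκ : W κ = κ ^ ((((3:ℕ) : ℝ) - 1) / 2)) :
    Tendsto (fun R : ℝ => Qr 3 W u0 τ (κ • q3 (0, 0)) R - Complex.exp (-Complex.I * R * κ) * u0 (κ • q3 (0, 0))) atTop (𝓝 0) := by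
  set m : Measure (ℝ × ℝ) := (volume.restrict (Set.Ioo (-π) π)).prod (volume.restrict (Set.Ioo 0 π)) with hm
  have hq3m : Measurable q3 := contDiff_q3.continuous.measurable
  have h := core 3 (by norm_num) W u0 M hM0 hW.continuous hu.continuous hW0 hM C α hC0 hα hC m q3 hq3m
    (fun p => sin p.2) (by fun_prop) (fun p => abs_sin_le_one _) norm_q3 polarF3 τ (κ • q3 (0, 0)) 2 3
    (by
      intro R hR z
      refine (D3 R (by linarith) z).trans ?_
      have h1 : R⁻¹ ≤ 1 := inv_le_one_of_one_le₀ hR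
      have h2 : 0 ≤ R⁻¹ := by positivity
      have := abs_nonneg z
      simp only [Nat.add_one_sub_one]
      have h3 : 3 * |z| ^ 2 * R⁻¹ ≤ 3 * |z| ^ 2 * 1 := mul_le_mul_of_nonneg_left h1 (by positivity)
      nlinarith) D3_lim (by
      intro z; rw [abs_mul]; simp only [Nat.add_one_sub_one, abs_two]
      have := abs_nonneg z
      nlinarith [sq_nonneg |z|])
  set f : ℝ → ℝ → ℂ := fun φ θ => (2 * (π : ℂ) * Complex.I) ^ (-((((3:ℕ) : ℂ) - 1) / 2)) * (W (κ * cos θ) : ℂ) * u0 ((κ * cos θ) • q3 (φ, θ)) with hf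
  have hfe : ∀ p : ℝ × ℝ, restrictionReg 3 W u0 (κ * cos p.2) (q3 p) = f p.1 p.2 := by
    intro p
    simp only [hf, restrictionReg]
    rcases le_or_gt (κ * cos p.2) 0 with h | h
    · simp only [hW0 _ h]; simp
    · rw [abs_of_pos h]
  have hfs : ContDiff ℝ 2 (fun p : ℝ × ℝ => f p.1 p.2) := by
    have hc : ContDiff ℝ 2 (fun p : ℝ × ℝ => κ * cos p.2) := contDiff_const.mul (contDiff_cos.comp contDiff_snd)
    have h1 : ContDiff ℝ 2 (fun p : ℝ × ℝ => (W (κ * cos p.2) : ℂ)) := Complex.ofRealCLM.contDiff.comp (hW.comp hc)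
    have h2 : ContDiff ℝ 2 (fun p : ℝ × ℝ => u0 ((κ * cos p.2) • q3 (p.1, p.2))) := hu.comp (hc.smul contDiff_q3)
    exact (contDiff_const.mul h1).mul h2
  set f' : ℝ → ℝ → ℂ := fun φ θ => fderiv ℝ (fun p : ℝ × ℝ => f p.1 p.2) (φ, θ) (0, 1) with hf'
  have hd1 : ∀ φ θ, HasDerivAt (f φ) (f' φ θ) θ := by
    intro φ θ
    have a := (hfs.differentiable (by norm_num) (φ, θ)).hasFDerivAt
    exact a.comp_hasDerivAt θ ((hasDerivAt_const θ φ).prodMk (hasDerivAt_id θ))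
  have hd2 : Continuous (Function.uncurry f') := by
    have a : Continuous (fun p : ℝ × ℝ => fderiv ℝ (fun p : ℝ × ℝ => f p.1 p.2) p) := hfs.continuous_fderiv (by norm_num)
    exact a.clm_apply continuous_const
  have hz : (2 * (π : ℂ) * Complex.I) ≠ 0 := by simp [pi_ne_zero]
  have hs := stat3 κ hκ f f' ((2 * (π : ℂ) * Complex.I)⁻¹ * κ * u0 (κ • q3 (0, 0))) hd1 hd2
    (by
      intro φ
      simp only [hf]
      rw [hW0 _ (by rw [cos_pi]; linarith)]; simp) (by
      intro φ
      simp only [hf, cos_zero, mul_one, hWκ]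
      have e1 : (-((((3:ℕ) : ℂ) - 1) / 2)) = -1 := by norm_num
      have e2 : ((((3:ℕ) : ℝ) - 1) / 2) = 1 := by norm_num
      have e3 : q3 (φ, 0) = q3 (0, 0) := by simp [q3]
      rw [e1, e2, e3, Complex.cpow_neg_one, rpow_one])
  have hA : 2 * π * Complex.I / κ * ((2 * (π : ℂ) * Complex.I)⁻¹ * κ * u0 (κ • q3 (0, 0))) = u0 (κ • q3 (0, 0)) := by
    have : (κ : ℂ) ≠ 0 := by exact_mod_cast hκ.ne'
    field_simp
  rw [hA] at hs
  -- second order term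
  set g : ℝ × ℝ → ℂ := TT (fun z p => Vp 3 W u0 M z (q3 p)) (fun p => κ * cos p.2) (fun z => 2 * z) with hg
  have hVm : Measurable (fun p : ℝ × (ℝ × ℝ) => Vp 3 W u0 M p.1 (q3 p.2)) :=
    measurable_Vp_comp 3 W u0 M hW.continuous hu.continuous _ _ measurable_fst (hq3m.comp measurable_snd)
  have hgm : StronglyMeasurable g := TT_meas hVm (by fun_prop) (by fun_prop)
  have hνi : Integrable (fun z : ℝ => |2 * z| * (C * (1 + |z|) ^ (-((3:ℕ) : ℝ) - α))) := by
    have := (integrable_one_add_norm (E := ℝ) (μ := volume) (r := 2 + α) (by simp; linarith)).const_mul (2 * C)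
    refine this.mono' (Measurable.aestronglyMeasurable (by fun_prop)) (Eventually.of_forall fun z => ?_)
    have hp : 0 < 1 + |z| := by positivity
    have e : (1 + |z|) ^ (-(2 + α)) = (1 + |z|) * (1 + |z|) ^ (-((3:ℕ) : ℝ) - α) := by
      nth_rewrite 2 [← rpow_one (1 + |z|)]
      rw [← rpow_add hp]; congr 1; push_cast; ring
    have hp2 : 0 < (1 + |z|) ^ (-((3:ℕ) : ℝ) - α) := by positivity
    rw [norm_of_nonneg (by positivity), Real.norm_eq_abs, e, abs_mul, abs_two]
    have : 0 ≤ C * (1 + |z|) ^ (-((3:ℕ) : ℝ) - α) := by positivity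
    nlinarith
  have hgb : ∀ p, ‖g p‖ ≤ ∫ z : ℝ, |2 * z| * (C * (1 + |z|) ^ (-((3:ℕ) : ℝ) - α)) :=
    fun p => TT_bound (ν := fun z => C * (1 + |z|) ^ (-((3:ℕ) : ℝ) - α)) (fun z p => hC z _ (norm_q3 p)) hνi p
  set Bg := ∫ z : ℝ, |2 * z| * (C * (1 + |z|) ^ (-((3:ℕ) : ℝ) - α)) with hBg
  have hb : ∀ (R : ℝ) (p : ℝ × ℝ), ‖(sin p.2 : ℂ) * (Complex.exp (-Complex.I * R * ((κ * cos p.2 : ℝ) : ℂ)) * g p)‖ ≤ Bg := by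
    intro R p
    rw [norm_mul, norm_mul, norm_exp_negIR, one_mul, Complex.norm_real]
    have a1 : ‖sin p.2‖ ≤ 1 := abs_sin_le_one _
    have a2 := mul_le_mul a1 (hgb p) (norm_nonneg _) zero_le_one
    linarith
  have hmm : ∀ R : ℝ, Measurable (fun p : ℝ × ℝ => (sin p.2 : ℂ) * (Complex.exp (-Complex.I * R * ((κ * cos p.2 : ℝ) : ℂ)) * g p)) := by
    intro R
    have := hgm.measurable
    fun_prop
  have hintg : ∀ R : ℝ, Integrable (fun p : ℝ × ℝ => (sin p.2 : ℂ) * (Complex.exp (-Complex.I * R * ((κ * cos p.2 : ℝ) : ℂ)) * g p)) m := by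
    intro R
    exact Integrable.of_bound (hmm R).aestronglyMeasurable Bg (Eventually.of_forall (hb R))
  have hs2 : Tendsto (fun R : ℝ => ∫ p, (sin p.2 : ℂ) * (Complex.exp (-Complex.I * R * ((κ * cos p.2 : ℝ) : ℂ)) * g p) ∂m) atTop (𝓝 0) := by
    have e : ∀ R : ℝ, ∫ p, (sin p.2 : ℂ) * (Complex.exp (-Complex.I * R * ((κ * cos p.2 : ℝ) : ℂ)) * g p) ∂m =
        ∫ φ in Set.Ioo (-π) π, ∫ θ in Set.Ioo 0 π, (sin θ : ℂ) * (Complex.exp (-Complex.I * R * ((κ * cos θ : ℝ) : ℂ)) * g (φ, θ)) := by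
      intro R
      rw [hm, integral_prod _ (hintg R)]
    simp_rw [e]
    have : (0:ℂ) = ∫ φ in Set.Ioo (-π) π, (0:ℂ) := by simp
    rw [this]
    refine tendsto_integral_filter_of_dominated_convergence (fun _ => ∫ θ in Set.Ioo 0 π, Bg) ?_ ?_ (integrable_const _) ?_
    · refine Eventually.of_forall fun R => ?_
      have := StronglyMeasurable.integral_prod_right' (ν := volume.restrict (Set.Ioo 0 π)) (hmm R).stronglyMeasurable
      exact this.aestronglyMeasurable
    · refine Eventually.of_forall fun R => Eventually.of_forall fun φ => ?_
      exact norm_integral_le_of_norm_le (integrable_const _) (Eventually.of_forall fun θ => hb R (φ, θ))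
    · refine Eventually.of_forall fun φ => ?_
      have := tendsto_cos_RL κ hκ (fun θ => (sin θ : ℂ) * g (φ, θ))
      refine this.congr fun R => ?_
      congr 1; ext θ; ring
  have hfin := (h.add hs).add hs2
  rw [add_zero, add_zero] at hfin
  refine hfin.congr fun R => ?_
  simp only [inner_q3, hfe]
  have hif : ∫ p, (sin p.2 : ℂ) * (Complex.exp (-Complex.I * R * ((κ * cos p.2 : ℝ) : ℂ)) * (((R ^ ((((3:ℕ) : ℝ) - 1) / 2) : ℝ) : ℂ) * f p.1 p.2)) ∂m =
      (R : ℂ) * (∫ φ in Set.Ioo (-π) π, ∫ θ in Set.Ioo 0 π, (sin θ : ℂ) *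
        (Complex.exp (-Complex.I * R * ((κ * cos θ : ℝ) : ℂ)) * f φ θ)) := by
    have hc : Continuous (fun p : ℝ × ℝ => (sin p.2 : ℂ) * (Complex.exp (-Complex.I * R * ((κ * cos p.2 : ℝ) : ℂ)) * f p.1 p.2)) := by
      have := hfs.continuous
      fun_prop
    have hi : Integrable (fun p : ℝ × ℝ => (sin p.2 : ℂ) * (Complex.exp (-Complex.I * R * ((κ * cos p.2 : ℝ) : ℂ)) * f p.1 p.2)) m := by
      rw [hm, Measure.prod_restrict]
      exact (hc.continuousOn.integrableOn_compact (isCompact_Icc.prod isCompact_Icc)).mono_set (Set.prod_mono Set.Ioo_subset_Icc_self Set.Ioo_subset_Icc_self)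
    rw [← integral_prod (fun p : ℝ × ℝ => (sin p.2 : ℂ) * (Complex.exp (-Complex.I * R * ((κ * cos p.2 : ℝ) : ℂ)) * f p.1 p.2)) hi, ← integral_const_mul]
    congr 1; ext p
    rw [show ((((3:ℕ) : ℝ) - 1) / 2) = 1 by norm_num, rpow_one]; ring
  rw [hif]
  ring

/-! Part 7: rotation and conclusion -/

lemma exists_rot {d : ℕ} (v w : EuclideanSpace ℝ (Fin d)) (h : ‖v‖ = ‖w‖) :
    ∃ A : EuclideanSpace ℝ (Fin d) ≃ₗᵢ[ℝ] EuclideanSpace ℝ (Fin d), A v = w :=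
  ⟨_, Submodule.reflection_sub h⟩

lemma Vp_rot (d : ℕ) (W : ℝ → ℝ) (u0 : EuclideanSpace ℝ (Fin d) → ℂ) (M : ℝ)
    (A : EuclideanSpace ℝ (Fin d) ≃ₗᵢ[ℝ] EuclideanSpace ℝ (Fin d)) (z : ℝ) (q : EuclideanSpace ℝ (Fin d)) :
    Vp d W (fun x => u0 (A x)) M z q = Vp d W u0 M z (A q) := by
  simp only [Vp, restrictionReg, map_smul]

lemma Qr_rot (d : ℕ) (W : ℝ → ℝ) (u0 : EuclideanSpace ℝ (Fin d) → ℂ)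
    (A : EuclideanSpace ℝ (Fin d) ≃ₗᵢ[ℝ] EuclideanSpace ℝ (Fin d)) (τ : ℝ) (k : EuclideanSpace ℝ (Fin d)) (R : ℝ) :
    Qr d W (fun x => u0 (A x)) τ k R = Qr d W u0 τ (A k) R := by
  unfold Qr fourierD
  have hm := A.measurePreserving
  symm
  rw [← hm.integral_comp A.toMeasurableEquiv.measurableEmbedding]
  congr 1; ext x
  have e1 : ∀ (z : ℝ) (q : EuclideanSpace ℝ (Fin d)), profileReg d (fun _ => 0) W (fun x => u0 (A x)) z q τ = profileReg d (fun _ => 0) W u0 z (A q) τ := by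
    intro z q
    simp only [profileReg, restrictionReg, map_smul]
  have e2 : Set.indicator {y : EuclideanSpace ℝ (Fin d) | ‖y‖ < 2 * R} (fun _ => (1 : ℝ)) (A x) =
      Set.indicator {y : EuclideanSpace ℝ (Fin d) | ‖y‖ < 2 * R} (fun _ => (1 : ℝ)) x := by
    by_cases hx : ‖x‖ < 2 * R
    · rw [Set.indicator_of_mem (show x ∈ {y : EuclideanSpace ℝ (Fin d) | ‖y‖ < 2 * R} from hx),
        Set.indicator_of_mem (show A x ∈ {y : EuclideanSpace ℝ (Fin d) | ‖y‖ < 2 * R} by simpa using hx)]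
    · rw [Set.indicator_of_notMem (show x ∉ {y : EuclideanSpace ℝ (Fin d) | ‖y‖ < 2 * R} from hx),
        Set.indicator_of_notMem (show A x ∉ {y : EuclideanSpace ℝ (Fin d) | ‖y‖ < 2 * R} by simpa using hx)]
  beta_reduce
  rw [e1, e2, A.norm_map, A.inner_map_map, map_smul]

lemma lim_all (d : ℕ) (hd : d = 1 ∨ d = 2 ∨ d = 3) (W : ℝ → ℝ) (u0 : EuclideanSpace ℝ (Fin d) → ℂ) (M : ℝ) (hM0 : 0 ≤ M)
    (hW : ContDiff ℝ (d - 1 : ℕ) W) (hu : ContDiff ℝ (⊤ : ℕ∞) u0)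
    (hW0 : ∀ ξ : ℝ, ξ ≤ 0 → W ξ = 0) (hM : ∀ x, M ≤ ‖x‖ → u0 x = 0)
    (C α : ℝ) (hC0 : 0 < C) (hα : 0 < α)
    (hC : ∀ z q, ‖q‖ = 1 → ‖Vp d W u0 M z q‖ ≤ C * (1 + |z|) ^ (-(d : ℝ) - α)) (τ : ℝ) (k : EuclideanSpace ℝ (Fin d)) (hκ : 0 < ‖k‖)
    (hWκ : W ‖k‖ = ‖k‖ ^ (((d : ℝ) - 1) / 2)) :
    Tendsto (fun R : ℝ => Qr d W u0 τ k R - Complex.exp (-Complex.I * R * ‖k‖) * u0 k) atTop (𝓝 0) := by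
  have key : ∀ A : EuclideanSpace ℝ (Fin d) ≃ₗᵢ[ℝ] EuclideanSpace ℝ (Fin d),
      (ContDiff ℝ (⊤ : ℕ∞) fun x => u0 (A x)) ∧ (∀ x, M ≤ ‖x‖ → u0 (A x) = 0) ∧
      (∀ z q, ‖q‖ = 1 → ‖Vp d W (fun x => u0 (A x)) M z q‖ ≤ C * (1 + |z|) ^ (-(d : ℝ) - α)) := by
    intro A
    refine ⟨hu.comp A.contDiff, fun x hx => hM _ (by rwa [A.norm_map]), fun z q hq => ?_⟩
    rw [Vp_rot]
    exact hC z _ (by rwa [A.norm_map])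
  rcases hd with rfl | rfl | rfl
  · obtain ⟨A, hA⟩ := exists_rot (‖k‖ • q1 true) k (by rw [norm_smul, norm_q1]; simp)
    obtain ⟨h1, h2, h3⟩ := key A
    have := lim1 W (fun x => u0 (A x)) M hM0 hW.continuous h1.continuous hW0 h2 C α hC0 hα h3 τ ‖k‖ hκ hWκ
    simp only [Qr_rot, hA] at this
    exact this
  · obtain ⟨A, hA⟩ := exists_rot (‖k‖ • q2 0) k (by rw [norm_smul, norm_q2]; simp)
    obtain ⟨h1, h2, h3⟩ := key A
    have := lim2 W (fun x => u0 (A x)) M hM0 (by exact_mod_cast hW) (h1.of_le (by exact_mod_cast le_top)) hW0 h2 C α hC0 hα h3 τ ‖k‖ hκ hWκ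
    simp only [Qr_rot, hA] at this
    exact this
  · obtain ⟨A, hA⟩ := exists_rot (‖k‖ • q3 (0, 0)) k (by rw [norm_smul, norm_q3]; simp)
    obtain ⟨h1, h2, h3⟩ := key A
    have := lim3 W (fun x => u0 (A x)) M hM0 (by exact_mod_cast hW) (contDiff_infty.1 h1 2) hW0 h2 C α hC0 hα h3 τ ‖k‖ hκ hWκ
    simp only [Qr_rot, hA] at this
    exact this

/-- simplified main theorem: for smooth compactly supported `û₀`, the
regularized reconstruction with trivial profile evolution (`b = 0`) approximates the wave
evolution: for `|k| > ρ`, `(Q̂₀^ρ û₀)(k, τ/ε²) - e^{-ic|k|τ/ε²} û₀(k) → 0` as `ε → 0`. -/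
theorem reconstruction_simple (d : ℕ) (hd : d = 1 ∨ d = 2 ∨ d = 3) (c : ℝ) (hc : 0 < c)
    (u0 : EuclideanSpace ℝ (Fin d) → ℂ)
    (hu0_smooth : ContDiff ℝ (⊤ : ℕ∞) u0) (hu0_supp : HasCompactSupport u0)
    (ρ : ℝ) (hρ : 0 < ρ) (Wρ : ℝ → ℝ)
    (hW_smooth : ContDiff ℝ (d - 1 : ℕ) Wρ)
    (hW_zero : ∀ ξ : ℝ, ξ ≤ 0 → Wρ ξ = 0)
    (hW_eq : ∀ ξ : ℝ, ρ ≤ ξ → Wρ ξ = ξ ^ (((d : ℝ) - 1) / 2))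
    (hW_le : ∀ ξ : ℝ, 0 ≤ ξ → 0 ≤ Wρ ξ ∧ Wρ ξ ≤ ξ ^ (((d : ℝ) - 1) / 2))
    (hdecay : ∃ C > (0 : ℝ), ∃ α > (0 : ℝ),
      ∀ (z : ℝ) (q : EuclideanSpace ℝ (Fin d)) (τ : ℝ), ‖q‖ = 1 → 0 < τ →
        ‖profileReg d (fun _ => 0) Wρ u0 z q τ‖ ≤ C * (1 + |z|) ^ (-(d : ℝ) - α))
    (hsmooth : ∀ τ : ℝ, 0 < τ → ∃ G : ℝ × EuclideanSpace ℝ (Fin d) → ℂ,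
      ContDiff ℝ (d - 1 : ℕ) G ∧
        ∀ (ξ : ℝ) (q : EuclideanSpace ℝ (Fin d)), ‖q‖ = 1 →
          G (ξ, q) = fourier1 (fun z => profileReg d (fun _ => 0) Wρ u0 z q τ) ξ)
    (τ : ℝ) (hτ : 0 < τ) (k : EuclideanSpace ℝ (Fin d)) (hk : ρ < ‖k‖) :
    Filter.Tendsto (fun ε : ℝ =>
        QhatReg d c (fun _ => 0) Wρ u0 ε k (τ / ε ^ 2) -
          Complex.exp (-Complex.I * (c : ℂ) * (‖k‖ : ℂ) * (τ : ℂ) / (ε : ℂ) ^ 2) * u0 k)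
      (𝓝[>] (0 : ℝ)) (𝓝 0) := by
  obtain ⟨C, hC0, α, hα, hC⟩ := hdecay
  obtain ⟨M, hM0, hM⟩ := hu0_supp.exists_pos_le_norm
  have hC' : ∀ z q, ‖q‖ = 1 → ‖Vp d Wρ u0 M z q‖ ≤ C * (1 + |z|) ^ (-(d : ℝ) - α) := by
    intro z q hq
    rw [← profile_eq d Wρ u0 M hM0.le hW_zero hM q hq z 1]
    exact hC z q 1 hq one_pos
  have h := lim_all d hd Wρ u0 M hM0.le hW_smooth hu0_smooth hW_zero hM C α hC0 hα hC' τ k (hρ.trans hk) (hW_eq _ hk.le)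
  have hR : Tendsto (fun ε : ℝ => c * (τ / ε ^ 2)) (𝓝[>] (0:ℝ)) atTop := by
    refine Tendsto.const_mul_atTop hc ?_
    simp only [div_eq_mul_inv]
    refine Tendsto.const_mul_atTop hτ ?_
    have h1 := (tendsto_pow_atTop (α := ℝ) two_ne_zero).comp tendsto_inv_nhdsGT_zero
    refine h1.congr fun ε => ?_
    simp
  refine (h.comp hR).congr' ?_
  filter_upwards [self_mem_nhdsWithin] with ε hε
  have hε0 : ε ≠ 0 := (ne_of_gt hε)
  have e1 : QhatReg d c (fun _ => 0) Wρ u0 ε k (τ / ε ^ 2) = Qr d Wρ u0 τ k (c * (τ / ε ^ 2)) := by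
    unfold QhatReg Qr
    rw [mul_div_cancel₀ _ (pow_ne_zero 2 hε0), mul_assoc]
  simp only [Function.comp]
  rw [e1]
  congr 3
  push_cast; ring

end
end

section
/- Let d ∈ {1,2,3}, let κ ∈ S^{d-1}, and let φ ∈ C¹(S^{d-1}; ℝ) be supported in the half-sphere {q ∈ S^{d-1} : q·κ ≥ 0}. Then the oscillatory integrals A^N_φ := (2πi)^{-(d-1)/2} ∫_{S^{d-1}} N^{(d-1)/2} e^{i(1 − q·κ)N} φ(q) dS(q) converge to φ(κ) as N → ∞. -/
open MeasureTheory Real Filter Metric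
open scoped RealInnerProductSpace Topology

noncomputable section

section Helpers

lemma fresnel_aux : ∃ F : ℝ → ℂ, (∀ R : ℝ, HasDerivAt F (Complex.exp (Complex.I * ((R : ℂ) ^ 2 / 2))) R) ∧
    F 0 = 0 ∧ Tendsto F atTop (𝓝 ((1 + Complex.I) * ((√π / 2 : ℝ) : ℂ))) ∧
    ∃ C, ∀ R : ℝ, 0 ≤ R → ‖F R‖ ≤ C := by
  have hd : Differentiable ℂ (fun z : ℂ => Complex.exp (Complex.I * (z ^ 2 / 2))) := by fun_prop
  obtain ⟨P, hP⟩ := hd.isExactOn_univ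
  have hP' : ∀ z, HasDerivAt P (Complex.exp (Complex.I * (z ^ 2 / 2))) z := fun z => hP z trivial
  have hderiv : ∀ R : ℝ, HasDerivAt (fun R : ℝ => P R - P 0)
      (Complex.exp (Complex.I * ((R : ℂ) ^ 2 / 2))) R := fun R =>
    ((hP' (R : ℂ)).comp_ofReal).sub_const _
  have hlim : Tendsto (fun R : ℝ => P R - P 0) atTop
      (𝓝 ((1 + Complex.I) * ((√π / 2 : ℝ) : ℂ))) := by
    have h1 : Tendsto (fun R : ℝ => P ((1 + Complex.I) * R) - P 0) atTop
        (𝓝 ((1 + Complex.I) * ((√π / 2 : ℝ) : ℂ))) := by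
      have hi : Tendsto (fun R : ℝ => ∫ t in (0:ℝ)..R, rexp (-1 * t ^ 2)) atTop (𝓝 (√π / 2)) := by
        have := intervalIntegral_tendsto_integral_Ioi (μ := volume) 0
          (integrable_exp_neg_mul_sq (b := 1) one_pos).integrableOn tendsto_id
        rw [integral_gaussian_Ioi] at this
        simpa using this
      have hi2 := ((Complex.continuous_ofReal.tendsto _).comp hi).const_mul (1 + Complex.I)
      refine hi2.congr fun R => ?_
      simp only [Function.comp_apply]
      rw [← intervalIntegral.integral_ofReal, ← intervalIntegral.integral_const_mul]
      rw [intervalIntegral.integral_eq_sub_of_hasDerivAt (f := fun t : ℝ => P ((1 + Complex.I) * t))]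
      · simp
      · intro t _
        have h2 : HasDerivAt (fun z : ℂ => (1 + Complex.I) * z) (1 + Complex.I) (t : ℂ) := by
          simpa using (hasDerivAt_id (t : ℂ)).const_mul (1 + Complex.I)
        have h3 := ((hP' ((1 + Complex.I) * t)).comp (t : ℂ) h2).comp_ofReal
        refine h3.congr_deriv (Eq.symm ?_)
        rw [mul_comm]
        congr 1
        rw [Complex.ofReal_exp]
        congr 1
        push_cast
        linear_combination (-(t:ℂ)^2 * (1 + Complex.I / 2)) * Complex.I_sq
      · apply Continuous.intervalIntegrable
        fun_prop
    have h2 : Tendsto (fun R : ℝ => P ((1 + Complex.I) * R) - P R) atTop (𝓝 0) := by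
      apply squeeze_zero_norm' (a := fun R : ℝ => R⁻¹) _ tendsto_inv_atTop_zero
      filter_upwards [eventually_gt_atTop 0] with R hR
      have e : P ((1 + Complex.I) * R) - P R =
          ∫ y in (0:ℝ)..R, Complex.exp (Complex.I * (((R : ℂ) + y * Complex.I) ^ 2 / 2)) * Complex.I := by
        rw [intervalIntegral.integral_eq_sub_of_hasDerivAt
          (f := fun t : ℝ => P ((R : ℂ) + t * Complex.I))]
        · simp; ring_nf
        · intro t _
          have h2 : HasDerivAt (fun z : ℂ => (R : ℂ) + z * Complex.I) (Complex.I) (t : ℂ) := by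
            simpa using ((hasDerivAt_id (t : ℂ)).mul_const (Complex.I)).const_add (R : ℂ)
          exact ((hP' ((R : ℂ) + t * Complex.I)).comp (t : ℂ) h2).comp_ofReal
        · apply Continuous.intervalIntegrable
          fun_prop
      rw [e]
      have hb : ∀ y : ℝ, ‖Complex.exp (Complex.I * (((R : ℂ) + y * Complex.I) ^ 2 / 2)) * Complex.I‖
          = rexp (-R * y) := by
        intro y
        rw [norm_mul, Complex.norm_I, mul_one, Complex.norm_exp]
        congr 1
        have : Complex.I * (((R : ℂ) + y * Complex.I) ^ 2 / 2) =
          ((-R * y : ℝ) : ℂ) + (((R ^ 2 - y ^ 2) / 2 : ℝ) : ℂ) * Complex.I := by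
          push_cast
          linear_combination (R * y + y ^ 2 / 2 * Complex.I : ℂ) * Complex.I_sq
        rw [this, Complex.add_re, Complex.ofReal_re, Complex.re_ofReal_mul]; simp
      refine (intervalIntegral.norm_integral_le_integral_norm hR.le).trans ?_
      simp_rw [hb]
      rw [intervalIntegral.integral_eq_sub_of_hasDerivAt
          (f := fun t : ℝ => - R⁻¹ * rexp (-R * t))]
      · have : 0 < R⁻¹ * rexp (-R * R) := by positivity
        simp
        have := this.le
        simpa using this
      · intro t _
        have h2 : HasDerivAt (fun z : ℝ => -R * z) (-R) t := by
          simpa using (hasDerivAt_id t).const_mul (-R)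
        refine ((h2.exp).const_mul (-R⁻¹)).congr_deriv ?_
        field_simp
      · apply Continuous.intervalIntegrable
        fun_prop
    have := h1.sub h2
    simpa using this
  refine ⟨fun R => P R - P 0, hderiv, by simp, hlim, ?_⟩
  have hc : Continuous (fun R : ℝ => P R - P 0) :=
    continuous_iff_continuousAt.2 fun R => (hderiv R).continuousAt
  have h1 : ∀ᶠ R in atTop, ‖P (R : ℝ) - P 0‖ < ‖((1 + Complex.I) * ((√π / 2 : ℝ) : ℂ))‖ + 1 :=
    hlim.norm.eventually_lt_const (by linarith)
  obtain ⟨M, hM⟩ := eventually_atTop.1 h1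
  obtain ⟨C, hC⟩ := (isCompact_Icc (a := (0:ℝ)) (b := M)).exists_bound_of_continuousOn hc.continuousOn
  refine ⟨max C (‖((1 + Complex.I) * ((√π / 2 : ℝ) : ℂ))‖ + 1), fun R hR => ?_⟩
  rcases le_total R M with h | h
  · exact (hC R ⟨hR, h⟩).trans (le_max_left _ _)
  · exact (hM R h).le.trans (le_max_right _ _)

lemma stat_phase_one (ψ : ℝ → ℂ) (hψ : ContDiff ℝ 1 ψ) :
    Tendsto (fun N : ℝ => ((√N : ℝ) : ℂ) *
      ∫ θ in (0:ℝ)..(π/2), Complex.exp (Complex.I * ((1 - cos θ : ℝ) : ℂ) * (N : ℂ)) * ψ θ) atTop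
      (𝓝 ((1 + Complex.I) * ((√π / 2 : ℝ) : ℂ) * ψ 0)) := by
  obtain ⟨F, hF, hF0, hFlim, C, hC⟩ := fresnel_aux
  set L : ℂ := (1 + Complex.I) * ((√π / 2 : ℝ) : ℂ)
  have hcpos : ∀ θ ∈ Set.Icc (0:ℝ) (π/2), 0 < cos (θ/2) := fun θ hθ =>
    cos_pos_of_mem_Ioo ⟨by linarith [hθ.1, pi_pos], by linarith [hθ.2, pi_pos]⟩
  have hspos : ∀ θ ∈ Set.Ioc (0:ℝ) (π/2), 0 < sin (θ/2) := fun θ hθ =>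
    sin_pos_of_pos_of_lt_pi (by linarith [hθ.1]) (by linarith [hθ.2, pi_pos])
  have huIcc : Set.uIcc (0:ℝ) (π/2) = Set.Icc 0 (π/2) := Set.uIcc_of_le (by positivity)
  let g : ℝ → ℂ := fun θ => ψ θ * ((cos (θ/2))⁻¹ : ℝ)
  let g' : ℝ → ℂ := fun θ => deriv ψ θ * ((cos (θ/2))⁻¹ : ℝ) +
    ψ θ * ((sin (θ/2) / 2 / (cos (θ/2)) ^ 2 : ℝ) : ℂ)
  have hψd : Continuous (deriv ψ) := hψ.continuous_deriv le_rfl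
  have hg : ∀ θ ∈ Set.Icc (0:ℝ) (π/2), HasDerivAt g (g' θ) θ := by
    intro θ hθ
    have h1 : HasDerivAt (fun x : ℝ => x / 2) (1/2) θ := (hasDerivAt_id θ).div_const 2
    have h2 := (h1.cos.inv (hcpos θ hθ).ne').ofReal_comp
    have h3 := ((hψ.differentiable one_ne_zero θ).hasDerivAt).mul h2
    refine h3.congr_deriv (Eq.symm ?_)
    simp only [g']
    congr 3
    ring
  have hg'c : ContinuousOn g' (Set.Icc 0 (π/2)) := by
    simp only [g']
    refine ContinuousOn.add (hψd.continuousOn.mul ?_) (hψ.continuous.continuousOn.mul ?_)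
    · refine Complex.continuous_ofReal.comp_continuousOn (ContinuousOn.inv₀ (by fun_prop) fun θ hθ => (hcpos θ hθ).ne')
    · refine Complex.continuous_ofReal.comp_continuousOn (ContinuousOn.div (by fun_prop) (by fun_prop) fun θ hθ => (pow_pos (hcpos θ hθ) 2).ne')
  have hg'i : IntervalIntegrable g' volume 0 (π/2) := ContinuousOn.intervalIntegrable (by rwa [huIcc])
  let v : ℝ → ℝ → ℂ := fun N θ => F (√N * (2 * sin (θ/2)))
  have hvd : ∀ N θ : ℝ, 0 ≤ N → HasDerivAt (v N) ((√N : ℝ) *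
      Complex.exp (Complex.I * ((1 - cos θ : ℝ) : ℂ) * (N : ℂ)) * (cos (θ/2) : ℝ)) θ := by
    intro N θ hN
    have h1 : HasDerivAt (fun x : ℝ => x / 2) (1/2) θ := (hasDerivAt_id θ).div_const 2
    have h2 : HasDerivAt (fun x : ℝ => √N * (2 * sin (x/2))) (√N * cos (θ/2)) θ := by
      refine ((h1.sin.const_mul 2).const_mul √N).congr_deriv ?_
      ring
    have h3 := (hF (√N * (2 * sin (θ/2)))).scomp θ h2
    refine h3.congr_deriv (Eq.symm ?_)
    rw [Complex.real_smul]
    have : ((√N * (2 * sin (θ/2)) : ℝ) : ℂ) ^ 2 / 2 = ((1 - cos θ : ℝ) : ℂ) * (N : ℂ) := by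
      norm_cast
      have e1 : cos θ = 1 - 2 * sin (θ/2) ^ 2 := by
        rw [← cos_sq_add_sin_sq (θ/2), show cos θ = cos (2 * (θ/2)) by ring_nf, cos_two_mul]
        linarith [cos_sq_add_sin_sq (θ/2)]
      rw [mul_pow, sq_sqrt hN, e1]; ring
    rw [this]
    push_cast; ring_nf
  have hkey : ∀ N : ℝ, 0 ≤ N → ((√N : ℝ) : ℂ) *
      ∫ θ in (0:ℝ)..(π/2), Complex.exp (Complex.I * ((1 - cos θ : ℝ) : ℂ) * (N : ℂ)) * ψ θ =
      g (π/2) * v N (π/2) - ∫ θ in (0:ℝ)..(π/2), g' θ * v N θ := by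
    intro N hN
    have := intervalIntegral.integral_mul_deriv_eq_deriv_mul (a := 0) (b := π/2) (u := g) (v := v N)
      (u' := g') (v' := fun θ => ((√N : ℝ) *
      Complex.exp (Complex.I * ((1 - cos θ : ℝ) : ℂ) * (N : ℂ)) * (cos (θ/2) : ℝ)))
      (fun x hx => hg x (huIcc ▸ hx)) (fun x _ => hvd N x hN) hg'i
      (Continuous.intervalIntegrable (by fun_prop) _ _)
    have h0 : v N 0 = 0 := by simp [v, hF0]
    rw [h0, mul_zero, sub_zero] at this
    rw [← this, ← intervalIntegral.integral_const_mul]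
    apply intervalIntegral.integral_congr
    intro θ hθ
    have hp := (hcpos θ (huIcc ▸ hθ)).ne'
    have hp' : ((cos (θ/2) : ℝ) : ℂ) ≠ 0 := by exact_mod_cast hp
    simp only [g]
    rw [Complex.ofReal_inv]
    field_simp
  have hvlim : ∀ θ ∈ Set.Ioc (0:ℝ) (π/2), Tendsto (fun N => v N θ) atTop (𝓝 L) := by
    intro θ hθ
    refine hFlim.comp ?_
    exact Tendsto.atTop_mul_const (by linarith [hspos θ hθ]) tendsto_sqrt_atTop
  have hvb : ∀ N, ∀ θ ∈ Set.Ioc (0:ℝ) (π/2), ‖v N θ‖ ≤ C := fun N θ hθ =>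
    hC _ (by have := hspos θ hθ; positivity)
  have hint : Tendsto (fun N => ∫ θ in (0:ℝ)..(π/2), g' θ * v N θ) atTop
      (𝓝 (∫ θ in (0:ℝ)..(π/2), g' θ * L)) := by
    apply intervalIntegral.tendsto_integral_filter_of_dominated_convergence (fun θ => ‖g' θ‖ * C)
    · filter_upwards [eventually_ge_atTop 0] with N hN
      rw [Set.uIoc_of_le (by positivity)]
      refine ContinuousOn.aestronglyMeasurable ?_ measurableSet_Ioc
      refine (hg'c.mono Set.Ioc_subset_Icc_self).mul fun θ _ => ?_
      exact (hvd N θ hN).continuousAt.continuousWithinAt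
    · filter_upwards with N
      filter_upwards with θ hθ
      rw [Set.uIoc_of_le (by positivity)] at hθ
      rw [norm_mul]
      exact mul_le_mul_of_nonneg_left (hvb N θ hθ) (norm_nonneg _)
    · exact hg'i.norm.mul_const C
    · filter_upwards with θ hθ
      rw [Set.uIoc_of_le (by positivity)] at hθ
      exact (hvlim θ hθ).const_mul _
  have hfin := ((hvlim (π/2) ⟨by positivity, le_rfl⟩).const_mul (g (π/2))).sub hint
  have hval : g (π/2) * L - ∫ θ in (0:ℝ)..(π/2), g' θ * L = L * ψ 0 := by
    rw [intervalIntegral.integral_mul_const, intervalIntegral.integral_eq_sub_of_hasDerivAt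
      (fun x hx => hg x (huIcc ▸ hx)) hg'i]
    simp [g]; ring
  rw [hval] at hfin
  refine hfin.congr' ?_
  filter_upwards [eventually_ge_atTop 0] with N hN
  exact (hkey N hN).symm


open scoped FourierTransform Pointwise ENNReal

lemma rl_cos (h : ℝ → ℂ) : Tendsto (fun N : ℝ =>
    ∫ θ in (0:ℝ)..(π/2), Complex.exp (Complex.I * ((1 - cos θ : ℝ) : ℂ) * (N : ℂ)) * h θ) atTop (𝓝 0) := by
  set s : Set ℝ := Set.Ioc 0 (π/2)
  have hsub : s ⊆ Set.Icc 0 π := fun x hx => ⟨hx.1.le, by linarith [hx.2, pi_pos]⟩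
  have hinj : Set.InjOn cos s := Real.injOn_cos.mono hsub
  have hmeas : MeasurableSet (cos '' s) :=
    measurableSet_Ioc.image_of_continuousOn_injOn continuous_cos.continuousOn hinj
  let f : ℝ → ℂ := (cos '' s).indicator fun y => ((sin (arccos y))⁻¹ : ℝ) • h (arccos y)
  have h1 := Real.tendsto_integral_exp_smul_cocompact f
  have h2 : Tendsto (fun N : ℝ => N / (2 * π)) atTop (cocompact ℝ) :=
    (tendsto_id.atTop_div_const (by positivity)).mono_right atTop_le_cocompact
  have h3 := (h1.comp h2).norm
  rw [norm_zero] at h3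
  apply squeeze_zero_norm (fun N => le_of_eq ?_) h3
  simp only [Function.comp_apply]
  have e1 : ∫ v : ℝ, 𝐞 (-(v * (N / (2 * π)))) • f v =
      ∫ v in cos '' s, 𝐞 (-(v * (N / (2 * π)))) • (((sin (arccos v))⁻¹ : ℝ) • h (arccos v)) := by
    rw [← integral_indicator hmeas]
    congr 1
    ext v
    by_cases hv : v ∈ cos '' s <;> simp [f, hv]
  rw [e1, integral_image_eq_integral_abs_deriv_smul measurableSet_Ioc
    (fun x _ => (hasDerivAt_cos x).hasDerivWithinAt) hinj]
  have e2 : ∫ θ in (0:ℝ)..(π/2), Complex.exp (Complex.I * ((1 - cos θ : ℝ) : ℂ) * (N : ℂ)) * h θ =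
     Complex.exp ((N : ℝ) * Complex.I) * ∫ x in s, |-sin x| •
      𝐞 (-(cos x * (N / (2 * π)))) • (((sin (arccos (cos x)))⁻¹ : ℝ) • h (arccos (cos x))) := by
    rw [intervalIntegral.integral_of_le (by positivity), ← integral_const_mul]
    apply setIntegral_congr_fun measurableSet_Ioc
    intro x hx
    have hs : 0 < sin x := sin_pos_of_pos_of_lt_pi hx.1 (by linarith [hx.2, pi_pos])
    have hs' : ((sin x : ℝ) : ℂ) ≠ 0 := by exact_mod_cast hs.ne'
    have : arccos (cos x) = x := arccos_cos hx.1.le (by linarith [hx.2, pi_pos])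
    simp only
    rw [this, abs_neg, abs_of_pos hs, Circle.smul_def, Real.fourierChar_apply]
    simp only [Complex.real_smul, smul_eq_mul]
    have e3 : Complex.exp (Complex.I * ((1 - cos x : ℝ) : ℂ) * (N : ℂ)) =
      Complex.exp ((N : ℝ) * Complex.I) * Complex.exp (((2 * π * -(cos x * (N / (2 * π))) : ℝ) : ℂ) * Complex.I) := by
      rw [← Complex.exp_add]
      congr 1
      have : (π : ℂ) ≠ 0 := by exact_mod_cast pi_ne_zero
      push_cast
      field_simp
      ring
    rw [e3, Complex.ofReal_inv]
    field_simp
  rw [e2, norm_mul, Complex.norm_exp_ofReal_mul_I, one_mul]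

lemma stat_phase_two_aux (ψ : ℝ → ℂ) (hψ : ContDiff ℝ 1 ψ) (h0 : ψ (π/2) = 0) (N : ℝ) :
    (N : ℂ) *
      ∫ θ in (0:ℝ)..(π/2), Complex.exp (Complex.I * ((1 - cos θ : ℝ) : ℂ) * (N : ℂ)) * ((sin θ : ℝ) * ψ θ)
     = Complex.I * (ψ 0 + ∫ θ in (0:ℝ)..(π/2), Complex.exp (Complex.I * ((1 - cos θ : ℝ) : ℂ) * (N : ℂ)) * deriv ψ θ) := by
  have hψd : Continuous (deriv ψ) := hψ.continuous_deriv le_rfl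
  have hv : ∀ θ : ℝ, HasDerivAt (fun θ : ℝ => -Complex.I * Complex.exp (Complex.I * ((1 - cos θ : ℝ) : ℂ) * (N : ℂ)))
      (N * Complex.exp (Complex.I * ((1 - cos θ : ℝ) : ℂ) * (N : ℂ)) * (sin θ : ℝ)) θ := by
    intro θ
    have h1 : HasDerivAt (fun θ : ℝ => ((1 - cos θ : ℝ) : ℂ)) ((sin θ : ℝ) : ℂ) θ := by
      have := ((hasDerivAt_cos θ).const_sub 1).ofReal_comp
      simpa using this
    refine ((((h1.const_mul Complex.I).mul_const (N : ℂ)).cexp).const_mul (-Complex.I)).congr_deriv ?_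
    linear_combination (-(N * Complex.exp (Complex.I * ((1 - cos θ : ℝ) : ℂ) * (N : ℂ)) * (sin θ : ℝ))) * Complex.I_sq
  have := intervalIntegral.integral_mul_deriv_eq_deriv_mul (a := 0) (b := π/2) (u := ψ)
      (u' := deriv ψ) 
      (fun x _ => (hψ.differentiable one_ne_zero x).hasDerivAt) (fun x _ => hv x) (hψd.intervalIntegrable _ _)
      (Continuous.intervalIntegrable (by fun_prop) _ _)
  rw [h0] at this
  rw [← intervalIntegral.integral_const_mul, mul_add, ← intervalIntegral.integral_const_mul]
  calc _ = _ := by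
        apply intervalIntegral.integral_congr
        intro x _
        simp only
        ring
    _ = _ := this
    _ = _ := by
      simp only [cos_zero, sub_self, Complex.ofReal_zero, mul_zero, zero_mul, Complex.exp_zero, zero_sub]
      rw [sub_eq_add_neg, ← intervalIntegral.integral_neg]
      congr 1
      · ring
      apply intervalIntegral.integral_congr
      intro x _
      simp only
      ring


lemma cone_mem {E : Type*} [NormedAddCommGroup E] [NormedSpace ℝ E]
    (s : Set (sphere (0 : E) 1)) (u : sphere (0 : E) 1) (r : ℝ) (hr : 0 < r) :
    r • (u : E) ∈ Set.Ioo (0:ℝ) 1 • ((↑) '' s : Set E) ↔ (r < 1 ∧ u ∈ s) := by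
  constructor
  · rintro ⟨t, ht, _, ⟨w, hw, rfl⟩, h⟩
    have hn := congrArg norm h
    have h1 : ‖(w : E)‖ = 1 := by simp
    have h2 : ‖(u : E)‖ = 1 := by simp
    simp only [norm_smul, h1, h2, mul_one, norm_eq_abs, abs_of_pos hr, abs_of_pos ht.1] at hn
    subst hn
    have := smul_right_injective E ht.1.ne' h
    rw [← Subtype.ext this]
    exact ⟨ht.2, hw⟩
  · rintro ⟨h1, h2⟩
    exact ⟨r, ⟨hr, h1⟩, u, ⟨u, h2, rfl⟩, rfl⟩

lemma cone_meas {E : Type*} [NormedAddCommGroup E] [NormedSpace ℝ E] [MeasurableSpace E]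
    [BorelSpace E] (s : Set (sphere (0 : E) 1)) (hs : MeasurableSet s) :
    MeasurableSet (Set.Ioo (0:ℝ) 1 • ((↑) '' s : Set E)) := by
  have : (Set.Ioo (0:ℝ) 1 • ((↑) '' s : Set E)) =
      ((↑) '' (homeomorphUnitSphereProd E ⁻¹' s ×ˢ Set.Iio (⟨1, Set.mem_Ioi.2 one_pos⟩ : Set.Ioi (0:ℝ))) : Set E) := by
    rw [← Set.image2_smul, Set.image2_image_right, ← Homeomorph.image_symm, Set.image_image,
      show Set.Ioo (0:ℝ) 1 = (↑) '' (Set.Iio (⟨1, Set.mem_Ioi.2 one_pos⟩ : Set.Ioi (0:ℝ))) by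
        rw [Set.image_subtype_val_Ioi_Iio], Set.image2_image_left, Set.image2_swap, ← Set.image_prod]
    rfl
  rw [this]
  refine (MeasurableEmbedding.subtype_coe (measurableSet_singleton _).compl).measurableSet_image.2 ?_
  exact (homeomorphUnitSphereProd E).measurable (hs.prod measurableSet_Iio)

lemma exists_basis (n : ℕ) (κ : sphere (0 : EuclideanSpace ℝ (Fin (n+1))) 1) :
    ∃ b : OrthonormalBasis (Fin (n+1)) ℝ (EuclideanSpace ℝ (Fin (n+1))), b 0 = κ := by
  obtain ⟨b, hb⟩ := Orthonormal.exists_orthonormalBasis_extension_of_card_eq (𝕜 := ℝ)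
    (E := EuclideanSpace ℝ (Fin (n+1))) (ι := Fin (n+1)) (by simp)
    (v := fun _ => (κ : EuclideanSpace ℝ (Fin (n+1)))) (s := {0}) (by
      rw [orthonormal_iff_ite]
      rintro ⟨i, hi⟩ ⟨j, hj⟩
      simp only [Set.mem_singleton_iff] at hi hj
      subst hi; subst hj
      simp)
  exact ⟨b, hb 0 rfl⟩

lemma mp1 (b : OrthonormalBasis (Fin 1) ℝ (EuclideanSpace ℝ (Fin 1))) :
    MeasurePreserving (fun x : ℝ => x • b 0) := by
  have h := (b.measurePreserving_repr_symm.comp (PiLp.volume_preserving_toLp (Fin 1))).comp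
    (volume_preserving_funUnique (Fin 1) ℝ).symm
  convert! h using 1
  ext1 x
  simp only [Function.comp_apply]
  rw [← b.sum_repr_symm]
  simp

lemma mp2 (b : OrthonormalBasis (Fin 2) ℝ (EuclideanSpace ℝ (Fin 2))) :
    MeasurePreserving (fun p : ℝ × ℝ => p.1 • b 0 + p.2 • b 1) := by
  have h := (b.measurePreserving_repr_symm.comp (PiLp.volume_preserving_toLp (Fin 2))).comp
    (volume_preserving_finTwoArrow ℝ).symm
  convert! h using 1
  ext1 x
  simp only [Function.comp_apply]
  rw [← b.sum_repr_symm]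
  simp [Fin.sum_univ_two]

lemma mp3 (b : OrthonormalBasis (Fin 3) ℝ (EuclideanSpace ℝ (Fin 3))) :
    MeasurePreserving (fun p : ℝ × ℝ × ℝ => p.1 • b 0 + (p.2.1 • b 1 + p.2.2 • b 2)) := by
  have h := ((b.measurePreserving_repr_symm.comp (PiLp.volume_preserving_toLp (Fin 3))).comp
    (volume_preserving_piFinSuccAbove (fun _ : Fin 3 => ℝ) 0).symm).comp
    ((MeasurePreserving.id (volume : Measure ℝ)).prod (volume_preserving_finTwoArrow ℝ).symm)
  convert! h using 1
  ext1 x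
  simp only [Function.comp_apply]
  rw [← b.sum_repr_symm]
  simp [Fin.sum_univ_three, MeasurableEquiv.piFinSuccAbove, Fin.insertNthEquiv]
  rw [add_assoc]


lemma usph2_norm (b : OrthonormalBasis (Fin 2) ℝ (EuclideanSpace ℝ (Fin 2))) (θ : ℝ) :
    cos θ • b 0 + sin θ • b 1 ∈ sphere (0 : EuclideanSpace ℝ (Fin 2)) 1 := by
  rw [mem_sphere_zero_iff_norm, ← sq_eq_sq₀ (norm_nonneg _) zero_le_one, ← real_inner_self_eq_norm_sq]
  have h := b.inner_eq_ite
  simp only [inner_add_left, inner_add_right, inner_smul_left, inner_smul_right, h]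
  simp
  nlinarith [sin_sq_add_cos_sq θ]

/-- circle parametrization -/
def usph2 (b : OrthonormalBasis (Fin 2) ℝ (EuclideanSpace ℝ (Fin 2))) (θ : ℝ) :
    sphere (0 : EuclideanSpace ℝ (Fin 2)) 1 := ⟨_, usph2_norm b θ⟩

lemma usph3_norm (b : OrthonormalBasis (Fin 3) ℝ (EuclideanSpace ℝ (Fin 3))) (p : ℝ × ℝ) :
    cos p.2 • b 0 + ((sin p.2 * cos p.1) • b 1 + (sin p.2 * sin p.1) • b 2)
      ∈ sphere (0 : EuclideanSpace ℝ (Fin 3)) 1 := by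
  rw [mem_sphere_zero_iff_norm, ← sq_eq_sq₀ (norm_nonneg _) zero_le_one, ← real_inner_self_eq_norm_sq]
  have h := b.inner_eq_ite
  simp only [inner_add_left, inner_add_right, inner_smul_left, inner_smul_right, h]
  simp
  linear_combination sin_sq_add_cos_sq p.2 + (sin p.2)^2 * sin_sq_add_cos_sq p.1

/-- sphere parametrization -/
def usph3 (b : OrthonormalBasis (Fin 3) ℝ (EuclideanSpace ℝ (Fin 3))) (p : ℝ × ℝ) :
    sphere (0 : EuclideanSpace ℝ (Fin 3)) 1 := ⟨_, usph3_norm b p⟩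

lemma usph2_cont (b : OrthonormalBasis (Fin 2) ℝ (EuclideanSpace ℝ (Fin 2))) :
    Continuous (usph2 b) := by
  unfold usph2
  fun_prop

lemma usph3_cont (b : OrthonormalBasis (Fin 3) ℝ (EuclideanSpace ℝ (Fin 3))) :
    Continuous (usph3 b) := by
  unfold usph3
  fun_prop

lemma lint_pow (n : ℕ) : ((n + 1 : ℕ) : ℝ≥0∞) * ∫⁻ r in Set.Ioi (0:ℝ),
    (Set.Iio (1:ℝ)).indicator (fun r => ENNReal.ofReal (r ^ n)) r = 1 := by
  rw [lintegral_indicator measurableSet_Iio, Measure.restrict_restrict measurableSet_Iio,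
    Set.inter_comm, Set.Ioi_inter_Iio, restrict_Ioo_eq_restrict_Ioc,
    ← ofReal_integral_eq_lintegral_ofReal (intervalIntegral.intervalIntegrable_pow _).1,
    ← intervalIntegral.integral_of_le zero_le_one, integral_pow]
  · rw [← ENNReal.ofReal_natCast, ← ENNReal.ofReal_mul (by positivity)]
    simp
    field_simp
  · filter_upwards [ae_restrict_mem measurableSet_Ioc] with y hy
    exact pow_nonneg hy.1.le _

lemma toSphere2 (b : OrthonormalBasis (Fin 2) ℝ (EuclideanSpace ℝ (Fin 2))) :
    Measure.toSphere (volume : Measure (EuclideanSpace ℝ (Fin 2))) =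
      (volume.restrict (Set.Ioo (-π) π)).map (usph2 b) := by
  have hum := (usph2_cont b).measurable
  ext s hs
  rw [Measure.toSphere_apply' _ hs, Measure.map_apply hum hs]
  set A := (Set.Ioo (0:ℝ) 1 • ((↑) '' s : Set (EuclideanSpace ℝ (Fin 2))))
  have hA : MeasurableSet A := cone_meas s hs
  have h1 : (volume A) = ∫⁻ p : ℝ × ℝ, A.indicator 1 (p.1 • b 0 + p.2 • b 1) := by
    rw [← lintegral_indicator_one hA, ← (mp2 b).lintegral_comp (measurable_one.indicator hA)]
  have hG : ∀ p : ℝ × ℝ, p ∈ polarCoord.target → ENNReal.ofReal p.1 • A.indicator (1 : EuclideanSpace ℝ (Fin 2) → ℝ≥0∞)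
      ((polarCoord.symm p).1 • b 0 + (polarCoord.symm p).2 • b 1) =
      (Set.Iio (1:ℝ)).indicator (fun r => ENNReal.ofReal (r ^ 1)) p.1 * (usph2 b ⁻¹' s).indicator 1 p.2 := by
    rintro ⟨r, θ⟩ ⟨hr, -⟩
    have hr' : 0 < r := hr
    have e : ((polarCoord.symm (r, θ)).1 • b 0 + (polarCoord.symm (r, θ)).2 • b 1) =
        r • (usph2 b θ : EuclideanSpace ℝ (Fin 2)) := by
      simp [usph2, smul_smul]
    have := cone_mem s (usph2 b θ) r hr'
    rw [e]
    by_cases h1 : r < 1 <;> by_cases h2 : usph2 b θ ∈ s <;>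
      simp [Set.indicator, A, this, h1, h2]
  rw [h1, ← lintegral_comp_polarCoord_symm, setLIntegral_congr_fun polarCoord.open_target.measurableSet hG,
    polarCoord_target, Measure.volume_eq_prod, ← Measure.prod_restrict,
    lintegral_prod_mul (f := (Set.Iio (1:ℝ)).indicator (fun r => ENNReal.ofReal (r ^ 1)))
      (g := (usph2 b ⁻¹' s).indicator 1), lintegral_indicator_one (hum hs), ← mul_assoc, finrank_euclideanSpace_fin]
  · rw [lint_pow 1, one_mul]
  · exact (Measurable.indicator (by fun_prop) measurableSet_Iio).aemeasurable
  · exact (measurable_one.indicator (hum hs)).aemeasurable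

lemma toSphere3 (b : OrthonormalBasis (Fin 3) ℝ (EuclideanSpace ℝ (Fin 3))) :
    Measure.toSphere (volume : Measure (EuclideanSpace ℝ (Fin 3))) =
      (((volume.restrict (Set.Ioo (-π) π)).prod (volume.restrict (Set.Ioo (-π) π))).withDensity
        (fun p : ℝ × ℝ => ENNReal.ofReal (sin p.2))).map (usph3 b) := by
  have hum := (usph3_cont b).measurable
  ext s hs
  rw [Measure.toSphere_apply' _ hs, Measure.map_apply hum hs, withDensity_apply _ (hum hs),
    ← lintegral_indicator (hum hs)]
  set A := (Set.Ioo (0:ℝ) 1 • ((↑) '' s : Set (EuclideanSpace ℝ (Fin 3))))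
  have hA : MeasurableSet A := cone_meas s hs
  let G : ℝ × ℝ × ℝ → ℝ≥0∞ := fun p => A.indicator 1 (p.1 • b 0 + (p.2.1 • b 1 + p.2.2 • b 2))
  have hGm : Measurable G := (measurable_one.indicator hA).comp (mp3 b).measurable
  have h1 : (volume A) = ∫⁻ p : ℝ × ℝ × ℝ, G p := by
    rw [← lintegral_indicator_one hA, ← (mp3 b).lintegral_comp (measurable_one.indicator hA)]
  have h2 : ∫⁻ p : ℝ × ℝ × ℝ, G p = ∫⁻ x : ℝ, ∫⁻ θ in Set.Ioo (-π) π, ∫⁻ ρ : ℝ,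
      ENNReal.ofReal ρ * G (x, ρ * cos θ, ρ * sin θ) := by
    rw [Measure.volume_eq_prod, lintegral_prod _ hGm.aemeasurable]
    congr 1; ext x
    rw [← lintegral_comp_polarCoord_symm, polarCoord_target, Measure.volume_eq_prod, ← Measure.prod_restrict,
      lintegral_prod_symm]
    · congr 1; ext θ
      rw [← lintegral_indicator measurableSet_Ioi]
      congr 1; ext ρ
      by_cases hρ : 0 < ρ
      · simp [hρ]
      · simp [hρ, ENNReal.ofReal_of_nonpos (not_lt.1 hρ)]
    · apply Measurable.aemeasurable
      simp only [polarCoord_symm_apply, smul_eq_mul]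
      fun_prop
  have h3 : ∫⁻ p : ℝ × ℝ × ℝ, G p = ∫⁻ θ in Set.Ioo (-π) π, ∫⁻ x : ℝ, ∫⁻ ρ : ℝ,
      ENNReal.ofReal ρ * G (x, ρ * cos θ, ρ * sin θ) := by
    rw [h2, lintegral_lintegral_swap]
    apply Measurable.aemeasurable
    apply Measurable.lintegral_prod_right'
      (f := fun q : (ℝ × ℝ) × ℝ => ENNReal.ofReal q.2 * G (q.1.1, q.2 * cos q.1.2, q.2 * sin q.1.2))
    fun_prop
  have hG : ∀ θ : ℝ, ∀ p : ℝ × ℝ, p ∈ polarCoord.target → ENNReal.ofReal p.1 •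
      (fun q : ℝ × ℝ => ENNReal.ofReal q.2 * G (q.1, q.2 * cos θ, q.2 * sin θ)) (polarCoord.symm p) =
      (Set.Iio (1:ℝ)).indicator (fun r => ENNReal.ofReal (r ^ 2)) p.1 *
        (usph3 b ⁻¹' s).indicator (fun p : ℝ × ℝ => ENNReal.ofReal (sin p.2)) (θ, p.2) := by
    rintro θ ⟨r, α⟩ ⟨hr, -⟩
    have hr' : 0 < r := hr
    have e : ((r * cos α) • b 0 + ((r * sin α * cos θ) • b 1 + (r * sin α * sin θ) • b 2)) =
        r • (usph3 b (θ, α) : EuclideanSpace ℝ (Fin 3)) := by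
      simp [usph3, smul_smul, mul_assoc]
    have := cone_mem s (usph3 b (θ, α)) r hr'
    simp only [polarCoord_symm_apply, G]
    rw [e]
    by_cases h1 : r < 1 <;> by_cases h2 : usph3 b (θ, α) ∈ s <;>
      simp [Set.indicator, A, this, h1, h2]
    rw [ENNReal.ofReal_mul hr'.le, ENNReal.ofReal_pow hr'.le]
    ring
  have h4 : ∀ θ : ℝ, ∫⁻ x : ℝ, ∫⁻ ρ : ℝ, ENNReal.ofReal ρ * G (x, ρ * cos θ, ρ * sin θ) =
      (∫⁻ r in Set.Ioi (0:ℝ), (Set.Iio (1:ℝ)).indicator (fun r => ENNReal.ofReal (r ^ 2)) r) *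
      ∫⁻ α in Set.Ioo (-π) π,
        (usph3 b ⁻¹' s).indicator (fun p : ℝ × ℝ => ENNReal.ofReal (sin p.2)) (θ, α) := by
    intro θ
    rw [← lintegral_prod (f := fun q : ℝ × ℝ => ENNReal.ofReal q.2 * G (q.1, q.2 * cos θ, q.2 * sin θ)),
      ← Measure.volume_eq_prod,
      ← lintegral_comp_polarCoord_symm, setLIntegral_congr_fun polarCoord.open_target.measurableSet (hG θ),
      polarCoord_target, Measure.volume_eq_prod, ← Measure.prod_restrict, lintegral_prod_mul
        (f := (Set.Iio (1:ℝ)).indicator (fun r => ENNReal.ofReal (r ^ 2)))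
        (g := fun α => (usph3 b ⁻¹' s).indicator (fun p : ℝ × ℝ => ENNReal.ofReal (sin p.2)) (θ, α))]
    · exact (Measurable.indicator (by fun_prop) measurableSet_Iio).aemeasurable
    · refine Measurable.aemeasurable ?_
      exact (Measurable.indicator (by fun_prop) (hum hs)).comp measurable_prodMk_left
    · apply Measurable.aemeasurable
      fun_prop
  have hmi : Measurable ((usph3 b ⁻¹' s).indicator (fun p : ℝ × ℝ => ENNReal.ofReal (sin p.2))) :=
    Measurable.indicator (by fun_prop) (hum hs)
  rw [h1, h3]
  simp_rw [h4]
  rw [lintegral_const_mul _ hmi.lintegral_prod_right', ← mul_assoc, finrank_euclideanSpace_fin, lint_pow 2, one_mul,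
    lintegral_prod _ hmi.aemeasurable]


lemma sps_one 
    (κ : sphere (0 : EuclideanSpace ℝ (Fin 1)) 1)
    (φ : sphere (0 : EuclideanSpace ℝ (Fin 1)) 1 → ℝ)
    (hφsupp : ∀ q : sphere (0 : EuclideanSpace ℝ (Fin 1)) 1,
      ⟪(q : EuclideanSpace ℝ (Fin 1)), (κ : EuclideanSpace ℝ (Fin 1))⟫ < 0 → φ q = 0) :
    Filter.Tendsto (fun N : ℝ =>
        (2 * (π : ℂ) * Complex.I) ^ (-((((1:ℕ) : ℂ) - 1) / 2)) *
          ∫ q : sphere (0 : EuclideanSpace ℝ (Fin 1)) 1,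
            ((N ^ ((((1:ℕ) : ℝ) - 1) / 2) : ℝ) : ℂ) *
              Complex.exp (Complex.I *
                ((1 - ⟪(q : EuclideanSpace ℝ (Fin 1)), (κ : EuclideanSpace ℝ (Fin 1))⟫ : ℝ) : ℂ) *
                (N : ℂ)) *
              ((φ q : ℝ) : ℂ)
            ∂(Measure.toSphere (volume : Measure (EuclideanSpace ℝ (Fin 1)))))
      Filter.atTop (𝓝 ((φ κ : ℝ) : ℂ)) := by
  obtain ⟨b, hb⟩ := exists_basis 0 κ
  have hκ : ⟪(κ : EuclideanSpace ℝ (Fin 1)), (κ : EuclideanSpace ℝ (Fin 1))⟫ = 1 := by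
    rw [real_inner_self_eq_norm_sq]; simp
  have hz : ∀ q, q ≠ κ → φ q = 0 := by
    intro q hq
    apply hφsupp
    have h1 := b.sum_repr' (q : EuclideanSpace ℝ (Fin 1))
    simp only [Nat.reduceAdd, Finset.univ_unique, Fin.default_eq_zero,
      Finset.sum_singleton] at h1
    erw [hb] at h1
    rw [real_inner_comm] at h1
    set t := ⟪(q : EuclideanSpace ℝ (Fin 1)), (κ : EuclideanSpace ℝ (Fin 1))⟫
    have h2 := congrArg norm h1
    simp [norm_smul] at h2
    rcases abs_eq (zero_le_one) |>.1 h2 with h | h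
    · rw [h, one_smul] at h1
      exact absurd (Subtype.ext h1.symm) hq
    · linarith
  have hmass : Measure.toSphere (volume : Measure (EuclideanSpace ℝ (Fin 1))) {κ} = 1 := by
    rw [Measure.toSphere_apply' _ (measurableSet_singleton _),
      ← (mp1 b).measure_preimage (cone_meas _ (measurableSet_singleton _)).nullMeasurableSet]
    have : (fun x : ℝ => x • b 0) ⁻¹' (Set.Ioo (0:ℝ) 1 • ((↑) '' ({κ} : Set (sphere (0 : EuclideanSpace ℝ (Fin 1)) 1)) : Set (EuclideanSpace ℝ (Fin 1))))
        = Set.Ioo 0 1 := by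
      ext x
      rw [Set.mem_preimage]
      erw [hb]
      have hne : (κ : EuclideanSpace ℝ (Fin 1)) ≠ 0 := by
        intro h; rw [h] at hκ; simp at hκ
      constructor
      · rintro ⟨t, ht, _, ⟨w, rfl, rfl⟩, h⟩
        have := smul_left_injective ℝ hne h
        rwa [← this]
      · intro hx
        exact ⟨x, hx, κ, ⟨κ, rfl, rfl⟩, rfl⟩
    rw [this, finrank_euclideanSpace_fin]
    simp
  refine Tendsto.congr (f₁ := fun _ => ((φ κ : ℝ) : ℂ)) (fun N => ?_) tendsto_const_nhds
  rw [← setIntegral_eq_integral_of_forall_compl_eq_zero (s := {κ}), integral_singleton,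
    measureReal_def, hmass, hκ]
  · simp
  · intro q hq
    rw [hz q hq]; simp

lemma sps_two
    (κ : sphere (0 : EuclideanSpace ℝ (Fin 2)) 1)
    (φ : sphere (0 : EuclideanSpace ℝ (Fin 2)) 1 → ℝ)
    (hφC1 : ∃ Φ : EuclideanSpace ℝ (Fin 2) → ℝ, ContDiff ℝ 1 Φ ∧
      ∀ q : sphere (0 : EuclideanSpace ℝ (Fin 2)) 1, Φ (q : EuclideanSpace ℝ (Fin 2)) = φ q)
    (hφsupp : ∀ q : sphere (0 : EuclideanSpace ℝ (Fin 2)) 1,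
      ⟪(q : EuclideanSpace ℝ (Fin 2)), (κ : EuclideanSpace ℝ (Fin 2))⟫ < 0 → φ q = 0) :
    Filter.Tendsto (fun N : ℝ =>
        (2 * (π : ℂ) * Complex.I) ^ (-((((2:ℕ) : ℂ) - 1) / 2)) *
          ∫ q : sphere (0 : EuclideanSpace ℝ (Fin 2)) 1,
            ((N ^ ((((2:ℕ) : ℝ) - 1) / 2) : ℝ) : ℂ) *
              Complex.exp (Complex.I *
                ((1 - ⟪(q : EuclideanSpace ℝ (Fin 2)), (κ : EuclideanSpace ℝ (Fin 2))⟫ : ℝ) : ℂ) *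
                (N : ℂ)) *
              ((φ q : ℝ) : ℂ)
            ∂(Measure.toSphere (volume : Measure (EuclideanSpace ℝ (Fin 2)))))
      Filter.atTop (𝓝 ((φ κ : ℝ) : ℂ)) := by
  obtain ⟨b, hb⟩ := exists_basis 1 κ
  change b 0 = _ at hb
  obtain ⟨Φ, hΦ, hΦφ⟩ := hφC1
  have hφc : Continuous φ := by
    have : φ = fun q : sphere (0 : EuclideanSpace ℝ (Fin 2)) 1 => Φ (q : EuclideanSpace ℝ (Fin 2)) := funext fun q => (hΦφ q).symm
    rw [this]
    exact hΦ.continuous.comp continuous_subtype_val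
  let ψ : ℝ → ℂ := fun θ => ((Φ (cos θ • b 0 + sin θ • b 1) : ℝ) : ℂ)
  have hψ : ContDiff ℝ 1 ψ := by
    refine Complex.ofRealCLM.contDiff.comp (hΦ.comp ?_)
    exact (contDiff_cos.smul contDiff_const).add (contDiff_sin.smul contDiff_const)
  have hψu : ∀ θ, ψ θ = ((φ (usph2 b θ) : ℝ) : ℂ) := fun θ => by
    rw [← hΦφ]; rfl
  have hin : ∀ θ, ⟪(usph2 b θ : EuclideanSpace ℝ (Fin 2)), (κ : EuclideanSpace ℝ (Fin 2))⟫ = cos θ := by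
    intro θ
    rw [← hb]
    simp only [usph2, inner_add_left, inner_smul_left, b.inner_eq_ite]
    simp
  have hψ0 : ψ 0 = ((φ κ : ℝ) : ℂ) := by
    rw [← hΦφ]; simp [ψ, hb]
  have hL := (stat_phase_one ψ hψ).add (stat_phase_one (fun θ => ψ (-θ)) (hψ.comp contDiff_neg))
  have hL2 := hL.const_mul ((2 * (π : ℂ) * Complex.I) ^ (-((((2:ℕ) : ℂ) - 1) / 2)))
  have hconst : (2 * (π : ℂ) * Complex.I) ^ (-((((2:ℕ) : ℂ) - 1) / 2)) * 
     ((1 + Complex.I) * ((√π / 2 : ℝ) : ℂ) * ψ 0 + (1 + Complex.I) * ((√π / 2 : ℝ) : ℂ) * ψ (-0)) = ((φ κ : ℝ) : ℂ) := by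
    have hsq : (2 * (π : ℂ) * Complex.I) = ((1 + Complex.I) * ((√π : ℝ) : ℂ)) ^ 2 := by
      have : ((√π : ℝ) : ℂ) ^ 2 = π := by
        rw [← Complex.ofReal_pow, sq_sqrt pi_pos.le]
      rw [mul_pow, this]
      linear_combination (-(π : ℂ)) * Complex.I_sq
    have hre : 0 < ((1 + Complex.I) * ((√π : ℝ) : ℂ)).re := by
      simp [pi_pos]
    have hne : ((1 + Complex.I) * ((√π : ℝ) : ℂ)) ≠ 0 := by
      intro h; rw [h] at hre; simp at hre
    have harg := abs_lt.1 (Complex.abs_arg_lt_pi_div_two_iff.2 (Or.inl hre))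
    have h2 : (-((((2:ℕ) : ℂ) - 1) / 2)) = -(((2:ℕ) : ℂ)⁻¹) := by norm_num
    rw [h2, Complex.cpow_neg, hsq, Complex.pow_cpow_nat_inv two_ne_zero (by simpa using harg.1) (by simpa using harg.2.le),
      neg_zero, hψ0]
    have : ((1 + Complex.I) * ((√π / 2 : ℝ) : ℂ) * ((φ κ : ℝ) : ℂ) + (1 + Complex.I) * ((√π / 2 : ℝ) : ℂ) * ((φ κ : ℝ) : ℂ)) =
        ((1 + Complex.I) * ((√π : ℝ) : ℂ)) * ((φ κ : ℝ) : ℂ) := by push_cast; ring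
    rw [this, inv_mul_cancel_left₀ hne]
  rw [hconst] at hL2
  refine hL2.congr' ?_
  filter_upwards [eventually_ge_atTop 0] with N hN
  congr 1
  rw [toSphere2 b, integral_map (usph2_cont b).measurable.aemeasurable
    (Continuous.aestronglyMeasurable (by fun_prop))]
  simp_rw [hin, ← hψu]
  have hE : Continuous fun θ : ℝ => Complex.exp (Complex.I * ((1 - cos θ : ℝ) : ℂ) * (N : ℂ)) * ψ θ := by
    have := hψ.continuous
    fun_prop
  rw [setIntegral_eq_of_subset_of_forall_sdiff_eq_zero (s := Set.Icc (-(π/2)) (π/2)) measurableSet_Ioo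
    (fun x hx => ⟨by linarith [hx.1, pi_pos], by linarith [hx.2, pi_pos]⟩), integral_Icc_eq_integral_Ioc,
    ← intervalIntegral.integral_of_le (by linarith [pi_pos])]
  · have e1 : (N ^ ((((2:ℕ) : ℝ) - 1) / 2) : ℝ) = √N := by
      rw [sqrt_eq_rpow]; norm_num
    simp_rw [e1, mul_assoc]
    rw [intervalIntegral.integral_const_mul, ← mul_add]
    congr 1
    simp_rw [← mul_assoc]
    rw [← intervalIntegral.integral_add_adjacent_intervals (a := -(π/2)) (b := 0) (c := π/2) (hE.intervalIntegrable _ _) (hE.intervalIntegrable _ _),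
      add_comm]
    congr 1
    have := intervalIntegral.integral_comp_neg (a := 0) (b := π/2)
      (fun θ : ℝ => Complex.exp (Complex.I * ((1 - cos θ : ℝ) : ℂ) * (N : ℂ)) * ψ θ)
    rw [neg_zero] at this
    rw [← this]
    simp_rw [cos_neg]
  · rintro θ ⟨h1, h2⟩
    have hc : cos θ < 0 := by
      rw [← cos_abs]
      apply cos_neg_of_pi_div_two_lt_of_lt
      · by_contra h
        exact h2 (abs_le.1 (not_lt.1 h))
      · have := abs_lt.2 h1
        linarith [pi_pos]
    rw [hψu, hφsupp _ (by rwa [hin])]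
    simp


lemma sps_three
    (κ : sphere (0 : EuclideanSpace ℝ (Fin 3)) 1)
    (φ : sphere (0 : EuclideanSpace ℝ (Fin 3)) 1 → ℝ)
    (hφC1 : ∃ Φ : EuclideanSpace ℝ (Fin 3) → ℝ, ContDiff ℝ 1 Φ ∧
      ∀ q : sphere (0 : EuclideanSpace ℝ (Fin 3)) 1, Φ (q : EuclideanSpace ℝ (Fin 3)) = φ q)
    (hφsupp : ∀ q : sphere (0 : EuclideanSpace ℝ (Fin 3)) 1,
      ⟪(q : EuclideanSpace ℝ (Fin 3)), (κ : EuclideanSpace ℝ (Fin 3))⟫ < 0 → φ q = 0) :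
    Filter.Tendsto (fun N : ℝ =>
        (2 * (π : ℂ) * Complex.I) ^ (-((((3:ℕ) : ℂ) - 1) / 2)) *
          ∫ q : sphere (0 : EuclideanSpace ℝ (Fin 3)) 1,
            ((N ^ ((((3:ℕ) : ℝ) - 1) / 2) : ℝ) : ℂ) *
              Complex.exp (Complex.I *
                ((1 - ⟪(q : EuclideanSpace ℝ (Fin 3)), (κ : EuclideanSpace ℝ (Fin 3))⟫ : ℝ) : ℂ) *
                (N : ℂ)) *
              ((φ q : ℝ) : ℂ)
            ∂(Measure.toSphere (volume : Measure (EuclideanSpace ℝ (Fin 3)))))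
      Filter.atTop (𝓝 ((φ κ : ℝ) : ℂ)) := by
  obtain ⟨b, hb⟩ := exists_basis 2 κ
  change b 0 = _ at hb
  obtain ⟨Φ, hΦ, hΦφ⟩ := hφC1
  have hφc : Continuous φ := by
    have : φ = fun q : sphere (0 : EuclideanSpace ℝ (Fin 3)) 1 => Φ (q : EuclideanSpace ℝ (Fin 3)) :=
      funext fun q => (hΦφ q).symm
    rw [this]
    exact hΦ.continuous.comp continuous_subtype_val
  let W : ℝ × ℝ → ℂ := fun p =>
    ((Φ (cos p.2 • b 0 + ((sin p.2 * cos p.1) • b 1 + (sin p.2 * sin p.1) • b 2)) : ℝ) : ℂ)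
  have hW : ContDiff ℝ 1 W := by
    refine Complex.ofRealCLM.contDiff.comp (hΦ.comp ?_)
    fun_prop
  have hWu : ∀ p, W p = ((φ (usph3 b p) : ℝ) : ℂ) := fun p => by
    rw [← hΦφ]; rfl
  have hin : ∀ p, ⟪(usph3 b p : EuclideanSpace ℝ (Fin 3)), (κ : EuclideanSpace ℝ (Fin 3))⟫ = cos p.2 := by
    intro p
    rw [← hb]
    simp only [usph3, inner_add_left, inner_smul_left, b.inner_eq_ite]
    simp
  have hWc := hW.continuous
  have hW0 : ∀ θ, W (θ, 0) = ((φ κ : ℝ) : ℂ) := by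
    intro θ
    rw [← hΦφ]; simp [W, hb]
  have hWneg : ∀ θ α, cos α < 0 → W (θ, α) = 0 := by
    intro θ α h
    rw [hWu, hφsupp _ (by rwa [hin])]; simp
  have hWpi : ∀ θ, W (θ, π/2) = 0 := by
    intro θ
    have hcl : IsClosed {α : ℝ | W (θ, α) = 0} :=
      isClosed_eq (hWc.comp (by fun_prop)) continuous_const
    have hsub : Set.Ioo (π/2) π ⊆ {α : ℝ | W (θ, α) = 0} := fun α hα =>
      hWneg θ α (cos_neg_of_pi_div_two_lt_of_lt hα.1 (by linarith [hα.2, pi_pos]))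
    have h2 := hcl.closure_subset_iff.2 hsub
    rw [closure_Ioo (by linarith [pi_pos])] at h2
    exact h2 ⟨le_rfl, by linarith [pi_pos]⟩
  have hWd : ∀ θ α, HasDerivAt (fun α => W (θ, α)) (fderiv ℝ W (θ, α) (0, 1)) α := by
    intro θ α
    exact ((hW.differentiable one_ne_zero (θ, α)).hasFDerivAt).comp_hasDerivAt α
      ((hasDerivAt_const α θ).prodMk (hasDerivAt_id α))
  have hW'c : Continuous fun p : ℝ × ℝ => fderiv ℝ W p (0, 1) :=
    (hW.continuous_fderiv one_ne_zero).clm_apply continuous_const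
  obtain ⟨C, hC⟩ := ((isCompact_Icc (a := -π) (b := π)).prod
    (isCompact_Icc (a := (0:ℝ)) (b := π/2))).exists_bound_of_continuousOn hW'c.continuousOn
  have hWs : ∀ θ, ContDiff ℝ 1 (fun α => W (θ, α)) := fun θ => hW.comp (by fun_prop)
  set μ : Measure ℝ := volume.restrict (Set.Ioo (-π) π) with hμ
  let K : ℝ → ℝ × ℝ → ℂ := fun N p => (N : ℂ) * ((max (sin p.2) 0 : ℝ) : ℂ) *
    (Complex.exp (Complex.I * ((1 - cos p.2 : ℝ) : ℂ) * (N : ℂ)) * W p)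
  have hKc : ∀ N, Continuous (K N) := by
    intro N
    simp only [K]
    fun_prop
  have hJ : ∀ N θ, ∫ α, K N (θ, α) ∂μ = Complex.I * (((φ κ : ℝ) : ℂ) +
      ∫ α in (0:ℝ)..(π/2), Complex.exp (Complex.I * ((1 - cos α : ℝ) : ℂ) * (N : ℂ)) *
        deriv (fun α => W (θ, α)) α) := by
    intro N θ
    rw [← hW0 θ, ← stat_phase_two_aux (fun α => W (θ, α)) (hWs θ) (hWpi θ) N, hμ,
      setIntegral_eq_of_subset_of_forall_sdiff_eq_zero (s := Set.Ioc 0 (π/2)) measurableSet_Ioo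
      (fun x hx => ⟨by linarith [hx.1, pi_pos], by linarith [hx.2, pi_pos]⟩),
      ← intervalIntegral.integral_of_le (by positivity), ← intervalIntegral.integral_const_mul]
    · apply intervalIntegral.integral_congr
      intro α hα
      rw [Set.uIcc_of_le (by positivity)] at hα
      have : 0 ≤ sin α := sin_nonneg_of_nonneg_of_le_pi hα.1 (by linarith [hα.2, pi_pos])
      simp only [K, max_eq_left this]
      ring
    · rintro α ⟨h1, h2⟩
      simp only [K]
      rcases le_or_gt α 0 with h | h
      · rw [max_eq_right (sin_nonpos_of_nonpos_of_neg_pi_le h h1.1.le)]; simp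
      · have : π/2 < α := by
          by_contra h'
          exact h2 ⟨h, not_lt.1 h'⟩
        rw [hWneg θ α (cos_neg_of_pi_div_two_lt_of_lt this (by linarith [h1.2, pi_pos]))]
        simp
  have hlim : Tendsto (fun N => ∫ θ, ∫ α, K N (θ, α) ∂μ ∂μ) atTop
      (𝓝 (∫ θ, Complex.I * ((φ κ : ℝ) : ℂ) ∂μ)) := by
    apply tendsto_integral_filter_of_dominated_convergence
      (fun _ => |φ κ| + C * |π / 2 - 0|)
    · filter_upwards with N
      exact ((hKc N).stronglyMeasurable.integral_prod_right').aestronglyMeasurable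
    · filter_upwards with N
      filter_upwards [ae_restrict_mem measurableSet_Ioo] with θ hθ
      rw [hJ, norm_mul, Complex.norm_I, one_mul]
      refine (norm_add_le _ _).trans (add_le_add (by simp) ?_)
      apply intervalIntegral.norm_integral_le_of_norm_le_const
      intro α hα
      rw [Set.uIoc_of_le (by positivity)] at hα
      rw [norm_mul, (hWd θ α).deriv]
      have h1 : ‖Complex.exp (Complex.I * ((1 - cos α : ℝ) : ℂ) * (N : ℂ))‖ = 1 := by
        rw [show Complex.I * ((1 - cos α : ℝ) : ℂ) * (N : ℂ) = (((1 - cos α) * N : ℝ) : ℂ) * Complex.I by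
          push_cast; ring, Complex.norm_exp_ofReal_mul_I]
      rw [h1, one_mul]
      exact hC (θ, α) ⟨⟨hθ.1.le, hθ.2.le⟩, ⟨hα.1.le, hα.2⟩⟩
    · exact integrable_const _
    · filter_upwards with θ
      simp_rw [hJ]
      have := ((rl_cos (deriv fun α => W (θ, α))).const_add ((φ κ : ℝ) : ℂ)).const_mul Complex.I
      rwa [add_zero] at this
  have hlim2 := hlim.const_mul ((2 * (π : ℂ) * Complex.I) ^ (-((((3:ℕ) : ℂ) - 1) / 2)))
  have hpow : (2 * (π : ℂ) * Complex.I) ^ (-((((3:ℕ) : ℂ) - 1) / 2)) = (2 * (π : ℂ) * Complex.I)⁻¹ := by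
    rw [show (-((((3:ℕ) : ℂ) - 1) / 2)) = -1 by norm_num, Complex.cpow_neg, Complex.cpow_one]
  have hconst : (2 * (π : ℂ) * Complex.I) ^ (-((((3:ℕ) : ℂ) - 1) / 2)) *
      (∫ θ, Complex.I * ((φ κ : ℝ) : ℂ) ∂μ) = ((φ κ : ℝ) : ℂ) := by
    have hp : (π : ℂ) ≠ 0 := by exact_mod_cast pi_ne_zero
    have hm : μ.real Set.univ = 2 * π := by
      rw [hμ, measureReal_restrict_apply_univ, Real.volume_real_Ioo_of_le (by linarith [pi_pos])]
      ring
    rw [hpow, integral_const, hm, Complex.real_smul]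
    have := Complex.I_ne_zero
    push_cast
    field_simp
  rw [hconst] at hlim2
  refine hlim2.congr fun N => ?_
  congr 1
  rw [← integral_prod _ ?_]
  · rw [toSphere3 b, integral_map (usph3_cont b).measurable.aemeasurable
      (Continuous.aestronglyMeasurable (by fun_prop)),
      integral_withDensity_eq_integral_toReal_smul (by fun_prop) (by simp)]
    congr 1
    ext p
    rw [hin, ← hWu, ENNReal.toReal_ofReal', Complex.real_smul]
    have : (N ^ ((((3:ℕ) : ℝ) - 1) / 2) : ℝ) = N := by norm_num
    rw [this]
    simp only [K]
    ring
  · rw [hμ, Measure.prod_restrict]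
    have : IntegrableOn (K N) (Set.Icc (-π) π ×ˢ Set.Icc (-π) π) (volume.prod volume) :=
      (hKc N).continuousOn.integrableOn_compact (isCompact_Icc.prod isCompact_Icc)
    exact this.mono_set (Set.prod_mono Set.Ioo_subset_Icc_self Set.Ioo_subset_Icc_self)



end Helpers

/-- stationary phase on the sphere. For `d ∈ {1,2,3}`, `κ ∈ S^{d-1}` and
`φ ∈ C¹(S^{d-1};ℝ)` supported in the half-sphere `{q : q·κ ≥ 0}`, the oscillatory integrals
`A^N_φ = (2πi)^{-(d-1)/2} ∫ N^{(d-1)/2} e^{i(1-q·κ)N} φ(q) dS(q)` converge to `φ(κ)`. -/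
theorem stationary_phase_sphere (d : ℕ) (hd : d = 1 ∨ d = 2 ∨ d = 3)
    (κ : sphere (0 : EuclideanSpace ℝ (Fin d)) 1)
    (φ : sphere (0 : EuclideanSpace ℝ (Fin d)) 1 → ℝ)
    (hφC1 : ∃ Φ : EuclideanSpace ℝ (Fin d) → ℝ, ContDiff ℝ 1 Φ ∧
      ∀ q : sphere (0 : EuclideanSpace ℝ (Fin d)) 1, Φ (q : EuclideanSpace ℝ (Fin d)) = φ q)
    (hφsupp : ∀ q : sphere (0 : EuclideanSpace ℝ (Fin d)) 1,
      ⟪(q : EuclideanSpace ℝ (Fin d)), (κ : EuclideanSpace ℝ (Fin d))⟫ < 0 → φ q = 0) :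
    Filter.Tendsto (fun N : ℝ =>
        (2 * (π : ℂ) * Complex.I) ^ (-(((d : ℂ) - 1) / 2)) *
          ∫ q : sphere (0 : EuclideanSpace ℝ (Fin d)) 1,
            ((N ^ (((d : ℝ) - 1) / 2) : ℝ) : ℂ) *
              Complex.exp (Complex.I *
                ((1 - ⟪(q : EuclideanSpace ℝ (Fin d)), (κ : EuclideanSpace ℝ (Fin d))⟫ : ℝ) : ℂ) *
                (N : ℂ)) *
              ((φ q : ℝ) : ℂ)
            ∂(Measure.toSphere (volume : Measure (EuclideanSpace ℝ (Fin d)))))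
      Filter.atTop (𝓝 ((φ κ : ℝ) : ℂ)) := by
  rcases hd with rfl | rfl | rfl
  · exact sps_one κ φ hφsupp
  · exact sps_two κ φ hφC1 hφsupp
  · exact sps_three κ φ hφC1 hφsupp

end
end
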